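/- arXiv:1303.6505 — 2 statements merged into one kernel-verified Lean document; each statement's English description precedes it below -/
import Mathlib

section
/- Fix s₁ = σ₁ + it₁ with σ₁ = 1, s₁ ≠ 1, σ₂ = 1/2, avoiding singularities of ζ₂. Then ∫₂^T |ζ₂(s₁, 1/2 + it₂)|² dt₂ = (|s₁ − 1|^{-2} + |ζ(s₁)|²) T log T + O(T). -/
open Complex Filter Asymptotics Real

/-- The singular set of the Euler double zeta function: `s₂ = 1` or
`s₁ + s₂ ∈ {2, 1, 0, -2, -4, -6, …}`. -/
def zeta2Sing (p : ℂ × ℂ) : Prop :=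
  p.2 = 1 ∨ p.1 + p.2 = 2 ∨ p.1 + p.2 = 1 ∨ ∃ k : ℕ, p.1 + p.2 = -2 * (k : ℂ)

lemma hil_int0 (k : ℤ) (hk : k ≠ 0) :
    ∫ x in (0:ℝ)..1, Complex.exp ((2 * π * k * I) * x) = 0 := by
  have hc : (2 * π * k * I : ℂ) ≠ 0 := by
    simp [hk, Real.pi_ne_zero]
  rw [integral_exp_mul_complex hc]
  have : (2 * π * k * I : ℂ) * ((1:ℝ):ℂ) = k * (2 * π * I) := by push_cast; ring
  rw [this, Complex.exp_int_mul_two_pi_mul_I]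
  simp

lemma hil_int1 (k : ℤ) (hk : k ≠ 0) :
    ∫ x in (0:ℝ)..1, ((x:ℂ) - 1/2) * Complex.exp ((2 * π * k * I) * x) = 1 / (2 * π * k * I) := by
  have hc : (2 * π * k * I : ℂ) ≠ 0 := by
    simp [hk, Real.pi_ne_zero]
  set c : ℂ := (2 * π * k * I : ℂ) with hcdef
  have h1 : Complex.exp c = 1 := by
    have : c = k * (2 * π * I) := by rw [hcdef]; ring
    rw [this, Complex.exp_int_mul_two_pi_mul_I]
  have hd : ∀ x ∈ Set.uIcc (0:ℝ) 1, HasDerivAt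
      (fun x : ℝ => ((x:ℂ) - 1/2) * (Complex.exp (c * x) / c) - Complex.exp (c * x) / c ^ 2)
      (((x:ℂ) - 1/2) * Complex.exp (c * x)) x := by
    intro x _
    have h0 : HasDerivAt (fun x : ℝ => (x:ℂ)) 1 x := Complex.ofRealCLM.hasDerivAt
    have h2 : HasDerivAt (fun x : ℝ => Complex.exp (c * x)) (Complex.exp (c * x) * (c * 1)) x :=
      (h0.const_mul c).cexp
    have h3 := ((h0.sub_const (1/2)).mul (h2.div_const c)).sub (h2.div_const (c^2))
    refine h3.congr_deriv ?_
    field_simp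
    ring
  rw [intervalIntegral.integral_eq_sub_of_hasDerivAt hd]
  · simp [h1]
    field_simp
    ring
  · apply Continuous.intervalIntegrable
    fun_prop

lemma hilbert_ineq (p : ℕ) (c : ℕ → ℂ) :
    ‖∑ m ∈ Finset.range p, ∑ n ∈ Finset.range p,
      (if m = n then 0 else c m * (starRingEnd ℂ) (c n) / ((m:ℂ) - n))‖
      ≤ π * ∑ n ∈ Finset.range p, ‖c n‖ ^ 2 := by
  set P : ℝ → ℂ := fun x => ∑ m ∈ Finset.range p, c m * Complex.exp ((2 * π * (m:ℤ) * I) * x) with hP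
  have hPP : ∀ x : ℝ, ((‖P x‖ ^ 2 : ℝ) : ℂ) = ∑ m ∈ Finset.range p, ∑ n ∈ Finset.range p,
      c m * (starRingEnd ℂ) (c n) * Complex.exp ((2 * π * ((m - n : ℤ):ℂ) * I) * x) := by
    intro x
    have : ((‖P x‖ ^ 2 : ℝ) : ℂ) = P x * (starRingEnd ℂ) (P x) := by
      rw [Complex.mul_conj, Complex.normSq_eq_norm_sq]
    rw [this, hP]
    simp only [map_sum, Finset.sum_mul_sum, map_mul]
    refine Finset.sum_congr rfl fun m _ => Finset.sum_congr rfl fun n _ => ?_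
    rw [← Complex.exp_conj]
    have : Complex.exp ((2 * π * ((m - n : ℤ):ℂ) * I) * x) =
      Complex.exp ((2 * π * (m:ℤ) * I) * x) * Complex.exp ((starRingEnd ℂ) ((2 * π * (n:ℤ) * I) * x)) := by
      rw [← Complex.exp_add]
      congr 1
      simp [map_ofNat]
      ring
    rw [this]; ring
  have hPc : Continuous P := by
    rw [hP]; fun_prop
  have e1 : ∫ x in (0:ℝ)..1, ((‖P x‖ ^ 2 : ℝ) : ℂ) = ((∑ n ∈ Finset.range p, ‖c n‖ ^ 2 : ℝ) : ℂ) := by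
    simp_rw [hPP]
    rw [intervalIntegral.integral_finsetSum]
    · rw [Complex.ofReal_sum]
      refine Finset.sum_congr rfl fun m hm => ?_
      rw [intervalIntegral.integral_finsetSum]
      · rw [Finset.sum_eq_single m]
        · simp [Complex.mul_conj, Complex.normSq_eq_norm_sq]
        · intro n _ hn
          rw [intervalIntegral.integral_const_mul, hil_int0, mul_zero]
          rw [sub_ne_zero]; exact_mod_cast hn.symm
        · intro h; exact absurd hm h
      · intro n _
        apply Continuous.intervalIntegrable; fun_prop
    · intro n _
      apply Continuous.intervalIntegrable; fun_prop
  have e2 : ∫ x in (0:ℝ)..1, ((x:ℂ) - 1/2) * ((‖P x‖ ^ 2 : ℝ) : ℂ) =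
      (1 / (2 * π * I)) * ∑ m ∈ Finset.range p, ∑ n ∈ Finset.range p,
      (if m = n then 0 else c m * (starRingEnd ℂ) (c n) / ((m:ℂ) - n)) := by
    simp_rw [hPP, Finset.mul_sum]
    rw [intervalIntegral.integral_finsetSum]
    · refine Finset.sum_congr rfl fun m hm => ?_
      rw [intervalIntegral.integral_finsetSum]
      · refine Finset.sum_congr rfl fun n hn => ?_
        have : ∀ x : ℝ, ((x:ℂ) - 1/2) * (c m * (starRingEnd ℂ) (c n) * Complex.exp ((2 * π * ((m - n : ℤ):ℂ) * I) * x))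
          = (c m * (starRingEnd ℂ) (c n)) * (((x:ℂ) - 1/2) * Complex.exp ((2 * π * ((m - n : ℤ):ℂ) * I) * x)) := by
          intro x; ring
        simp_rw [this]
        rw [intervalIntegral.integral_const_mul]
        split_ifs with h
        · subst h
          have : ∫ x in (0:ℝ)..1, ((x:ℂ) - 1/2) = 0 := by
            rw [intervalIntegral.integral_sub]
            · rw [intervalIntegral.integral_ofReal]
              simp
            · apply Continuous.intervalIntegrable; fun_prop
            · apply Continuous.intervalIntegrable; fun_prop
          simp at this ⊢
          right; exact this
        · have h' : ((m:ℂ) - n) ≠ 0 := by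
            rw [sub_ne_zero]; exact_mod_cast h
          rw [hil_int1 _ (by rw [sub_ne_zero]; exact_mod_cast h)]
          push_cast
          field_simp
      · intro n _
        apply Continuous.intervalIntegrable; fun_prop
    · intro n _
      apply Continuous.intervalIntegrable; fun_prop
  set S := ∑ m ∈ Finset.range p, ∑ n ∈ Finset.range p,
      (if m = n then 0 else c m * (starRingEnd ℂ) (c n) / ((m:ℂ) - n)) with hS
  have e1' : ∫ x in (0:ℝ)..1, ‖P x‖ ^ 2 = ∑ n ∈ Finset.range p, ‖c n‖ ^ 2 := by
    rw [intervalIntegral.integral_ofReal] at e1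
    exact_mod_cast e1
  have e3 : ‖∫ x in (0:ℝ)..1, ((x:ℂ) - 1/2) * ((‖P x‖ ^ 2 : ℝ) : ℂ)‖ ≤
      ∫ x in (0:ℝ)..1, (1/2) * ‖P x‖ ^ 2 := by
    apply intervalIntegral.norm_integral_le_of_norm_le (by norm_num)
    · refine Filter.Eventually.of_forall fun x hx => ?_
      rw [norm_mul, Complex.norm_real, Real.norm_of_nonneg (by positivity : 0 ≤ ‖P x‖^2)]
      apply mul_le_mul_of_nonneg_right _ (by positivity)
      have : ((x:ℂ) - 1/2) = ((x - 1/2 : ℝ) : ℂ) := by push_cast; ring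
      rw [this, Complex.norm_real, Real.norm_eq_abs, abs_le]
      constructor <;> linarith [hx.1, hx.2]
    · apply Continuous.intervalIntegrable; fun_prop
  rw [e2, intervalIntegral.integral_const_mul, e1', norm_mul] at e3
  have : ‖(1 / (2 * π * I) : ℂ)‖ = 1 / (2 * π) := by
    simp [abs_of_pos Real.pi_pos]
  rw [this] at e3
  have hpi := Real.pi_pos
  calc ‖S‖ = 2 * π * (1 / (2 * π) * ‖S‖) := by field_simp
    _ ≤ 2 * π * (1 / 2 * ∑ n ∈ Finset.range p, ‖c n‖ ^ 2) := by gcongr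
    _ = _ := by ring

lemma log_kernel_pos (r : ℝ) (hr : 1 < r) :
    |1 / (2 * Real.log r) - r / (r ^ 2 - 1)| ≤ 1 := by
  have hl : 0 < Real.log r := Real.log_pos hr
  have h1 : Real.log r ≤ r - 1 := Real.log_le_sub_one_of_pos (by linarith)
  have h2 : 1 - r⁻¹ ≤ Real.log r := Real.one_sub_inv_le_log_of_pos (by linarith)
  have hr1 : 0 < r - 1 := by linarith
  have h2' : (r - 1) / r ≤ Real.log r := by
    have : (r - 1) / r = 1 - r⁻¹ := by field_simp
    rw [this]; exact h2
  have u : 1 / (2 * Real.log r) ≤ r / (2 * (r - 1)) := by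
    have : r / (2 * (r - 1)) = 1 / (2 * ((r-1)/r)) := by field_simp
    rw [this]
    gcongr
    
  have l : 1 / (2 * (r - 1)) ≤ 1 / (2 * Real.log r) := by
    gcongr
  have e1 : r / (2 * (r - 1)) - r / (r ^ 2 - 1) = r / (2 * (r + 1)) := by
    have : r ^ 2 - 1 = (r - 1) * (r + 1) := by ring
    rw [this]
    have : r + 1 ≠ 0 := by linarith
    field_simp
    ring
  have e2 : 1 / (2 * (r - 1)) - r / (r ^ 2 - 1) = - (1 / (2 * (r + 1))) := by
    have : r ^ 2 - 1 = (r - 1) * (r + 1) := by ring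
    rw [this]
    have : r + 1 ≠ 0 := by linarith
    field_simp
    ring
  have b1 : r / (2 * (r + 1)) ≤ 1 := by
    rw [div_le_one (by linarith)]; linarith
  have b2 : 1 / (2 * (r + 1)) ≤ 1 := by
    rw [div_le_one (by linarith)]; linarith
  rw [abs_le]
  constructor <;> linarith

lemma log_kernel_lt (x y : ℝ) (hy : 0 < y) (h : y < x) :
    |(Real.sqrt x * Real.sqrt y)⁻¹ / (Real.log x - Real.log y) - 1 / (x - y)|
      ≤ (Real.sqrt x * Real.sqrt y)⁻¹ := by
  have hx : 0 < x := hy.trans h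
  set a := Real.sqrt x with ha
  set b := Real.sqrt y with hb
  have ha0 : 0 < a := Real.sqrt_pos.2 hx
  have hb0 : 0 < b := Real.sqrt_pos.2 hy
  have hxa : x = a ^ 2 := (Real.sq_sqrt hx.le).symm
  have hyb : y = b ^ 2 := (Real.sq_sqrt hy.le).symm
  have hab : b < a := Real.sqrt_lt_sqrt hy.le h
  have key := log_kernel_pos (a / b) (by rw [lt_div_iff₀ hb0]; linarith)
  rw [Real.log_div ha0.ne' hb0.ne'] at key
  have hlog : 0 < Real.log a - Real.log b := sub_pos.2 (Real.log_lt_log hb0 hab)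
  have : (a * b)⁻¹ / (Real.log x - Real.log y) - 1 / (x - y) =
     (a * b)⁻¹ * (1 / (2 * (Real.log a - Real.log b)) - (a / b) / ((a / b) ^ 2 - 1)) := by
    rw [hxa, hyb, Real.log_pow, Real.log_pow]
    have h3 : a ^ 2 - b ^ 2 ≠ 0 := by nlinarith
    have h4 : (a / b) ^ 2 - 1 = (a ^ 2 - b ^ 2) / b ^ 2 := by field_simp
    rw [h4]
    push_cast
    field_simp
  rw [this, abs_mul, abs_of_pos (by positivity : 0 < (a * b)⁻¹)]
  calc _ ≤ (a * b)⁻¹ * 1 := by gcongr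
    _ = _ := mul_one _

lemma log_kernel (x y : ℝ) (hx : 0 < x) (hy : 0 < y) (h : x ≠ y) :
    |(Real.sqrt x * Real.sqrt y)⁻¹ / (Real.log x - Real.log y) - 1 / (x - y)|
      ≤ (Real.sqrt x * Real.sqrt y)⁻¹ := by
  rcases lt_or_gt_of_ne h with h | h
  · have := log_kernel_lt y x hx h
    rw [← abs_neg, mul_comm (Real.sqrt x)]
    convert this using 2
    have h1 : Real.log x - Real.log y = -(Real.log y - Real.log x) := by ring
    have h2 : x - y = -(y - x) := by ring
    rw [h1, h2, div_neg, div_neg]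
    ring
  · exact log_kernel_lt x y hy h

lemma sum_inv_sqrt (p : ℕ) : ∑ n ∈ Finset.range p, (Real.sqrt (n + 1))⁻¹ ≤ 2 * Real.sqrt p := by
  induction p with
  | zero => simp
  | succ k ih =>
    rw [Finset.sum_range_succ]
    push_cast
    set a := Real.sqrt k
    set b := Real.sqrt ((k:ℝ) + 1)
    have hb : 0 < b := Real.sqrt_pos.2 (by positivity)
    have ha : 0 ≤ a := Real.sqrt_nonneg _
    have h1 : a ^ 2 = k := Real.sq_sqrt (by positivity)
    have h2 : b ^ 2 = k + 1 := Real.sq_sqrt (by positivity)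
    have : b⁻¹ ≤ 2 * b - 2 * a := by
      rw [inv_le_iff_one_le_mul₀ hb]
      nlinarith [sq_nonneg (a - b)]
    linarith

/-- off-diagonal bound -/
lemma offdiag_bound (p : ℕ) (c : ℕ → ℂ) (C : ℝ) (hc : ∀ n, ‖c n‖ ≤ C) :
    ‖∑ m ∈ Finset.range p, ∑ n ∈ Finset.range p,
      (if m = n then 0 else c m * (starRingEnd ℂ) (c n) *
        (((Real.sqrt (m+1) * Real.sqrt (n+1))⁻¹ / (Real.log (m+1) - Real.log (n+1)) : ℝ) : ℂ))‖
      ≤ 8 * C ^ 2 * p := by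
  have hC : 0 ≤ C := (norm_nonneg _).trans (hc 0)
  have split : ∑ m ∈ Finset.range p, ∑ n ∈ Finset.range p,
      (if m = n then 0 else c m * (starRingEnd ℂ) (c n) *
        (((Real.sqrt (m+1) * Real.sqrt (n+1))⁻¹ / (Real.log (m+1) - Real.log (n+1)) : ℝ) : ℂ)) =
      ∑ m ∈ Finset.range p, ∑ n ∈ Finset.range p,
      (if m = n then 0 else c m * (starRingEnd ℂ) (c n) / ((m:ℂ) - n)) +
      ∑ m ∈ Finset.range p, ∑ n ∈ Finset.range p,
      (if m = n then 0 else c m * (starRingEnd ℂ) (c n) *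
        (((Real.sqrt (m+1) * Real.sqrt (n+1))⁻¹ / (Real.log (m+1) - Real.log (n+1))
          - 1 / (((m:ℝ)+1) - (n+1)) : ℝ) : ℂ)) := by
    rw [← Finset.sum_add_distrib]
    refine Finset.sum_congr rfl fun m _ => ?_
    rw [← Finset.sum_add_distrib]
    refine Finset.sum_congr rfl fun n _ => ?_
    split_ifs with h
    · simp
    · have : ((m:ℝ) + 1) - (n + 1) = m - n := by ring
      rw [this]
      push_cast
      ring
  rw [split]
  refine (norm_add_le _ _).trans ?_
  have b1 := hilbert_ineq p c
  have b1' : π * ∑ n ∈ Finset.range p, ‖c n‖ ^ 2 ≤ 4 * (C ^ 2 * p) := by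
    apply mul_le_mul Real.pi_le_four _ (by positivity) (by norm_num)
    calc _ ≤ ∑ n ∈ Finset.range p, C ^ 2 := by
          gcongr with n; exact hc n
      _ = _ := by simp [mul_comm]
  have b2 : ‖∑ m ∈ Finset.range p, ∑ n ∈ Finset.range p,
      (if m = n then 0 else c m * (starRingEnd ℂ) (c n) *
        (((Real.sqrt (m+1) * Real.sqrt (n+1))⁻¹ / (Real.log (m+1) - Real.log (n+1))
          - 1 / (((m:ℝ)+1) - (n+1)) : ℝ) : ℂ))‖ ≤ 4 * (C ^ 2 * p) := by
    calc _ ≤ ∑ m ∈ Finset.range p, ∑ n ∈ Finset.range p,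
          C ^ 2 * ((Real.sqrt (m+1))⁻¹ * (Real.sqrt (n+1))⁻¹) := by
          refine (norm_sum_le _ _).trans (Finset.sum_le_sum fun m _ => ?_)
          refine (norm_sum_le _ _).trans (Finset.sum_le_sum fun n _ => ?_)
          split_ifs with h
          · simp; positivity
          · rw [norm_mul, norm_mul, Complex.norm_real, RCLike.norm_conj, Real.norm_eq_abs]
            have := log_kernel (m+1) (n+1) (by positivity) (by positivity)
              (by intro h'; apply h; exact_mod_cast add_right_cancel h')
            rw [mul_inv] at this ⊢
            rw [sq]
            gcongr
            · exact hc m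
            · exact hc n
      _ = C ^ 2 * ((∑ m ∈ Finset.range p, (Real.sqrt (m+1))⁻¹) *
          (∑ m ∈ Finset.range p, (Real.sqrt (m+1))⁻¹)) := by
          rw [Finset.sum_mul_sum, Finset.mul_sum]
          refine Finset.sum_congr rfl fun m _ => ?_
          rw [Finset.mul_sum]
      _ ≤ C ^ 2 * ((2 * Real.sqrt p) * (2 * Real.sqrt p)) := by
          have := sum_inv_sqrt p
          gcongr
      _ = 4 * (C ^ 2 * (Real.sqrt p * Real.sqrt p)) := by ring
      _ = _ := by rw [Real.mul_self_sqrt (by positivity)]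
  linarith

/-- `(n+1)^{-s}` -/
noncomputable def ez (n : ℕ) (s : ℂ) : ℂ := ((n + 1 : ℕ) : ℂ) ^ (-s)

lemma norm_ez (n : ℕ) (s : ℂ) : ‖ez n s‖ = ((n:ℝ) + 1) ^ (-s.re) := by
  rw [ez, Complex.norm_natCast_cpow_of_pos (Nat.succ_pos n)]
  simp

lemma ez_half (n : ℕ) (t : ℝ) : ez n ((1/2 : ℂ) + t * I) =
    (((Real.sqrt (n+1))⁻¹ : ℝ) : ℂ) * Complex.exp ((-(t * Real.log (n+1)) : ℝ) * I) := by
  have h0 : ((n + 1 : ℕ) : ℂ) ≠ 0 := by exact_mod_cast Nat.succ_ne_zero n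
  have h1 : (0:ℝ) < n + 1 := by positivity
  rw [ez, neg_add, Complex.cpow_add _ _ h0]
  congr 1
  · have : ((n + 1 : ℕ) : ℂ) = (((n:ℝ) + 1 : ℝ) : ℂ) := by push_cast; ring
    have h2 : (-(1/2 : ℂ)) = ((-(1/2) : ℝ) : ℂ) := by push_cast; ring
    rw [this, h2, ← Complex.ofReal_cpow h1.le, Real.rpow_neg h1.le, Real.sqrt_eq_rpow]
  · rw [Complex.cpow_def_of_ne_zero h0]
    congr 1
    have : ((n + 1 : ℕ) : ℂ) = (((n:ℝ) + 1 : ℝ) : ℂ) := by push_cast; ring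
    rw [this, ← Complex.ofReal_log h1.le]
    push_cast
    ring

lemma int_exp_log (x a b : ℝ) (hx : x ≠ 0) :
    ∫ t in a..b, Complex.exp ((-(t * x) : ℝ) * I) =
      (Complex.exp ((-(b * x) : ℝ) * I) - Complex.exp ((-(a * x) : ℝ) * I)) * ((1 / x : ℝ) : ℂ) * I := by
  have hc : (-x * I : ℂ) ≠ 0 := by simp [hx]
  have := integral_exp_mul_complex (a := a) (b := b) hc
  have e : ∀ t : ℝ, (((-(t * x) : ℝ) : ℂ) * I) = (-x * I : ℂ) * t := by
    intro t; push_cast; ring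
  simp_rw [e]
  rw [this]
  have hx' : (x : ℂ) ≠ 0 := by exact_mod_cast hx
  push_cast
  field_simp
  ring_nf
  simp

lemma mean_square (p : ℕ) (A : ℕ → ℂ) (C : ℝ) (hA : ∀ n, ‖A n‖ ≤ C) (a b : ℝ) :
    |(∫ t in a..b, ‖∑ n ∈ Finset.range p, A n * ez n ((1/2 : ℂ) + t * I)‖ ^ 2)
      - (b - a) * ∑ n ∈ Finset.range p, ‖A n‖ ^ 2 / ((n:ℝ) + 1)| ≤ 16 * C ^ 2 * p := by
  set c : ℝ → ℕ → ℂ := fun t n => A n * Complex.exp ((-(t * Real.log (n+1)) : ℝ) * I) with hc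
  have hcn : ∀ t n, ‖c t n‖ ≤ C := by
    intro t n
    rw [hc]; simp only [norm_mul, Complex.norm_exp_ofReal_mul_I, mul_one]; exact hA n
  set S : ℝ → ℂ := fun t => ∑ m ∈ Finset.range p, ∑ n ∈ Finset.range p,
      (if m = n then 0 else c t m * (starRingEnd ℂ) (c t n) *
        (((Real.sqrt (m+1) * Real.sqrt (n+1))⁻¹ / (Real.log (m+1) - Real.log (n+1)) : ℝ) : ℂ)) with hS
  have hSb : ∀ t, ‖S t‖ ≤ 8 * C ^ 2 * p := fun t => offdiag_bound p (c t) C (hcn t)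
  have key : ((∫ t in a..b, ‖∑ n ∈ Finset.range p, A n * ez n ((1/2 : ℂ) + t * I)‖ ^ 2 : ℝ) : ℂ)
      = (((b - a) * ∑ n ∈ Finset.range p, ‖A n‖ ^ 2 / ((n:ℝ) + 1) : ℝ) : ℂ) + (S b - S a) * I := by
    rw [← intervalIntegral.integral_ofReal]
    have e1 : ∀ t : ℝ, ((‖∑ n ∈ Finset.range p, A n * ez n ((1/2 : ℂ) + t * I)‖ ^ 2 : ℝ) : ℂ) =
      ∑ m ∈ Finset.range p, ∑ n ∈ Finset.range p,
        (A m * (starRingEnd ℂ) (A n) * (((Real.sqrt (m+1) * Real.sqrt (n+1))⁻¹ : ℝ) : ℂ)) *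
         Complex.exp ((-(t * (Real.log (m+1) - Real.log (n+1))) : ℝ) * I) := by
      intro t
      have : ∀ z : ℂ, ((‖z‖ ^ 2 : ℝ) : ℂ) = z * (starRingEnd ℂ) z := by
        intro z
        rw [Complex.mul_conj, Complex.normSq_eq_norm_sq]
      rw [this]
      simp only [map_sum, Finset.sum_mul_sum, map_mul, ez_half, Complex.conj_ofReal]
      refine Finset.sum_congr rfl fun m _ => Finset.sum_congr rfl fun n _ => ?_
      have : Complex.exp ((-(t * (Real.log (m+1) - Real.log (n+1))) : ℝ) * I) =
        Complex.exp ((-(t * Real.log (m+1)) : ℝ) * I) *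
          (starRingEnd ℂ) (Complex.exp ((-(t * Real.log (n+1)) : ℝ) * I)) := by
        rw [← Complex.exp_conj, ← Complex.exp_add]
        congr 1
        rw [map_mul, Complex.conj_ofReal, Complex.conj_I]
        push_cast
        ring
      rw [this, mul_inv]
      push_cast
      ring
    simp_rw [e1]
    have e2 : (S b - S a) * I = ∑ m ∈ Finset.range p, ∑ n ∈ Finset.range p,
       (if m = n then 0 else (c b m * (starRingEnd ℂ) (c b n) - c a m * (starRingEnd ℂ) (c a n)) *
        (((Real.sqrt (m+1) * Real.sqrt (n+1))⁻¹ / (Real.log (m+1) - Real.log (n+1)) : ℝ) : ℂ) * I) := by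
      rw [hS]
      simp only [← Finset.sum_sub_distrib, Finset.sum_mul]
      refine Finset.sum_congr rfl fun m _ => Finset.sum_congr rfl fun n _ => ?_
      split_ifs
      · simp
      · ring
    have e3 : (((b - a) * ∑ n ∈ Finset.range p, ‖A n‖ ^ 2 / ((n:ℝ) + 1) : ℝ) : ℂ) =
      ∑ m ∈ Finset.range p, ∑ n ∈ Finset.range p, (if m = n then
        (((b - a) * (‖A n‖ ^ 2 / ((n:ℝ) + 1)) : ℝ) : ℂ) else 0) := by
      rw [Finset.mul_sum, Complex.ofReal_sum]
      refine Finset.sum_congr rfl fun m hm => ?_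
      rw [Finset.sum_ite_eq, if_pos hm]
    rw [e2, e3, ← Finset.sum_add_distrib, intervalIntegral.integral_finsetSum]
    · refine Finset.sum_congr rfl fun m hm => ?_
      rw [← Finset.sum_add_distrib, intervalIntegral.integral_finsetSum]
      · refine Finset.sum_congr rfl fun n hn => ?_
        rw [intervalIntegral.integral_const_mul]
        split_ifs with h
        · subst h
          have h1 : (0:ℝ) ≤ m + 1 := by positivity
          simp only [sub_self, mul_zero, neg_zero, Complex.ofReal_zero, zero_mul, Complex.exp_zero,
            add_zero, Real.mul_self_sqrt h1, Complex.mul_conj, Complex.normSq_eq_norm_sq]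
          simp
          ring
        · have hx : Real.log (m+1) - Real.log (n+1) ≠ 0 := by
            rw [sub_ne_zero]
            intro h'
            apply h
            have := Real.log_injOn_pos (Set.mem_Ioi.2 (by positivity : (0:ℝ) < m + 1))
              (Set.mem_Ioi.2 (by positivity : (0:ℝ) < n + 1)) h'
            exact_mod_cast add_right_cancel this
          rw [int_exp_log _ _ _ hx]
          have ee : ∀ t : ℝ, Complex.exp ((-(t * (Real.log (m+1) - Real.log (n+1))) : ℝ) * I) =
              Complex.exp ((-(t * Real.log (m+1)) : ℝ) * I) *
              (starRingEnd ℂ) (Complex.exp ((-(t * Real.log (n+1)) : ℝ) * I)) := by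
            intro t
            rw [← Complex.exp_conj, ← Complex.exp_add]
            congr 1
            rw [map_mul, Complex.conj_ofReal, Complex.conj_I]
            push_cast
            ring
          rw [ee, ee, hc, zero_add]
          simp only [map_mul]
          rw [div_eq_mul_one_div]
          push_cast
          ring
      · intro n _
        apply Continuous.intervalIntegrable; fun_prop
    · intro n _
      apply Continuous.intervalIntegrable; fun_prop
  rw [← Real.norm_eq_abs, ← Complex.norm_real, Complex.ofReal_sub, key, add_sub_cancel_left, norm_mul,
    Complex.norm_I, mul_one]
  refine (norm_sub_le _ _).trans ?_
  linarith [hSb a, hSb b]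

lemma norm_ez_half (n : ℕ) (s : ℂ) (hs : s.re = 1/2) : ‖ez n s‖ = (Real.sqrt (n+1))⁻¹ := by
  rw [norm_ez, hs, Real.rpow_neg (by positivity), Real.sqrt_eq_rpow]

noncomputable def th (n : ℕ) : ℝ := Real.log (n + 2) - Real.log (n + 1)

lemma th_le (n : ℕ) : th n ≤ 1 / ((n:ℝ) + 1) := by
  have h1 : (0:ℝ) < n + 1 := by positivity
  have h2 : (0:ℝ) < n + 2 := by positivity
  rw [th, ← Real.log_div h2.ne' h1.ne']
  refine (Real.log_le_sub_one_of_pos (by positivity)).trans (le_of_eq ?_)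
  field_simp
  ring

lemma le_th (n : ℕ) : 1 / (2 * ((n:ℝ) + 1)) ≤ th n := by
  have h1 : (0:ℝ) < n + 1 := by positivity
  have h2 : (0:ℝ) < n + 2 := by positivity
  rw [th, ← Real.log_div h2.ne' h1.ne']
  refine le_trans ?_ (Real.one_sub_inv_le_log_of_pos (by positivity))
  rw [inv_div, one_sub_div h2.ne', div_le_div_iff₀ (by positivity) h2]
  nlinarith

lemma th_pos (n : ℕ) : 0 < th n := lt_of_lt_of_le (by positivity) (le_th n)

lemma th_sub (n : ℕ) : th n - th (n+1) ≤ 1 / (((n:ℝ) + 1) * (n + 3)) := by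
  have h1 : (0:ℝ) < n + 1 := by positivity
  have h2 : (0:ℝ) < n + 2 := by positivity
  have h3 : (0:ℝ) < n + 3 := by positivity
  have : th n - th (n+1) = Real.log (((n:ℝ)+2)*(n+2) / ((n+1) * (n+3))) := by
    rw [Real.log_div (by positivity) (by positivity), Real.log_mul (by positivity) (by positivity),
      Real.log_mul (by positivity) (by positivity), th, th]
    push_cast
    have e1 : (n:ℝ) + 1 + 2 = n + 3 := by ring
    have e2 : (n:ℝ) + 1 + 1 = n + 2 := by ring
    rw [e1, e2]; ring
  rw [this]
  refine (Real.log_le_sub_one_of_pos (by positivity)).trans (le_of_eq ?_)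
  field_simp
  ring

lemma th_anti (n : ℕ) : 0 ≤ th n - th (n+1) := by
  have h1 : (0:ℝ) < n + 1 := by positivity
  have h2 : (0:ℝ) < n + 2 := by positivity
  have h3 : (0:ℝ) < n + 3 := by positivity
  have : th n - th (n+1) = Real.log (((n:ℝ)+2)*(n+2) / ((n+1) * (n+3))) := by
    rw [Real.log_div (by positivity) (by positivity), Real.log_mul (by positivity) (by positivity),
      Real.log_mul (by positivity) (by positivity), th, th]
    push_cast
    have e1 : (n:ℝ) + 1 + 2 = n + 3 := by ring
    have e2 : (n:ℝ) + 1 + 1 = n + 2 := by ring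
    rw [e1, e2]; ring
  rw [this]
  apply Real.log_nonneg
  rw [le_div_iff₀ (by positivity)]
  nlinarith

lemma ez_succ (n : ℕ) (s : ℂ) : ez (n+1) s = ez n s * Complex.exp (-s * th n) := by
  have h0 : ((n + 1 : ℕ) : ℂ) ≠ 0 := by exact_mod_cast Nat.succ_ne_zero n
  have h0' : ((n + 1 + 1 : ℕ) : ℂ) ≠ 0 := by exact_mod_cast Nat.succ_ne_zero (n+1)
  rw [ez, ez, Complex.cpow_def_of_ne_zero h0, Complex.cpow_def_of_ne_zero h0', ← Complex.exp_add]
  congr 1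
  rw [th, ← Complex.natCast_log, ← Complex.natCast_log]
  have e2 : (n:ℝ) + 1 + 1 = n + 2 := by ring
  push_cast
  have e2 : (n:ℝ) + 1 + 1 = n + 2 := by ring
  rw [e2]
  ring

lemma exp_sub_one_lower (w : ℂ) (hw : ‖w‖ ≤ 1/2) : ‖w‖ / 2 ≤ ‖Complex.exp w - 1‖ := by
  have h := Complex.norm_exp_sub_one_sub_id_le (x := w) (by linarith)
  have h2 : ‖w‖ ≤ ‖Complex.exp w - 1‖ + ‖Complex.exp w - 1 - w‖ := by
    have := norm_sub_le (Complex.exp w - 1) (Complex.exp w - 1 - w)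
    simpa using this
  nlinarith [norm_nonneg w]

lemma exp_sub_one_upper (w : ℂ) (hw : ‖w‖ ≤ 1) : ‖Complex.exp w - 1‖ ≤ 2 * ‖w‖ :=
  Complex.norm_exp_sub_one_le hw

noncomputable def gk (s : ℂ) (n : ℕ) : ℂ := (Complex.exp (-s * th n) - 1)⁻¹

lemma norm_sth (s : ℂ) (n : ℕ) : ‖-s * (th n : ℂ)‖ = ‖s‖ * th n := by
  rw [norm_mul, norm_neg, Complex.norm_real, Real.norm_of_nonneg (th_pos n).le]

lemma kl_den (s : ℂ) (n : ℕ) (hn : 2 * ‖s‖ ≤ n + 1) :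
    ‖s‖ / (4 * (n+1)) ≤ ‖Complex.exp (-s * th n) - 1‖ := by
  have hn0 : (0:ℝ) < n + 1 := by positivity
  have h1 : ‖-s * (th n : ℂ)‖ ≤ 1/2 := by
    rw [norm_sth]
    calc ‖s‖ * th n ≤ ‖s‖ * (1 / (n+1)) := by gcongr; exact th_le n
      _ ≤ 1/2 := by rw [mul_one_div, div_le_iff₀ hn0]; linarith
  refine le_trans ?_ (exp_sub_one_lower _ h1)
  rw [norm_sth]
  calc ‖s‖ / (4 * (n+1)) = ‖s‖ * (1 / (2 * (n+1))) / 2 := by field_simp; norm_num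
    _ ≤ _ := by gcongr; exact le_th n

lemma gk_bound (s : ℂ) (hs : s ≠ 0) (n : ℕ) (hn : 2 * ‖s‖ ≤ n + 1) :
    ‖gk s n‖ ≤ 4 * (n+1) / ‖s‖ := by
  have hs' : 0 < ‖s‖ := norm_pos_iff.2 hs
  have := kl_den s n hn
  rw [gk, norm_inv, ← inv_div]
  gcongr

lemma gk_sub (s : ℂ) (hs : s ≠ 0) (hre : 0 ≤ s.re) (n : ℕ) (hn : 2 * ‖s‖ ≤ n + 1) :
    ‖gk s n - gk s (n+1)‖ ≤ 32 / ‖s‖ := by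
  have hs' : 0 < ‖s‖ := norm_pos_iff.2 hs
  have hn' : 2 * ‖s‖ ≤ ((n + 1 : ℕ):ℝ) + 1 := by push_cast; linarith
  have d1 := kl_den s n hn
  have d2 := kl_den s (n+1) hn'
  have n1 : Complex.exp (-s * th n) - 1 ≠ 0 := by
    rw [← norm_pos_iff]; exact lt_of_lt_of_le (by positivity) d1
  have n2 : Complex.exp (-s * th (n+1)) - 1 ≠ 0 := by
    rw [← norm_pos_iff]; exact lt_of_lt_of_le (by positivity) d2
  have e : gk s n - gk s (n+1) =
      (-(Complex.exp (-s * th (n+1)) * (Complex.exp (-s * ((th n - th (n+1) : ℝ) : ℂ)) - 1))) * gk s n * gk s (n+1) := by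
    have : Complex.exp (-s * th n) = Complex.exp (-s * th (n+1)) * Complex.exp (-s * ((th n - th (n+1) : ℝ) : ℂ)) := by
      rw [← Complex.exp_add]; congr 1; push_cast; ring
    rw [mul_sub, mul_one, ← this, gk, gk]
    clear d1 d2 this
    generalize Complex.exp (-s * th n) = x at *
    generalize Complex.exp (-s * th (n+1)) = y at *
    field_simp
    ring
  have b1 : ‖Complex.exp (-s * th (n+1))‖ ≤ 1 := by
    rw [Complex.norm_exp, Real.exp_le_one_iff]
    simp
    exact mul_nonneg hre (th_pos _).le
  have b2 : ‖Complex.exp (-s * ((th n - th (n+1) : ℝ) : ℂ)) - 1‖ ≤ 2 * (‖s‖ * (1 / (((n:ℝ) + 1) * (n + 3)))) := by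
    have h : ‖-s * ((th n - th (n+1) : ℝ) : ℂ)‖ ≤ ‖s‖ * (1 / (((n:ℝ) + 1) * (n + 3))) := by
      rw [norm_mul, norm_neg, Complex.norm_real, Real.norm_of_nonneg (th_anti n)]
      gcongr; exact th_sub n
    refine (exp_sub_one_upper _ (h.trans ?_)).trans (by gcongr)
    rw [mul_one_div, div_le_one (by positivity)]
    have : (0:ℝ) ≤ n := by positivity
    nlinarith
  have g1 := gk_bound s hs n hn
  have g2 := gk_bound s hs (n+1) hn'
  rw [e, norm_mul, norm_mul, norm_neg, norm_mul]
  calc _ ≤ (1 * (2 * (‖s‖ * (1 / (((n:ℝ) + 1) * (n + 3)))))) * (4 * (n+1) / ‖s‖) * (4 * (((n+1:ℕ):ℝ)+1) / ‖s‖) := by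
        gcongr
    _ = (32 / ‖s‖) * ((n+2)/(n+3)) := by
        push_cast
        field_simp
        ring
    _ ≤ (32 / ‖s‖) * 1 := by
        gcongr
        rw [div_le_one (by positivity)]; linarith
    _ = _ := mul_one _

lemma kl_sum (s : ℂ) (hs : s ≠ 0) (p k : ℕ) (hp : 2 * ‖s‖ ≤ p + 1) :
    ∑ n ∈ Finset.range k, ez (p + n) s = gk s (p+k) * ez (p+k) s - gk s p * ez p s +
      ∑ n ∈ Finset.range k, ez (p + n + 1) s * (gk s (p+n) - gk s (p+n+1)) := by
  have hs' : 0 < ‖s‖ := norm_pos_iff.2 hs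
  induction k with
  | zero => simp
  | succ k ih =>
    rw [Finset.sum_range_succ, Finset.sum_range_succ, ih]
    have hn' : 2 * ‖s‖ ≤ ((p + k : ℕ):ℝ) + 1 := by
      push_cast
      have : (0:ℝ) ≤ k := by positivity
      linarith
    have d2 := kl_den s (p+k) hn'
    have n2 : Complex.exp (-s * th (p+k)) - 1 ≠ 0 := by
      rw [← norm_pos_iff]; exact lt_of_lt_of_le (by positivity) d2
    have : gk s (p+k) * (ez (p+k+1) s - ez (p+k) s) = ez (p+k) s := by
      rw [ez_succ, gk]
      clear d2
      generalize Complex.exp (-s * th (p+k)) = x at *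
      field_simp
    rw [← add_assoc p k 1]
    linear_combination -this

lemma kl_bound (s : ℂ) (hs : s.re = 1/2) (p k : ℕ) (hp : 2 * ‖s‖ ≤ p + 1) :
    ‖∑ n ∈ Finset.range k, ez (p + n) s‖ ≤ 72 * Real.sqrt (p + k + 1) / ‖s‖ := by
  have hs0 : s ≠ 0 := by rintro rfl; norm_num at hs
  have hs' : 0 < ‖s‖ := norm_pos_iff.2 hs0
  have hn : ∀ n : ℕ, 2 * ‖s‖ ≤ ((p + n : ℕ):ℝ) + 1 := by
    intro n
    push_cast
    have : (0:ℝ) ≤ n := by positivity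
    linarith
  rw [kl_sum s hs0 p k hp]
  have sq : ∀ n : ℕ, ‖gk s n * ez n s‖ ≤ ‖gk s n‖ * (Real.sqrt (n+1))⁻¹ := by
    intro n; rw [norm_mul, norm_ez_half n s hs]
  have b : ∀ n : ℕ, ‖gk s (p+n) * ez (p+n) s‖ ≤ 4 * Real.sqrt (p+n+1) / ‖s‖ := by
    intro n
    have hq : 0 < Real.sqrt ((p+n : ℕ)+1) := Real.sqrt_pos.2 (by positivity)
    calc _ ≤ _ := sq (p+n)
      _ ≤ (4 * (((p+n:ℕ):ℝ)+1) / ‖s‖) * (Real.sqrt ((p+n : ℕ)+1))⁻¹ := by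
        gcongr; exact gk_bound s hs0 _ (hn n)
      _ = (4 * (Real.sqrt ((p+n : ℕ)+1) * Real.sqrt ((p+n : ℕ)+1)) / ‖s‖) * (Real.sqrt ((p+n : ℕ)+1))⁻¹ := by
        rw [Real.mul_self_sqrt (by positivity)]
      _ = 4 * Real.sqrt ((p+n : ℕ)+1) / ‖s‖ := by field_simp
      _ = _ := by push_cast; rfl
  have b1 := b k
  have b0 : ‖gk s p * ez p s‖ ≤ 4 * Real.sqrt (p+k+1) / ‖s‖ := by
    refine (b 0).trans ?_
    gcongr
    simp
  have b2 : ‖∑ n ∈ Finset.range k, ez (p + n + 1) s * (gk s (p+n) - gk s (p+n+1))‖ ≤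
      64 * Real.sqrt (p+k+1) / ‖s‖ := by
    calc _ ≤ ∑ n ∈ Finset.range k, (Real.sqrt (n+1))⁻¹ * (32 / ‖s‖) := by
          refine (norm_sum_le _ _).trans (Finset.sum_le_sum fun n _ => ?_)
          rw [norm_mul, norm_ez_half _ s hs]
          gcongr
          · push_cast
            have : (0:ℝ) ≤ p := by positivity
            linarith
          · exact gk_sub s hs0 (by rw [hs]; norm_num) _ (hn n)
      _ ≤ (2 * Real.sqrt k) * (32 / ‖s‖) := by
          rw [← Finset.sum_mul]
          gcongr; exact sum_inv_sqrt k
      _ ≤ (2 * Real.sqrt (p+k+1)) * (32 / ‖s‖) := by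
          gcongr
          have : (0:ℝ) ≤ p := by positivity
          linarith
      _ = _ := by ring
  refine (norm_add_le _ _).trans ?_
  have := norm_sub_le (gk s (p+k) * ez (p+k) s) (gk s p * ez p s)
  have e : 72 * Real.sqrt (p + k + 1) / ‖s‖ = 4 * Real.sqrt (p+k+1) / ‖s‖ + 4 * Real.sqrt (p+k+1) / ‖s‖
     + 64 * Real.sqrt (p+k+1) / ‖s‖ := by ring
  linarith

noncomputable def tau (n : ℕ) (s : ℂ) : ℂ :=
  (ez n s + ez (n+1) s) / 2 - (ez (n+1) (s-1) - ez n (s-1)) / (1 - s)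

noncomputable def Ph (p : ℕ) (s : ℂ) : ℂ :=
  ∑ n ∈ Finset.range p, ez n s + ez p (s-1) / (s-1) + ez p s / 2

lemma Ph_succ (p : ℕ) (s : ℂ) (hs : s ≠ 1) : Ph (p+1) s = Ph p s + tau p s := by
  have h1 : s - 1 ≠ 0 := sub_ne_zero.2 hs
  have h2 : (1 - s) = -(s - 1) := by ring
  rw [Ph, Ph, tau, Finset.sum_range_succ, h2]
  field_simp
  ring

lemma Ph_add (p k : ℕ) (s : ℂ) (hs : s ≠ 1) :
    Ph (p+k) s = Ph p s + ∑ n ∈ Finset.range k, tau (p+n) s := by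
  induction k with
  | zero => simp
  | succ k ih => rw [← add_assoc, Ph_succ _ _ hs, ih, Finset.sum_range_succ]; ring

lemma hasDerivAt_shift (x : ℝ) (a : ℂ) (u : ℝ) (h : 0 < x + u) :
    HasDerivAt (fun u : ℝ => ((x + u : ℝ) : ℂ) ^ a) (a * ((x + u : ℝ) : ℂ) ^ (a - 1)) u := by
  have h0 := ((hasDerivAt_id (u:ℂ)).const_add (x:ℂ)).cpow_const (c := a)
    (Or.inl (by simpa using h))
  have h1 := h0.comp_ofReal
  simpa using h1

lemma tau_bound (n : ℕ) (s : ℂ) (hs : 0 < s.re) (hs1 : s ≠ 1) :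
    ‖tau n s‖ ≤ ‖s‖ * ‖s + 1‖ * ((n:ℝ) + 1) ^ (-(s.re + 2)) := by
  set x : ℝ := n + 1 with hx
  have hx0 : 0 < x := by positivity
  have h1s : (1 - s) ≠ 0 := sub_ne_zero.2 (Ne.symm hs1)
  set φ : ℂ → ℝ → ℂ := fun a u => ((x + u : ℝ) : ℂ) ^ a with hφ
  have hd : ∀ a : ℂ, ∀ u ∈ Set.Icc (0:ℝ) 1, HasDerivAt (φ a) (a * φ (a - 1) u) u :=
    fun a u hu => hasDerivAt_shift x a u (by linarith [hu.1])
  set F1 : ℝ → ℂ := fun u => (φ (-s) 0 - φ (-s) u) / 2 + u * (-s * φ (-s-1) u) / 2 with hF1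
  set F2 : ℝ → ℂ := fun u => u * (-s * ((-s-1) * φ (-s-1-1) u)) / 2 with hF2
  set F : ℝ → ℂ := fun u => u * (φ (-s) 0 + φ (-s) u) / 2 - (φ (1-s) u - φ (1-s) 0) / (1-s) with hF
  set K := ‖s‖ * ‖s + 1‖ * x ^ (-(s.re + 2)) with hK
  have hK0 : 0 ≤ K := by positivity
  have hid : ∀ u : ℝ, HasDerivAt (fun u : ℝ => (u:ℂ)) 1 u := fun u => Complex.ofRealCLM.hasDerivAt
  have dF : ∀ u ∈ Set.Icc (0:ℝ) 1, HasDerivAt F (F1 u) u := by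
    intro u hu
    have a1 := hd (-s) u hu
    have a2 := hd (1-s) u hu
    have := (((hid u).mul (a1.const_add (φ (-s) 0))).div_const 2).sub ((a2.sub_const (φ (1-s) 0)).div_const (1-s))
    refine this.congr_deriv ?_
    have e : (1 - s - 1) = -s := by ring
    rw [e, hF1]
    field_simp
    ring
  have dF1 : ∀ u ∈ Set.Icc (0:ℝ) 1, HasDerivAt F1 (F2 u) u := by
    intro u hu
    have a1 := hd (-s) u hu
    have a2 := hd (-s-1) u hu
    have := ((a1.const_sub (φ (-s) 0)).div_const 2).add (((hid u).mul (a2.const_mul (-s))).div_const 2)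
    refine this.congr_deriv ?_
    rw [hF2]
    ring
  have bF2 : ∀ u ∈ Set.Icc (0:ℝ) 1, ‖F2 u‖ ≤ K := by
    intro u hu
    have hn : ‖φ (-s-1-1) u‖ ≤ x ^ (-(s.re + 2)) := by
      rw [hφ]
      simp only
      rw [Complex.norm_cpow_eq_rpow_re_of_pos (by linarith [hu.1])]
      have : (-s-1-1).re = -(s.re+2) := by simp; ring
      rw [this]
      apply Real.rpow_le_rpow_of_nonpos hx0 (by linarith [hu.1]) (by linarith)
    rw [hF2]
    simp only [norm_div, norm_mul, Complex.norm_real, Real.norm_of_nonneg hu.1, norm_neg]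
    have : ‖-s-1‖ = ‖s+1‖ := by rw [← norm_neg]; congr 1; ring
    rw [this]
    have hu1 := hu.2
    have hu0 := hu.1
    have h3 : ‖s‖ * (‖s+1‖ * ‖φ (-s-1-1) u‖) ≤ K := by
      rw [hK, ← mul_assoc]; gcongr
    have h4 : u * (‖s‖ * (‖s+1‖ * ‖φ (-s-1-1) u‖)) ≤ 1 * K := by gcongr
    rw [Complex.norm_ofNat]
    linarith
  have bF1 : ∀ u ∈ Set.Icc (0:ℝ) 1, ‖F1 u‖ ≤ K := by
    intro u hu
    have := norm_image_sub_le_of_norm_deriv_le_segment' (fun v hv => (dF1 v hv).hasDerivWithinAt)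
      (fun v hv => bF2 v ⟨hv.1, hv.2.le⟩) u hu
    have h0 : F1 0 = 0 := by rw [hF1]; simp
    rw [h0, sub_zero, sub_zero] at this
    refine this.trans ?_
    nlinarith [hu.2]
  have := norm_image_sub_le_of_norm_deriv_le_segment' (fun v hv => (dF v hv).hasDerivWithinAt)
      (fun v hv => bF1 v ⟨hv.1, hv.2.le⟩) 1 (by norm_num)
  have h0 : F 0 = 0 := by rw [hF]; simp
  rw [h0, sub_zero, sub_zero, mul_one] at this
  have e : tau n s = F 1 := by
    have e : -(s - 1) = 1 - s := by ring
    unfold tau ez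
    rw [e, hF, hφ, hx]
    push_cast
    simp
  rw [e]
  exact this

lemma tau_bound' (n : ℕ) (s : ℂ) (hs : 0 < s.re) (hs1 : s ≠ 1) :
    ‖tau n s‖ ≤ ‖s‖ * ‖s + 1‖ * (((n:ℝ) + 1) ^ 2)⁻¹ := by
  refine (tau_bound n s hs hs1).trans ?_
  gcongr
  rw [← Real.rpow_natCast, ← Real.rpow_neg (by positivity)]
  apply Real.rpow_le_rpow_of_exponent_le
  · have : (0:ℝ) ≤ n := by positivity
    linarith
  · push_cast; linarith

lemma summable_sq : Summable (fun n : ℕ => (((n:ℝ) + 1) ^ 2)⁻¹) := by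
  have := (summable_nat_add_iff 1).2 (Real.summable_nat_pow_inv.2 (by norm_num : 1 < 2))
  simpa using this

lemma summable_tau (s : ℂ) (hs : 0 < s.re) (hs1 : s ≠ 1) : Summable (fun n => tau n s) :=
  Summable.of_norm_bounded (summable_sq.mul_left (‖s‖ * ‖s + 1‖)) (fun n => tau_bound' n s hs hs1)

lemma tail_sq (p : ℕ) : ∑' n : ℕ, ((((p + n : ℕ):ℝ) + 1) ^ 2)⁻¹ ≤ 2 / ((p:ℝ) + 1) := by
  have hs : Summable (fun n : ℕ => ((((p + n : ℕ):ℝ) + 1) ^ 2)⁻¹) := by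
    have := (summable_nat_add_iff p).2 summable_sq
    simpa [add_comm] using this
  apply hs.tsum_le_of_sum_range_le
  intro k
  have : ∑ n ∈ Finset.range k, ((((p + n : ℕ):ℝ) + 1) ^ 2)⁻¹ ≤ 2 / ((p:ℝ) + 1) - 2 / ((p:ℝ) + k + 1) := by
    induction k with
    | zero => simp
    | succ k ih =>
      rw [Finset.sum_range_succ]
      have : ((((p + k : ℕ):ℝ) + 1) ^ 2)⁻¹ ≤ 2 / ((p:ℝ) + k + 1) - 2 / ((p:ℝ) + (k + 1 : ℕ) + 1) := by
        push_cast
        rw [div_sub_div _ _ (by positivity) (by positivity), inv_eq_one_div,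
          div_le_div_iff₀ (by positivity) (by positivity)]
        have : (0:ℝ) ≤ p + k := by positivity
        nlinarith
      linarith
  refine this.trans ?_
  have : 0 ≤ 2 / ((p:ℝ) + k + 1) := by positivity
  linarith

lemma Ph_tsum (p : ℕ) (s : ℂ) (hs : 0 < s.re) (hs1 : s ≠ 1) :
    Ph 0 s + ∑' n, tau n s = Ph p s + ∑' n, tau (p+n) s := by
  have h := Ph_add 0 p s hs1
  have h2 := (summable_tau s hs hs1).sum_add_tsum_nat_add p
  simp only [zero_add] at h
  rw [h, ← h2]
  simp only [add_comm p]
  ring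

lemma tendsto_ez (s : ℂ) (hs : 0 < s.re) : Tendsto (fun n => ez n s) atTop (nhds 0) := by
  rw [tendsto_zero_iff_norm_tendsto_zero]
  simp_rw [norm_ez]
  exact (tendsto_rpow_neg_atTop hs).comp
    (tendsto_atTop_add_const_right _ _ tendsto_natCast_atTop_atTop)

lemma zeta_re_gt_one (s : ℂ) (hs : 1 < s.re) : HasSum (fun n => ez n s) (riemannZeta s) := by
  have h := zeta_eq_tsum_one_div_nat_add_one_cpow hs
  have e : ∀ n : ℕ, 1 / ((n:ℂ) + 1) ^ s = ez n s := by
    intro n; rw [ez, Complex.cpow_neg]; push_cast; simp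
  simp_rw [e] at h
  rw [h]
  apply Summable.hasSum
  apply Summable.of_norm
  simp_rw [norm_ez]
  have := (summable_nat_add_iff 1).2 (Real.summable_nat_rpow.2 (by linarith : -s.re < -1))
  simpa using this

lemma zeta_formula0 (s : ℂ) (hs : 1 < s.re) :
    riemannZeta s = Ph 0 s + ∑' n, tau n s := by
  have hs1 : s ≠ 1 := by rintro rfl; norm_num at hs
  have t1 : Tendsto (fun p => Ph p s) atTop (nhds (riemannZeta s + 0 / (s-1) + 0 / 2)) := by
    refine (((zeta_re_gt_one s hs).tendsto_sum_nat).add ?_).add ?_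
    · exact (tendsto_ez (s-1) (by simpa using hs)).div_const _
    · exact (tendsto_ez s (by linarith)).div_const _
  have t2 : Tendsto (fun p => Ph p s) atTop (nhds (Ph 0 s + ∑' n, tau n s)) := by
    have : (fun p => Ph p s) = fun p => Ph 0 s + ∑ n ∈ Finset.range p, tau n s := by
      funext p; have := Ph_add 0 p s hs1; simpa using this
    rw [this]
    exact ((summable_tau s (by linarith) hs1).hasSum.tendsto_sum_nat).const_add _
  have := tendsto_nhds_unique t1 t2
  simpa using this

lemma differentiable_ez (n : ℕ) : Differentiable ℂ (ez n) := by
  have h0 : ((n + 1 : ℕ) : ℂ) ≠ 0 := by exact_mod_cast Nat.succ_ne_zero n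
  intro s
  exact (differentiableAt_id.neg).const_cpow (Or.inl h0)

lemma differentiableAt_ez_sub (n : ℕ) (z : ℂ) : DifferentiableAt ℂ (fun s => ez n (s - 1)) z :=
  DifferentiableAt.comp (g := ez n) (f := fun s : ℂ => s - 1) z (differentiable_ez n (z-1))
    (differentiableAt_id.sub_const 1)

lemma zeta_formula (s : ℂ) (hs : 0 < s.re) (him : s.im ≠ 0) (p : ℕ) :
    riemannZeta s = Ph p s + ∑' n, tau (p+n) s := by
  have hs1 : s ≠ 1 := by rintro rfl; simp at him
  rw [← Ph_tsum p s hs hs1]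
  obtain ⟨ε, hε1, hε2⟩ : ∃ ε : ℝ, 0 < ε * s.im ∧ ε * ε = 1 := by
    rcases lt_or_gt_of_ne him with h | h
    · exact ⟨-1, by linarith, by norm_num⟩
    · exact ⟨1, by linarith, by norm_num⟩
  set R : ℝ := ‖s‖ + 4 with hR
  set U : Set ℂ := {z | 0 < z.re} ∩ {z | 0 < ε * z.im} ∩ Metric.ball 0 R with hU
  have hUo : IsOpen U := by
    refine ((isOpen_lt continuous_const Complex.continuous_re).inter
      (isOpen_lt continuous_const (continuous_const.mul Complex.continuous_im))).inter Metric.isOpen_ball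
  have hUc : Convex ℝ U := by
    refine Convex.inter (Convex.inter ?_ ?_) (convex_ball _ _)
    · exact convex_halfSpace_re_gt 0
    · intro x hx y hy a b ha hb hab
      simp only [Set.mem_ofPred_eq] at *
      simp
      have : ε * (a * x.im + b * y.im) = a * (ε * x.im) + b * (ε * y.im) := by ring
      rw [this]
      rcases ha.eq_or_lt with h | h
      · have : b = 1 := by linarith
        rw [this, ← h]; linarith
      · have := mul_pos h hx
        have := mul_nonneg hb hy.le
        linarith
  have hne : ∀ z ∈ U, z ≠ 1 := by
    rintro z hz rfl
    have := hz.1.2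
    simp at this
  have hsU : s ∈ U := ⟨⟨hs, hε1⟩, by simp [hR]⟩
  have hz0 : (2 + ε * I) ∈ U := by
    refine ⟨⟨by simp, ?_⟩, ?_⟩
    · simp [hε2]
    · rw [mem_ball_zero_iff]
      refine (norm_add_le _ _).trans_lt ?_
      have : |ε| = 1 := by
        have : |ε| * |ε| = 1 := by rw [abs_mul_abs_self]; exact hε2
        nlinarith [abs_nonneg ε]
      simp [this, hR]
      linarith [norm_nonneg s]
  have hf : AnalyticOnNhd ℂ riemannZeta U := by
    apply DifferentiableOn.analyticOnNhd _ hUo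
    intro z hz
    exact (differentiableAt_riemannZeta (hne z hz)).differentiableWithinAt
  have hg : AnalyticOnNhd ℂ (fun s => Ph 0 s + ∑' n, tau n s) U := by
    apply DifferentiableOn.analyticOnNhd _ hUo
    apply DifferentiableOn.add
    · intro z hz
      have : z - 1 ≠ 0 := sub_ne_zero.2 (hne z hz)
      unfold Ph
      apply DifferentiableAt.differentiableWithinAt
      have h1 := differentiable_ez
      have h2 : DifferentiableAt ℂ (fun s => ez 0 (s-1)) z := differentiableAt_ez_sub 0 z
      exact ((by simp : DifferentiableAt ℂ (fun s => ∑ n ∈ Finset.range 0, ez n s) z).add 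
        (h2.div (differentiableAt_id.sub_const 1) this)).add ((h1 0 z).div_const 2)
    · apply differentiableOn_tsum_of_summable_norm (summable_sq.mul_left (R * (R + 1))) _ hUo
      · intro n z hz
        refine (tau_bound' n z hz.1.1 (hne z hz)).trans ?_
        have : ‖z‖ ≤ R := (mem_ball_zero_iff.1 hz.2).le
        have : ‖z + 1‖ ≤ R + 1 := (norm_add_le _ _).trans (by simpa using this)
        gcongr
      · intro n z hz
        have : 1 - z ≠ 0 := sub_ne_zero.2 (hne z hz).symm
        apply DifferentiableAt.differentiableWithinAt
        have h1 := differentiable_ez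
        have h2 : ∀ n, DifferentiableAt ℂ (fun s => ez n (s-1)) z := fun n => differentiableAt_ez_sub n z
        exact (((h1 n z).add (h1 (n+1) z)).div_const 2).sub
          (((h2 (n+1)).sub (h2 n)).div (differentiableAt_id.const_sub 1) this)
  refine hf.eqOn_of_preconnected_of_eventuallyEq hg hUc.isPreconnected hz0 ?_ hsU
  have : ∀ᶠ z : ℂ in nhds (2 + ε * I), 1 < z.re := by
    apply (isOpen_lt continuous_const Complex.continuous_re).mem_nhds
    simp
  filter_upwards [this] with z hz
  exact zeta_formula0 z hz

noncomputable def Ac (s₁ : ℂ) (p : ℕ) : ℂ := ∑ n ∈ Finset.range p, ez n s₁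

noncomputable def rc (s₁ : ℂ) (p : ℕ) : ℂ :=
  Ac s₁ p - (riemannZeta s₁ - ez p (s₁ - 1) / (s₁ - 1))

lemma im_ne_of (s₁ : ℂ) (h1 : s₁.re = 1) (h2 : s₁ ≠ 1) : s₁.im ≠ 0 := by
  intro h
  apply h2
  apply Complex.ext <;> simp [h1, h]

lemma rc_bound (s₁ : ℂ) (h1 : s₁.re = 1) (h2 : s₁ ≠ 1) :
    ∃ C : ℝ, 0 < C ∧ ∀ p, ‖rc s₁ p‖ ≤ C * ((p:ℝ) + 1)⁻¹ := by
  refine ⟨1 / 2 + ‖s₁‖ * ‖s₁ + 1‖ * 2, by positivity, fun p => ?_⟩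
  have hre : 0 < s₁.re := by rw [h1]; norm_num
  have hz := zeta_formula s₁ hre (im_ne_of s₁ h1 h2) p
  have e : rc s₁ p = -(ez p s₁ / 2) - ∑' n, tau (p+n) s₁ := by
    rw [rc, hz, Ph, Ac]; ring
  have b1 : ‖ez p s₁ / 2‖ = 1 / 2 * ((p:ℝ) + 1)⁻¹ := by
    rw [norm_div, norm_ez, h1, Real.rpow_neg_one, Complex.norm_ofNat]; ring
  have hs : Summable (fun n : ℕ => ((((p + n : ℕ):ℝ) + 1) ^ 2)⁻¹) := by
    have := (summable_nat_add_iff p).2 summable_sq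
    simpa [add_comm] using this
  have b2 : ‖∑' n, tau (p+n) s₁‖ ≤ ‖s₁‖ * ‖s₁ + 1‖ * (2 / ((p:ℝ) + 1)) := by
    have := tsum_of_norm_bounded (hs.mul_left (‖s₁‖ * ‖s₁ + 1‖)).hasSum
      (fun n => tau_bound' (p+n) s₁ hre h2)
    refine this.trans ?_
    rw [tsum_mul_left]
    gcongr
    exact tail_sq p
  rw [e]
  refine (norm_sub_le _ _).trans ?_
  rw [norm_neg, b1]
  have : (1 / 2 + ‖s₁‖ * ‖s₁ + 1‖ * 2) * ((p:ℝ) + 1)⁻¹ =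
    1 / 2 * ((p:ℝ) + 1)⁻¹ + ‖s₁‖ * ‖s₁ + 1‖ * (2 / ((p:ℝ) + 1)) := by ring
  linarith

lemma norm_ez_s1 (s₁ : ℂ) (h1 : s₁.re = 1) (p : ℕ) : ‖ez p (s₁ - 1)‖ = 1 := by
  rw [norm_ez]; simp [h1]

lemma Ac_bound (s₁ : ℂ) (h1 : s₁.re = 1) (h2 : s₁ ≠ 1) :
    ∃ C : ℝ, 0 < C ∧ ∀ p, ‖Ac s₁ p‖ ≤ C := by
  obtain ⟨C, hC, hr⟩ := rc_bound s₁ h1 h2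
  refine ⟨C + ‖riemannZeta s₁‖ + 1 / ‖s₁ - 1‖, by positivity, fun p => ?_⟩
  have e : Ac s₁ p = rc s₁ p + (riemannZeta s₁ - ez p (s₁ - 1) / (s₁ - 1)) := by rw [rc]; ring
  have h3 : ‖rc s₁ p‖ ≤ C := by
    refine (hr p).trans ?_
    have : ((p:ℝ) + 1)⁻¹ ≤ 1 := by
      apply inv_le_one_of_one_le₀
      have : (0:ℝ) ≤ p := by positivity
      linarith
    nlinarith
  rw [e]
  have h4 : ‖riemannZeta s₁ - ez p (s₁ - 1) / (s₁ - 1)‖ ≤ ‖riemannZeta s₁‖ + 1 / ‖s₁ - 1‖ := by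
    refine (norm_sub_le _ _).trans ?_
    rw [norm_div, norm_ez_s1 s₁ h1]
  refine (norm_add_le _ _).trans ?_
  linarith

lemma summable_ez (s : ℂ) (hs : 1 < s.re) : Summable (fun n => ‖ez n s‖) := by
  simp_rw [norm_ez]
  have := (summable_nat_add_iff 1).2 (Real.summable_nat_rpow.2 (by linarith : -s.re < -1))
  simpa using this

lemma ez_mul (p : ℕ) (a b : ℂ) : ez p a * ez p b = ez p (a + b) := by
  have h0 : ((p + 1 : ℕ) : ℂ) ≠ 0 := by exact_mod_cast Nat.succ_ne_zero p
  rw [ez, ez, ez, ← Complex.cpow_add _ _ h0]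
  congr 1; ring

lemma tsum_antidiag (f : ℕ × ℕ → ℂ) (hf : Summable f) :
    ∑' q, f q = ∑' k : ℕ, ∑ q ∈ Finset.HasAntidiagonal.antidiagonal k, f q := by
  conv_rhs => congr; ext; rw [← Finset.sum_finset_coe, ← tsum_fintype (L := .unconditional _)]
  rw [← Finset.HasAntidiagonal.sigmaAntidiagonalEquivProd.tsum_eq (_ : ℕ × ℕ → ℂ)]
  exact (Finset.HasAntidiagonal.sigmaAntidiagonalEquivProd.summable_iff.mpr hf).tsum_sigma'
    (fun n => (hasSum_fintype _).summable)

lemma double_series (s₁ s₂ : ℂ) (h1 : s₁.re = 1) (h2 : s₁ ≠ 1) (h3 : 3 < s₂.re) :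
    ∑' m : ℕ, ((m : ℂ) + 1) ^ (-s₁) * ∑' n : ℕ, (((m : ℂ) + 1) + ((n : ℂ) + 1)) ^ (-s₂)
      = ∑' p, Ac s₁ p * ez p s₂ := by
  set f : ℕ × ℕ → ℂ := fun q => ez q.1 s₁ * ez (q.1 + q.2 + 1) s₂ with hf
  have hfs : Summable f := by
    have hprod : Summable (fun q : ℕ × ℕ => (((q.1:ℝ) + 1) ^ 2)⁻¹ * (((q.2:ℝ) + 1) ^ 2)⁻¹) :=
      summable_sq.mul_of_nonneg summable_sq (fun n => by positivity) (fun n => by positivity)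
    apply Summable.of_norm_bounded hprod
    rintro ⟨m, n⟩
    rw [hf]
    simp only [norm_mul, norm_ez, h1]
    have hb : (((m + n + 1 : ℕ) : ℝ) + 1) ^ (-s₂.re) ≤ ((m:ℝ) + 1)⁻¹ * (((n:ℝ) + 1) ^ 2)⁻¹ := by
      have hm : (0:ℝ) ≤ m := by positivity
      have hn : (0:ℝ) ≤ n := by positivity
      calc (((m + n + 1 : ℕ) : ℝ) + 1) ^ (-s₂.re) ≤ (((m + n + 1 : ℕ) : ℝ) + 1) ^ (-(3:ℕ):ℝ) := by
            apply Real.rpow_le_rpow_of_exponent_le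
            · push_cast; linarith
            · push_cast; linarith
        _ = ((((m + n + 1 : ℕ) : ℝ) + 1) ^ 3)⁻¹ := by
            rw [Real.rpow_neg (by positivity), Real.rpow_natCast]
        _ ≤ (((m:ℝ) + 1) * ((n:ℝ) + 1) ^ 2)⁻¹ := by
            gcongr
            have : (((m + n + 1 : ℕ) : ℝ) + 1) ^ 3 = (((m + n + 1 : ℕ) : ℝ) + 1) * (((m + n + 1 : ℕ) : ℝ) + 1) ^ 2 := by ring
            rw [this]
            push_cast
            gcongr <;> linarith
        _ = _ := mul_inv _ _
    rw [Real.rpow_neg_one]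
    calc _ ≤ ((m:ℝ) + 1)⁻¹ * (((m:ℝ) + 1)⁻¹ * (((n:ℝ) + 1) ^ 2)⁻¹) := by gcongr
      _ = _ := by rw [← mul_assoc, ← mul_inv, ← sq]
  have e1 : ∑' m : ℕ, ((m : ℂ) + 1) ^ (-s₁) * ∑' n : ℕ, (((m : ℂ) + 1) + ((n : ℂ) + 1)) ^ (-s₂)
      = ∑' q, f q := by
    rw [hfs.tsum_prod]
    refine tsum_congr fun m => ?_
    rw [← tsum_mul_left]
    refine tsum_congr fun n => ?_
    rw [hf]
    simp only [ez]
    push_cast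
    congr 2
    ring
  have e2 : ∑' q, f q = ∑' k, Ac s₁ (k+1) * ez (k+1) s₂ := by
    rw [tsum_antidiag f hfs]
    refine tsum_congr fun k => ?_
    rw [Finset.Nat.sum_antidiagonal_eq_sum_range_succ_mk, Ac, Finset.sum_mul]
    refine Finset.sum_congr rfl fun m hm => ?_
    rw [hf]
    have : m + (k - m) + 1 = k + 1 := by
      have := Finset.mem_range.1 hm; omega
    simp only [this]
  obtain ⟨C, hC, hA⟩ := Ac_bound s₁ h1 h2
  have hsum : Summable (fun p => Ac s₁ p * ez p s₂) := by
    apply Summable.of_norm_bounded ((summable_ez s₂ (by linarith)).mul_left C)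
    intro p
    rw [norm_mul]
    gcongr
    exact hA p
  rw [e1, e2, hsum.tsum_eq_zero_add]
  simp [Ac]

noncomputable def Rf (s₁ s₂ : ℂ) : ℂ := ∑' p, rc s₁ p * ez p s₂

lemma summable_54 : Summable (fun n : ℕ => ((n:ℝ) + 1) ^ (-(5/4) : ℝ)) := by
  have := (summable_nat_add_iff 1).2 (Real.summable_nat_rpow.2 (by norm_num : (-(5/4) : ℝ) < -1))
  simpa using this

lemma rc_term_bound (s₁ : ℂ) (C : ℝ) (hC : 0 < C) (hr : ∀ p, ‖rc s₁ p‖ ≤ C * ((p:ℝ) + 1)⁻¹)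
    (s : ℂ) (hs : 1/4 ≤ s.re) (p : ℕ) : ‖rc s₁ p * ez p s‖ ≤ C * ((p:ℝ) + 1) ^ (-(5/4) : ℝ) := by
  rw [norm_mul, norm_ez]
  have hp : (0:ℝ) < p + 1 := by positivity
  have hp1 : (1:ℝ) ≤ p + 1 := by
    have : (0:ℝ) ≤ p := by positivity
    linarith
  calc _ ≤ (C * ((p:ℝ) + 1)⁻¹) * ((p:ℝ) + 1) ^ (-(1/4) : ℝ) := by
        gcongr
        exact hr p
    _ = _ := by
        rw [mul_assoc, ← Real.rpow_neg_one, ← Real.rpow_add hp]; norm_num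

lemma Z_formula_gt (s₁ s₂ : ℂ) (h1 : s₁.re = 1) (h2 : s₁ ≠ 1) (h3 : 3 < s₂.re) :
    ∑' p, Ac s₁ p * ez p s₂ =
      riemannZeta s₁ * riemannZeta s₂ - riemannZeta (s₁ + s₂ - 1) / (s₁ - 1) + Rf s₁ s₂ := by
  obtain ⟨C, hC, hr⟩ := rc_bound s₁ h1 h2
  have a1 := (zeta_re_gt_one s₂ (by linarith)).mul_left (riemannZeta s₁)
  have a2 := (zeta_re_gt_one (s₁ + s₂ - 1) (by simp [h1]; linarith)).div_const (s₁ - 1)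
  have a3 : HasSum (fun p => rc s₁ p * ez p s₂) (Rf s₁ s₂) := by
    apply Summable.hasSum
    exact Summable.of_norm_bounded (summable_54.mul_left C)
      (rc_term_bound s₁ C hC hr s₂ (by linarith))
  have := ((a1.sub a2).add a3).tsum_eq
  rw [← this]
  refine tsum_congr fun p => ?_
  have e : s₁ + s₂ - 1 = (s₁ - 1) + s₂ := by ring
  rw [e, ← ez_mul, rc]
  ring

lemma Z_formula (Z : ℂ → ℂ → ℂ)
    (hZa : AnalyticOnNhd ℂ (fun p : ℂ × ℂ => Z p.1 p.2) {p | ¬ zeta2Sing p})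
    (hZs : ∀ s₁ s₂ : ℂ, 1 < s₂.re → 2 < s₁.re + s₂.re →
      Z s₁ s₂ = ∑' m : ℕ, ((m : ℂ) + 1) ^ (-s₁)
        * ∑' n : ℕ, (((m : ℂ) + 1) + ((n : ℂ) + 1)) ^ (-s₂))
    (s₁ : ℂ) (h1 : s₁.re = 1) (h2 : s₁ ≠ 1) (s₂ : ℂ) (hre : 1/4 < s₂.re) (him : |s₁.im| < s₂.im) :
    Z s₁ s₂ = riemannZeta s₁ * riemannZeta s₂ - riemannZeta (s₁ + s₂ - 1) / (s₁ - 1) + Rf s₁ s₂ := by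
  obtain ⟨C, hC, hr⟩ := rc_bound s₁ h1 h2
  set U : Set ℂ := {z | 1/4 < z.re} ∩ {z | |s₁.im| < z.im} with hU
  have hUo : IsOpen U := (isOpen_lt continuous_const Complex.continuous_re).inter
      (isOpen_lt continuous_const Complex.continuous_im)
  have hUc : Convex ℝ U := (convex_halfSpace_re_gt _).inter (convex_halfSpace_im_gt _)
  have him1 : ∀ z ∈ U, 0 < z.im := fun z hz => lt_of_le_of_lt (abs_nonneg _) hz.2
  have him2 : ∀ z ∈ U, 0 < (s₁ + z).im := fun z hz => by
    have := hz.2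
    have h' := neg_abs_le s₁.im
    simp only [Set.mem_ofPred_eq] at this
    rw [Complex.add_im]; linarith
  have hns : ∀ z ∈ U, ¬ zeta2Sing (s₁, z) := by
    intro z hz h
    have i1 := him1 z hz
    have i2 := him2 z hz
    rcases h with h | h | h | ⟨k, h⟩
    · simp only at h; rw [h] at i1; simp at i1
    · simp only at h; rw [h] at i2; simp at i2
    · simp only at h; rw [h] at i2; simp at i2
    · simp only at h; rw [h] at i2; simp at i2
  have hf : AnalyticOnNhd ℂ (fun z => Z s₁ z) U := by
    apply DifferentiableOn.analyticOnNhd _ hUo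
    intro z hz
    have hd := (hZa (s₁, z) (hns z hz)).differentiableAt
    have : DifferentiableAt ℂ (fun w : ℂ => (s₁, w)) z := by fun_prop
    exact (DifferentiableAt.comp (g := fun p : ℂ × ℂ => Z p.1 p.2) (f := fun w : ℂ => (s₁, w)) z hd this).differentiableWithinAt
  have hg : AnalyticOnNhd ℂ (fun z => riemannZeta s₁ * riemannZeta z - riemannZeta (s₁ + z - 1) / (s₁ - 1) + Rf s₁ z) U := by
    apply DifferentiableOn.analyticOnNhd _ hUo
    apply DifferentiableOn.add
    · intro z hz
      apply DifferentiableAt.differentiableWithinAt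
      have d1 : DifferentiableAt ℂ riemannZeta z := differentiableAt_riemannZeta (by
        rintro rfl; have := him1 _ hz; simp at this)
      have d2 : DifferentiableAt ℂ riemannZeta (s₁ + z - 1) := differentiableAt_riemannZeta (by
        intro h
        have := him2 _ hz
        have e : s₁ + z = 2 := by linear_combination h
        rw [e] at this; simp at this)
      have d3 : DifferentiableAt ℂ (fun z => riemannZeta (s₁ + z - 1)) z :=
        DifferentiableAt.comp (g := riemannZeta) (f := fun z : ℂ => s₁ + z - 1) z d2 (by fun_prop)
      exact (d1.const_mul _).sub (d3.div_const _)
    · unfold Rf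
      apply differentiableOn_tsum_of_summable_norm (summable_54.mul_left C) _ hUo
      · intro n z hz
        exact rc_term_bound s₁ C hC hr z (le_of_lt hz.1) n
      · intro n
        exact ((differentiable_ez n).const_mul _).differentiableOn
  set z0 : ℂ := 4 + (|s₁.im| + 1 : ℝ) * I with hz0
  have hz0U : z0 ∈ U := by
    constructor
    · simp [hz0]; norm_num
    · simp [hz0]
  refine hf.eqOn_of_preconnected_of_eventuallyEq hg hUc.isPreconnected hz0U ?_ ⟨hre, him⟩
  have : ∀ᶠ z : ℂ in nhds z0, 3 < z.re := by
    apply (isOpen_lt continuous_const Complex.continuous_re).mem_nhds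
    simp [hz0]; norm_num
  filter_upwards [this] with z hz
  rw [hZs s₁ z (by linarith) (by rw [h1]; linarith), double_series s₁ z h1 h2 hz,
    Z_formula_gt s₁ z h1 h2 hz]

lemma zeta_tail (s : ℂ) (hs : s.re = 1/2) (a : ℝ) (ha : 1 ≤ a) (him : a ^ 4 / 2 ≤ |s.im|)
    (hn : ‖s‖ ≤ 4 * a ^ 4) (p : ℕ) (hp1 : 8 * a ^ 4 ≤ p + 1) (hp2 : (p:ℝ) ≤ 9 * a ^ 4) :
    ‖riemannZeta s - ∑ n ∈ Finset.range p, ez n s‖ ≤ 625 / a := by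
  have ha0 : 0 < a := by linarith
  have ha4 : 1 ≤ a ^ 4 := one_le_pow₀ ha
  have ha6 : a ^ 4 ≤ a ^ 6 := pow_le_pow_right₀ ha (by norm_num)
  have him0 : s.im ≠ 0 := by
    intro h; rw [h] at him; simp at him; linarith
  have hs1 : s ≠ 1 := by rintro rfl; simp at him0
  set k : ℕ := ⌈a ^ 6⌉₊ with hk
  have hk1 : a ^ 6 ≤ k := Nat.le_ceil _
  have hk2 : (k:ℝ) < a ^ 6 + 1 := Nat.ceil_lt_add_one (by positivity)
  set q := p + k with hq
  set X : ℝ := (q:ℝ) + 1 with hX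
  have hqc : (q:ℝ) = p + k := by rw [hq]; push_cast; ring
  have hp0 : (0:ℝ) ≤ p := by positivity
  have hX1 : a ^ 6 ≤ X := by rw [hX, hqc]; linarith
  have hX2 : X ≤ 16 * a ^ 6 := by rw [hX, hqc]; linarith
  have hX0 : 0 < X := lt_of_lt_of_le (by positivity) hX1
  have sX1 : a ^ 3 ≤ Real.sqrt X := by
    apply Real.le_sqrt_of_sq_le; calc (a^3)^2 = a ^ 6 := by ring
      _ ≤ _ := hX1
  have sX2 : Real.sqrt X ≤ 4 * a ^ 3 := by
    apply Real.sqrt_le_iff.2 ⟨by positivity, ?_⟩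
    calc X ≤ _ := hX2
      _ = _ := by ring
  have ns : a ^ 4 / 2 ≤ ‖s‖ := him.trans (Complex.abs_im_le_norm s)
  have ns1 : a ^ 4 / 2 ≤ ‖s - 1‖ := by
    have := Complex.abs_im_le_norm (s - 1)
    simp at this
    linarith
  have ns2 : ‖s + 1‖ ≤ 5 * a ^ 4 := by
    refine (norm_add_le _ _).trans ?_
    simp; linarith
  have hz := zeta_formula s (by rw [hs]; norm_num) him0 q
  have e : riemannZeta s - ∑ n ∈ Finset.range p, ez n s =
      ∑ n ∈ Finset.range k, ez (p + n) s + ez q (s-1) / (s-1) + ez q s / 2 + ∑' n, tau (q+n) s := by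
    rw [hz, Ph, hq, Finset.sum_range_add]; ring
  have b1 : ‖∑ n ∈ Finset.range k, ez (p + n) s‖ ≤ 576 / a := by
    refine (kl_bound s hs p k (by linarith)).trans ?_
    have : (p:ℝ) + k + 1 = X := by rw [hX, hqc]
    rw [this]
    calc 72 * Real.sqrt X / ‖s‖ ≤ 72 * (4 * a ^ 3) / (a ^ 4 / 2) := by gcongr
      _ = 576 / a := by field_simp; norm_num
  have b2 : ‖ez q (s-1) / (s-1)‖ ≤ 8 / a := by
    rw [norm_div, norm_ez]
    have : (-(s-1).re) = 1/2 := by simp [hs]; norm_num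
    rw [this, ← Real.sqrt_eq_rpow]
    calc Real.sqrt X / ‖s-1‖ ≤ (4 * a ^ 3) / (a ^ 4 / 2) := by gcongr
      _ = 8 / a := by field_simp; norm_num
  have a3 : a ≤ a ^ 3 := by
    calc a = a ^ 1 := by ring
      _ ≤ _ := pow_le_pow_right₀ ha (by norm_num)
  have b3 : ‖ez q s / 2‖ ≤ 1 / a := by
    rw [norm_div, norm_ez_half q s hs, Complex.norm_ofNat]
    have : (Real.sqrt X)⁻¹ ≤ a⁻¹ := by
      gcongr; exact a3.trans sX1
    have h' : 0 < a⁻¹ := by positivity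
    rw [one_div]
    linarith
  have hsm : Summable (fun n : ℕ => ((((q + n : ℕ):ℝ) + 1) ^ 2)⁻¹) := by
    have := (summable_nat_add_iff q).2 summable_sq
    simpa [add_comm] using this
  have b4 : ‖∑' n, tau (q+n) s‖ ≤ 40 / a := by
    have := tsum_of_norm_bounded (f := fun n => tau (q+n) s)
      (hsm.mul_left (‖s‖ * ‖s + 1‖ * (Real.sqrt X)⁻¹)).hasSum
      (fun n => by
        refine (tau_bound (q+n) s (by rw [hs]; norm_num) hs1).trans ?_
        rw [mul_assoc (‖s‖ * ‖s+1‖)]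
        gcongr
        have hpos : (0:ℝ) < ((q+n:ℕ):ℝ) + 1 := by positivity
        rw [hs, neg_add, Real.rpow_add hpos, Real.rpow_neg hpos.le, ← Real.sqrt_eq_rpow,
          Real.rpow_neg hpos.le, Real.rpow_ofNat]
        gcongr
        rw [hX]; push_cast
        have : (0:ℝ) ≤ n := by positivity
        linarith)
    refine this.trans ?_
    rw [tsum_mul_left]
    calc _ ≤ (4 * a ^ 4) * (5 * a ^ 4) * (a ^ 3)⁻¹ * (2 / a ^ 6) := by
          gcongr
          exact (tail_sq q).trans (by gcongr)
      _ = 40 / a := by field_simp; norm_num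
  rw [e]
  have t1 := norm_add_le (∑ n ∈ Finset.range k, ez (p + n) s + ez q (s-1) / (s-1) + ez q s / 2) (∑' n, tau (q+n) s)
  have t2 := norm_add_le (∑ n ∈ Finset.range k, ez (p + n) s + ez q (s-1) / (s-1)) (ez q s / 2)
  have t3 := norm_add_le (∑ n ∈ Finset.range k, ez (p + n) s) (ez q (s-1) / (s-1))
  have : 625 / a = 576 / a + 8 / a + 1 / a + 40 / a := by ring
  linarith

lemma Rf_tail (s₁ : ℂ) (h1 : s₁.re = 1) (h2 : s₁ ≠ 1) :
    ∃ K : ℝ, 0 < K ∧ ∀ (s : ℂ), s.re = 1/2 → ∀ (a : ℝ), 1 ≤ a → ∀ (p : ℕ), 8 * a ^ 4 ≤ p + 1 →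
    ‖Rf s₁ s - ∑ n ∈ Finset.range p, rc s₁ n * ez n s‖ ≤ K / a := by
  obtain ⟨C, hC, hr⟩ := rc_bound s₁ h1 h2
  set S : ℝ := ∑' n : ℕ, ((n:ℝ) + 1) ^ (-(5/4) : ℝ) with hS
  have hS0 : 0 ≤ S := tsum_nonneg fun n => by positivity
  refine ⟨C * (S + 1), by positivity, ?_⟩
  intro s hs a ha p hp
  have ha0 : 0 < a := by linarith
  have hsum : Summable (fun n => rc s₁ n * ez n s) := Summable.of_norm_bounded (summable_54.mul_left C)
      (rc_term_bound s₁ C hC hr s (by rw [hs]; norm_num))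
  have e : Rf s₁ s - ∑ n ∈ Finset.range p, rc s₁ n * ez n s = ∑' n, rc s₁ (n+p) * ez (n+p) s := by
    rw [Rf, ← hsum.sum_add_tsum_nat_add p]; ring
  rw [e]
  have hs54 : Summable (fun n : ℕ => (((n+p:ℕ):ℝ) + 1) ^ (-(5/4) : ℝ)) := (summable_nat_add_iff p).2 summable_54
  have key := tsum_of_norm_bounded (f := fun n => rc s₁ (n+p) * ez (n+p) s)
      (hs54.mul_left (C * a⁻¹)).hasSum (fun n => by
        rw [norm_mul, norm_ez, hs]
        have hpos : (0:ℝ) < ((n+p:ℕ):ℝ) + 1 := by positivity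
        have hge : a ^ 4 ≤ ((n+p:ℕ):ℝ) + 1 := by
          push_cast
          have : (0:ℝ) ≤ n := by positivity
          have : 0 < a ^ 4 := by positivity
          linarith
        have h14 : (((n+p:ℕ):ℝ) + 1) ^ (-(1/4) : ℝ) ≤ a⁻¹ := by
          calc (((n+p:ℕ):ℝ) + 1) ^ (-(1/4) : ℝ) ≤ (a ^ 4) ^ (-(1/4) : ℝ) :=
                Real.rpow_le_rpow_of_nonpos (by positivity) hge (by norm_num)
            _ = a⁻¹ := by
                rw [← Real.rpow_natCast, ← Real.rpow_mul ha0.le, ← Real.rpow_neg_one]; norm_num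
        calc _ ≤ (C * (((n+p:ℕ):ℝ) + 1)⁻¹) * (((n+p:ℕ):ℝ) + 1) ^ (-(1/2) : ℝ) := by
              gcongr; exact hr _
          _ = C * (((n+p:ℕ):ℝ) + 1) ^ (-(1/4) : ℝ) * (((n+p:ℕ):ℝ) + 1) ^ (-(5/4) : ℝ) := by
              rw [mul_assoc, mul_assoc, ← Real.rpow_neg_one, ← Real.rpow_add hpos, ← Real.rpow_add hpos]
              norm_num
          _ ≤ _ := by gcongr)
  refine key.trans ?_
  rw [tsum_mul_left]
  have hle : ∑' n : ℕ, (((n+p:ℕ):ℝ) + 1) ^ (-(5/4) : ℝ) ≤ S := by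
    rw [hS, ← summable_54.sum_add_tsum_nat_add p]
    have : 0 ≤ ∑ n ∈ Finset.range p, ((n:ℝ) + 1) ^ (-(5/4) : ℝ) := Finset.sum_nonneg fun n _ => by positivity
    linarith
  calc _ ≤ C * a⁻¹ * S := by gcongr
    _ ≤ C * a⁻¹ * (S + 1) := by gcongr; linarith
    _ = _ := by rw [div_eq_mul_inv]; ring

lemma Z_approx (Z : ℂ → ℂ → ℂ)
    (hZa : AnalyticOnNhd ℂ (fun p : ℂ × ℂ => Z p.1 p.2) {p | ¬ zeta2Sing p})
    (hZs : ∀ s₁ s₂ : ℂ, 1 < s₂.re → 2 < s₁.re + s₂.re →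
      Z s₁ s₂ = ∑' m : ℕ, ((m : ℂ) + 1) ^ (-s₁)
        * ∑' n : ℕ, (((m : ℂ) + 1) + ((n : ℂ) + 1)) ^ (-s₂))
    (s₁ : ℂ) (h1 : s₁.re = 1) (h2 : s₁ ≠ 1) :
    ∃ K : ℝ, 0 < K ∧ ∀ (a : ℝ), 1 ≤ a → 2 * |s₁.im| + 1 ≤ a ^ 4 → ∀ (p : ℕ), 8 * a ^ 4 ≤ p + 1 →
      (p:ℝ) ≤ 9 * a ^ 4 → ∀ t : ℝ, a ^ 4 ≤ t → t ≤ 2 * a ^ 4 →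
      ‖Z s₁ ((1/2 : ℂ) + t * I) - ∑ n ∈ Finset.range p, Ac s₁ n * ez n ((1/2 : ℂ) + t * I)‖ ≤ K / a := by
  obtain ⟨K, hK, hR⟩ := Rf_tail s₁ h1 h2
  refine ⟨‖riemannZeta s₁‖ * 625 + 625 / ‖s₁ - 1‖ + K, by positivity, ?_⟩
  intro a ha haT p hp1 hp2 t ht1 ht2
  have ha0 : 0 < a := by linarith
  set s : ℂ := (1/2 : ℂ) + t * I with hs
  have hsre : s.re = 1/2 := by rw [hs]; simp
  have hsim : s.im = t := by rw [hs]; simp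
  have habs := abs_nonneg s₁.im
  have hl := neg_abs_le s₁.im
  have hu := le_abs_self s₁.im
  have hs'im : (s₁ + s - 1).im = s₁.im + t := by simp [hsim]
  have hs're : (s₁ + s - 1).re = 1/2 := by simp [hsre, h1]
  have n1 : ‖s‖ ≤ 4 * a ^ 4 := by
    refine (Complex.norm_le_abs_re_add_abs_im s).trans ?_
    rw [hsre, hsim, abs_of_pos (by norm_num), abs_of_pos (by linarith)]
    linarith
  have n2 : ‖s₁ + s - 1‖ ≤ 4 * a ^ 4 := by
    refine (Complex.norm_le_abs_re_add_abs_im _).trans ?_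
    rw [hs're, hs'im, abs_of_pos (by norm_num), abs_of_pos (by linarith)]
    linarith
  have z1 := zeta_tail s hsre a ha (by rw [hsim, abs_of_pos (by linarith)]; linarith) n1 p hp1 hp2
  have z2 := zeta_tail (s₁ + s - 1) hs're a ha (by rw [hs'im, abs_of_pos (by linarith)]; linarith) n2 p hp1 hp2
  have z3 := hR s hsre a ha p hp1
  have hZ := Z_formula Z hZa hZs s₁ h1 h2 s (by rw [hsre]; norm_num) (by rw [hsim]; linarith)
  have e : Z s₁ s - ∑ n ∈ Finset.range p, Ac s₁ n * ez n s =
      riemannZeta s₁ * (riemannZeta s - ∑ n ∈ Finset.range p, ez n s)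
      - (riemannZeta (s₁ + s - 1) - ∑ n ∈ Finset.range p, ez n (s₁ + s - 1)) / (s₁ - 1)
      + (Rf s₁ s - ∑ n ∈ Finset.range p, rc s₁ n * ez n s) := by
    have : ∑ n ∈ Finset.range p, Ac s₁ n * ez n s = riemannZeta s₁ * ∑ n ∈ Finset.range p, ez n s
      - (∑ n ∈ Finset.range p, ez n (s₁ + s - 1)) / (s₁ - 1) + ∑ n ∈ Finset.range p, rc s₁ n * ez n s := by
      rw [Finset.mul_sum, Finset.sum_div, ← Finset.sum_sub_distrib, ← Finset.sum_add_distrib]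
      refine Finset.sum_congr rfl fun n _ => ?_
      have e : s₁ + s - 1 = (s₁ - 1) + s := by ring
      rw [e, ← ez_mul n (s₁ - 1) s, rc]
      ring
    rw [this, hZ]
    ring
  rw [e]
  refine (norm_add_le _ _).trans ?_
  refine (add_le_add (norm_sub_le _ _) z3).trans ?_
  rw [norm_mul, norm_div]
  calc _ ≤ ‖riemannZeta s₁‖ * (625 / a) + (625 / a) / ‖s₁ - 1‖ + K / a := by gcongr
    _ = _ := by ring

lemma norm_sq_add_le (x r : ℂ) : |‖x + r‖ ^ 2 - ‖x‖ ^ 2| ≤ ‖r‖ * (2 * ‖x‖ + ‖r‖) := by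
  have h1 : ‖x + r‖ ≤ ‖x‖ + ‖r‖ := norm_add_le _ _
  have h2 : ‖x‖ ≤ ‖x + r‖ + ‖r‖ := by
    have := norm_sub_le (x + r) r
    simpa using this
  have a := norm_nonneg x
  have b := norm_nonneg r
  have c := norm_nonneg (x + r)
  rw [abs_le]
  constructor
  · by_cases h : ‖r‖ ≤ ‖x‖
    · nlinarith
    · nlinarith
  · nlinarith

lemma ez_one (n : ℕ) : ez n 1 = ((n:ℂ) + 1)⁻¹ := by
  rw [ez, Complex.cpow_neg_one]; push_cast; rfl

lemma harmonic_bd (p : ℕ) (hp : 1 ≤ p) :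
    |∑ n ∈ Finset.range p, ((n:ℝ) + 1)⁻¹ - Real.log p| ≤ 1 := by
  have e : ∑ n ∈ Finset.range p, ((n:ℝ) + 1)⁻¹ = ((harmonic p : ℚ) : ℝ) := by
    rw [harmonic]; push_cast; rfl
  rw [e, abs_le]
  have h1 := log_add_one_le_harmonic p
  have h2 := harmonic_le_one_add_log p
  have h3 : Real.log p ≤ Real.log (p+1:ℕ) := by
    apply Real.log_le_log
    · exact_mod_cast hp
    · push_cast; linarith
  constructor <;> linarith

lemma diag (s₁ : ℂ) (h1 : s₁.re = 1) (h2 : s₁ ≠ 1) :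
    ∃ K, 0 < K ∧ ∀ p : ℕ, 1 ≤ p → |∑ n ∈ Finset.range p, ‖Ac s₁ n‖ ^ 2 / ((n:ℝ) + 1)
      - ((‖s₁ - 1‖ ^ 2)⁻¹ + ‖riemannZeta s₁‖ ^ 2) * Real.log p| ≤ K := by
  obtain ⟨C, hC, hr⟩ := rc_bound s₁ h1 h2
  obtain ⟨B, hB, hA⟩ := Ac_bound s₁ h1 h2
  set u := riemannZeta s₁ with hu
  set w := s₁ - 1 with hw
  have hw0 : w ≠ 0 := sub_ne_zero.2 h2
  have hwn : 0 < ‖w‖ := norm_pos_iff.2 hw0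
  set c := (‖w‖ ^ 2)⁻¹ + ‖u‖ ^ 2 with hc
  have hc0 : 0 ≤ c := by positivity
  set M := ‖u‖ + 1 / ‖w‖ with hM
  have hM0 : 0 ≤ M := by positivity
  set L := C * (2 * M + C) with hL
  have hL0 : 0 ≤ L := by positivity
  -- main term
  have key : ∀ n : ℕ, |‖Ac s₁ n‖ ^ 2 / ((n:ℝ) + 1) - (c * ((n:ℝ) + 1)⁻¹
      - 2 * (u * (starRingEnd ℂ) (ez n s₁ / w)).re)| ≤ L * (((n:ℝ) + 1) ^ 2)⁻¹ := by
    intro n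
    have hn : (0:ℝ) < (n:ℝ) + 1 := by positivity
    set v := ez n w / w with hv
    have hvn : ‖v‖ = 1 / ‖w‖ := by rw [hv, norm_div, hw, norm_ez_s1 s₁ h1]
    have e1 : Ac s₁ n = (u - v) + rc s₁ n := by rw [rc]; ring
    have e2 : ‖u - v‖ ^ 2 = c - 2 * (u * (starRingEnd ℂ) v).re := by
      rw [← Complex.normSq_eq_norm_sq, Complex.normSq_sub, Complex.normSq_eq_norm_sq,
        Complex.normSq_eq_norm_sq, hvn, hc]
      simp; ring
    have e3 : ez n s₁ / w = v * (((n:ℝ) + 1)⁻¹ : ℝ) := by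
      have : s₁ = w + 1 := by rw [hw]; ring
      conv_lhs => rw [this, ← ez_mul, ez_one]
      rw [hv]; push_cast; ring
    have e4 : (u * (starRingEnd ℂ) (ez n s₁ / w)).re
        = (u * (starRingEnd ℂ) v).re * ((n:ℝ) + 1)⁻¹ := by
      rw [e3, map_mul, Complex.conj_ofReal, ← mul_assoc, Complex.re_mul_ofReal]
    have e5 : ‖Ac s₁ n‖ ^ 2 / ((n:ℝ) + 1) - (c * ((n:ℝ) + 1)⁻¹
      - 2 * (u * (starRingEnd ℂ) (ez n s₁ / w)).re) =
        (‖(u - v) + rc s₁ n‖ ^ 2 - ‖u - v‖ ^ 2) * ((n:ℝ) + 1)⁻¹ := by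
      rw [e4, e2, e1]; ring
    rw [e5, abs_mul, abs_of_pos (inv_pos.2 hn)]
    have hi0 : 0 < ((n:ℝ) + 1)⁻¹ := by positivity
    have hi1 : ((n:ℝ) + 1)⁻¹ ≤ 1 := inv_le_one_of_one_le₀ (by linarith [Nat.cast_nonneg (α := ℝ) n])
    have b1 := norm_sq_add_le (u - v) (rc s₁ n)
    have b2 : ‖u - v‖ ≤ M := (norm_sub_le _ _).trans (by rw [hvn])
    have b3 : ‖rc s₁ n‖ ≤ C := (hr n).trans (by nlinarith)
    calc _ ≤ ‖rc s₁ n‖ * (2 * ‖u - v‖ + ‖rc s₁ n‖) * ((n:ℝ) + 1)⁻¹ := by gcongr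
      _ ≤ (C * ((n:ℝ) + 1)⁻¹) * (2 * M + C) * ((n:ℝ) + 1)⁻¹ := by
        gcongr
        exact hr n
      _ = _ := by rw [hL]; field_simp
  have hS : ∀ p : ℕ, ∑ n ∈ Finset.range p, (((n:ℝ) + 1) ^ 2)⁻¹ ≤ 2 := by
    intro p
    have h := tail_sq 0
    have h' := summable_sq.sum_le_tsum (Finset.range p) (fun n _ => by positivity)
    simp only [Nat.cast_zero, zero_add, div_one] at h
    linarith
  refine ⟨2 * L + c + 2 * ‖u‖ * (B / ‖w‖) + 1, by positivity, fun p hp => ?_⟩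
  have s1 : |∑ n ∈ Finset.range p, (‖Ac s₁ n‖ ^ 2 / ((n:ℝ) + 1) - (c * ((n:ℝ) + 1)⁻¹
      - 2 * (u * (starRingEnd ℂ) (ez n s₁ / w)).re))| ≤ 2 * L := by
    refine (Finset.abs_sum_le_sum_abs _ _).trans ?_
    refine (Finset.sum_le_sum (fun n _ => key n)).trans ?_
    rw [← Finset.mul_sum]
    nlinarith [hS p]
  rw [Finset.sum_sub_distrib, Finset.sum_sub_distrib, ← Finset.mul_sum, ← Finset.mul_sum] at s1
  have s2 : ∑ n ∈ Finset.range p, (u * (starRingEnd ℂ) (ez n s₁ / w)).re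
      = (u * (starRingEnd ℂ) (Ac s₁ p / w)).re := by
    rw [← Complex.re_sum, ← Finset.mul_sum, ← map_sum, ← Finset.sum_div, Ac]
  have s3 : |(u * (starRingEnd ℂ) (Ac s₁ p / w)).re| ≤ ‖u‖ * (B / ‖w‖) := by
    refine (Complex.abs_re_le_norm _).trans ?_
    rw [norm_mul, RCLike.norm_conj, norm_div]
    gcongr
    exact hA p
  have s4 := harmonic_bd p hp
  have s5 : |c * (∑ n ∈ Finset.range p, ((n:ℝ) + 1)⁻¹) - c * Real.log p| ≤ c := by
    rw [← mul_sub, abs_mul, abs_of_nonneg hc0]; nlinarith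
  rw [s2] at s1
  rw [abs_le] at *
  constructor <;> linarith [s1.1, s1.2, s3.1, s3.2, s5.1, s5.2]

lemma Z_cont (Z : ℂ → ℂ → ℂ)
    (hZa : AnalyticOnNhd ℂ (fun p : ℂ × ℂ => Z p.1 p.2) {p | ¬ zeta2Sing p})
    (s₁ : ℂ)
    (hsing : ∀ t₂ : ℝ, 2 ≤ t₂ → ¬ zeta2Sing (s₁, ((1/2 : ℂ) + t₂ * Complex.I))) :
    ContinuousOn (fun t : ℝ => ‖Z s₁ ((1/2 : ℂ) + t * Complex.I)‖ ^ 2) (Set.Ici 2) := by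
  have h : ContinuousOn (fun t : ℝ => Z s₁ ((1/2 : ℂ) + t * Complex.I)) (Set.Ici 2) := by
    have hg : Continuous (fun t : ℝ => ((s₁, (1/2 : ℂ) + t * Complex.I) : ℂ × ℂ)) := by fun_prop
    exact hZa.continuousOn.comp hg.continuousOn (fun t ht => hsing t ht)
  exact h.norm.pow 2

lemma Z_int (f : ℝ → ℝ) (hf : ContinuousOn f (Set.Ici 2)) (a b : ℝ) (ha : 2 ≤ a) (hb : 2 ≤ b) :
    IntervalIntegrable f MeasureTheory.volume a b := by
  apply ContinuousOn.intervalIntegrable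
  apply hf.mono
  intro x hx
  rw [Set.mem_uIcc] at hx
  rw [Set.mem_Ici]
  rcases hx with hx | hx <;> linarith [hx.1, hx.2]

lemma block (Z : ℂ → ℂ → ℂ)
    (hZa : AnalyticOnNhd ℂ (fun p : ℂ × ℂ => Z p.1 p.2) {p | ¬ zeta2Sing p})
    (hZs : ∀ s₁ s₂ : ℂ, 1 < s₂.re → 2 < s₁.re + s₂.re →
      Z s₁ s₂ = ∑' m : ℕ, ((m : ℂ) + 1) ^ (-s₁)
        * ∑' n : ℕ, (((m : ℂ) + 1) + ((n : ℂ) + 1)) ^ (-s₂))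
    (s₁ : ℂ) (h1 : s₁.re = 1) (h2 : s₁ ≠ 1)
    (hsing : ∀ t₂ : ℝ, 2 ≤ t₂ → ¬ zeta2Sing (s₁, ((1/2 : ℂ) + t₂ * Complex.I))) :
    ∃ K : ℝ, 0 < K ∧ ∀ T : ℝ, 2 ≤ T → 2 * |s₁.im| + 1 ≤ T →
      |(∫ t in T..(2*T), ‖Z s₁ ((1/2 : ℂ) + t * Complex.I)‖ ^ 2)
        - ((‖s₁ - 1‖ ^ 2)⁻¹ + ‖riemannZeta s₁‖ ^ 2) * T * Real.log T| ≤ K * T := by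
  obtain ⟨K, hK, hZ⟩ := Z_approx Z hZa hZs s₁ h1 h2
  obtain ⟨C, hC, hA⟩ := Ac_bound s₁ h1 h2
  obtain ⟨L, hL, hD⟩ := diag s₁ h1 h2
  set c := (‖s₁ - 1‖ ^ 2)⁻¹ + ‖riemannZeta s₁‖ ^ 2 with hc
  have hc0 : 0 ≤ c := by positivity
  set M := 144 * C ^ 2 + L + 3 * c with hM
  have hM0 : 0 < M := by positivity
  refine ⟨4 * c + 2 * M + 2 * K ^ 2, by positivity, fun T hT hTi => ?_⟩
  set a := Real.sqrt (Real.sqrt T) with ha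
  have haT : a ^ 4 = T := by
    have : a ^ 4 = (a ^ 2) ^ 2 := by ring
    rw [this, ha, Real.sq_sqrt (Real.sqrt_nonneg _), Real.sq_sqrt (by linarith)]
  have hT0 : 0 < T := by linarith
  have ha1 : 1 ≤ a := by
    rw [ha, Real.one_le_sqrt, Real.one_le_sqrt]; linarith
  have ha0 : 0 < a := by linarith
  set p := ⌈8 * T⌉₊ with hp
  have hp1 : 8 * T ≤ p := Nat.le_ceil _
  have hp2 : (p:ℝ) < 8 * T + 1 := Nat.ceil_lt_add_one (by positivity)
  have hp0 : 1 ≤ p := by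
    have : (1:ℝ) ≤ p := by linarith
    exact_mod_cast this
  set D : ℝ → ℂ := fun t => ∑ n ∈ Finset.range p, Ac s₁ n * ez n ((1/2 : ℂ) + t * I) with hDd
  have hDc : Continuous (fun t => ‖D t‖ ^ 2) := by
    have : Continuous D := by
      apply continuous_finsetSum
      intro n _
      refine continuous_const.mul ?_
      exact (differentiable_ez n).continuous.comp (by fun_prop)
    fun_prop
  have hms := mean_square p (Ac s₁) C hA T (2*T)
  set J := ∫ t in T..(2*T), ‖D t‖ ^ 2 with hJ
  have hms' : |J - T * ∑ n ∈ Finset.range p, ‖Ac s₁ n‖ ^ 2 / ((n:ℝ) + 1)| ≤ 16 * C ^ 2 * p := by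
    have e : 2 * T - T = T := by ring
    rw [e] at hms
    exact hms
  have hd := hD p hp0
  set S := ∑ n ∈ Finset.range p, ‖Ac s₁ n‖ ^ 2 / ((n:ℝ) + 1) with hS
  have hlog : |Real.log p - Real.log T| ≤ 3 := by
    have l1 : Real.log T ≤ Real.log p := Real.log_le_log hT0 (by linarith)
    have l2 : Real.log p ≤ Real.log (9 * T) := Real.log_le_log (by linarith) (by linarith)
    rw [Real.log_mul (by norm_num) hT0.ne'] at l2
    have l3 : Real.log 9 ≤ 3 := by
      have : (9:ℝ) ≤ 2 ^ 4 := by norm_num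
      have h := Real.log_le_log (by norm_num) this
      rw [Real.log_pow] at h
      have := Real.log_two_lt_d9
      push_cast at h
      linarith
    rw [abs_le]; constructor <;> linarith
  have hJb : |J - c * T * Real.log T| ≤ M * T := by
    have e : J - c * T * Real.log T = (J - T * S) + T * (S - c * Real.log p)
        + c * T * (Real.log p - Real.log T) := by ring
    rw [e]
    refine (abs_add_le _ _).trans ?_
    refine (add_le_add_left (abs_add_le _ _) _).trans ?_
    rw [abs_mul, abs_mul, abs_of_pos hT0, abs_of_nonneg (by positivity : 0 ≤ c * T)]
    calc _ ≤ 16 * C ^ 2 * p + T * L + c * T * 3 := by gcongr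
      _ ≤ 16 * C ^ 2 * (9 * T) + T * L + c * T * 3 := by gcongr; linarith
      _ = _ := by rw [hM]; ring
  have hpt : ∀ t ∈ Set.Icc T (2 * T), |‖Z s₁ ((1/2 : ℂ) + t * I)‖ ^ 2 - ‖D t‖ ^ 2|
      ≤ ‖D t‖ ^ 2 / a + 2 * K ^ 2 := by
    intro t ht
    have hE := hZ a ha1 (by rw [haT]; exact hTi) p (by rw [haT]; linarith) (by rw [haT]; linarith)
      t (by rw [haT]; exact ht.1) (by rw [haT]; exact ht.2)
    set z := Z s₁ ((1/2 : ℂ) + t * I)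
    have h := norm_sq_add_le (D t) (z - D t)
    rw [add_sub_cancel] at h
    have hE' : ‖z - D t‖ ≤ K / a := hE
    have hKa : K / a ≤ K := div_le_self hK.le ha1
    refine h.trans ?_
    calc _ ≤ (K / a) * (2 * ‖D t‖ + K / a) := by gcongr
      _ = (2 * ‖D t‖ * K) / a + (K / a) ^ 2 := by ring
      _ ≤ (‖D t‖ ^ 2 + K ^ 2) / a + K ^ 2 := by
        gcongr
        exact two_mul_le_add_sq _ _
      _ ≤ ‖D t‖ ^ 2 / a + 2 * K ^ 2 := by
        rw [add_div]
        have : K ^ 2 / a ≤ K ^ 2 := div_le_self (by positivity) ha1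
        linarith
  have hZi := Z_int _ (Z_cont Z hZa s₁ hsing) T (2*T) hT (by linarith)
  have hDi : IntervalIntegrable (fun t => ‖D t‖ ^ 2) MeasureTheory.volume T (2*T) :=
    hDc.intervalIntegrable _ _
  have hdiff : |(∫ t in T..(2*T), ‖Z s₁ ((1/2 : ℂ) + t * Complex.I)‖ ^ 2) - J|
      ≤ J / a + 2 * K ^ 2 * T := by
    rw [hJ, ← intervalIntegral.integral_sub hZi hDi]
    refine (intervalIntegral.abs_integral_le_integral_abs (by linarith)).trans ?_
    have hg : IntervalIntegrable (fun t => ‖D t‖ ^ 2 / a + 2 * K ^ 2) MeasureTheory.volume T (2*T) :=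
      (hDi.div_const a).add intervalIntegrable_const
    refine (intervalIntegral.integral_mono_on (by linarith) (hZi.sub hDi).abs hg hpt).trans ?_
    rw [intervalIntegral.integral_add (hDi.div_const a) intervalIntegrable_const,
      intervalIntegral.integral_div, intervalIntegral.integral_const]
    simp only [smul_eq_mul]
    apply le_of_eq; ring
  have hJa : J / a ≤ (4 * c + M) * T := by
    rw [div_le_iff₀ ha0]
    have hl4 : Real.log T ≤ 4 * a := by
      rw [← haT, Real.log_pow]
      push_cast
      have := Real.log_le_sub_one_of_pos ha0
      linarith
    have := (abs_le.1 hJb).2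
    calc J ≤ c * T * Real.log T + M * T := by linarith
      _ ≤ c * T * (4 * a) + M * T * a := by
        refine add_le_add (by gcongr) ?_
        exact le_mul_of_one_le_right (by positivity) ha1
      _ = _ := by ring
  rw [abs_le] at *
  constructor <;> linarith [hdiff.1, hdiff.2, hJb.1, hJb.2]

lemma final (Z : ℂ → ℂ → ℂ)
    (hZa : AnalyticOnNhd ℂ (fun p : ℂ × ℂ => Z p.1 p.2) {p | ¬ zeta2Sing p})
    (hZs : ∀ s₁ s₂ : ℂ, 1 < s₂.re → 2 < s₁.re + s₂.re →
      Z s₁ s₂ = ∑' m : ℕ, ((m : ℂ) + 1) ^ (-s₁)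
        * ∑' n : ℕ, (((m : ℂ) + 1) + ((n : ℂ) + 1)) ^ (-s₂))
    (s₁ : ℂ) (h1 : s₁.re = 1) (h2 : s₁ ≠ 1)
    (hsing : ∀ t₂ : ℝ, 2 ≤ t₂ → ¬ zeta2Sing (s₁, ((1/2 : ℂ) + t₂ * Complex.I))) :
    (fun T : ℝ =>
        (∫ t in (2:ℝ)..T, ‖Z s₁ ((1/2 : ℂ) + t * Complex.I)‖ ^ 2)
          - ((‖s₁ - 1‖ ^ 2)⁻¹ + ‖riemannZeta s₁‖ ^ 2) * T * Real.log T)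
      =O[atTop] (fun T : ℝ => T) := by
  obtain ⟨K, hK, hb⟩ := block Z hZa hZs s₁ h1 h2 hsing
  set c := (‖s₁ - 1‖ ^ 2)⁻¹ + ‖riemannZeta s₁‖ ^ 2 with hc
  have hc0 : 0 ≤ c := by positivity
  have hcont := Z_cont Z hZa s₁ hsing
  set f : ℝ → ℝ := fun t => ‖Z s₁ ((1/2 : ℂ) + t * Complex.I)‖ ^ 2 with hf
  have hf0 : ∀ t, 0 ≤ f t := fun t => by positivity
  set G : ℝ → ℝ := fun T => (∫ t in (2:ℝ)..T, f t) - c * T * Real.log T with hG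
  set T0 : ℝ := 2 * |s₁.im| + 2 with hT0
  have hT02 : 2 ≤ T0 := by have := abs_nonneg s₁.im; linarith
  have hlog2 : Real.log 2 ≤ 1 := by have := Real.log_two_lt_d9; linarith
  have hlog20 : 0 ≤ Real.log 2 := by have := Real.log_two_gt_d9; linarith
  -- initial bound
  set B := (∫ t in (2:ℝ)..(2*T0), f t) + c * (2 * T0) * Real.log (2 * T0) with hB
  have hinit : ∀ T, T0 ≤ T → T ≤ 2 * T0 → |G T| ≤ B := by
    intro T ha hb'
    have i1 : 0 ≤ ∫ t in (2:ℝ)..T, f t :=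
      intervalIntegral.integral_nonneg (by linarith) (fun t _ => hf0 t)
    have i2 : 0 ≤ ∫ t in T..(2*T0), f t :=
      intervalIntegral.integral_nonneg (by linarith) (fun t _ => hf0 t)
    have i3 := intervalIntegral.integral_add_adjacent_intervals
      (Z_int f hcont 2 T le_rfl (by linarith)) (Z_int f hcont T (2*T0) (by linarith) (by linarith))
    have l0 : 0 ≤ Real.log T := Real.log_nonneg (by linarith)
    have l1 : Real.log T ≤ Real.log (2 * T0) := Real.log_le_log (by linarith) hb'
    have l2 : c * T * Real.log T ≤ c * (2 * T0) * Real.log (2 * T0) := by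
      have : 0 ≤ T := by linarith
      gcongr
    have l3 : 0 ≤ c * T * Real.log T := by
      have : 0 ≤ T := by linarith
      positivity
    rw [hG, hB, abs_le]
    constructor <;> simp only <;> linarith
  have hB0 : 0 ≤ B := (abs_nonneg _).trans (hinit T0 le_rfl (by linarith))
  set Q := K + 2 * c + B with hQ
  have hstep : ∀ T, T0 ≤ T → |G (2 * T)| ≤ |G T| + (K + 2 * c) * T := by
    intro T ha
    have hTp : 0 < T := by linarith
    have hh := hb T (by linarith) (by linarith)
    have i3 := intervalIntegral.integral_add_adjacent_intervals
      (Z_int f hcont 2 T le_rfl (by linarith)) (Z_int f hcont T (2*T) (by linarith) (by linarith))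
    have e : G (2 * T) = G T + ((∫ t in T..(2*T), f t) - c * T * Real.log T)
        - 2 * c * T * Real.log 2 := by
      simp only [hG]
      rw [← i3, Real.log_mul two_ne_zero hTp.ne']
      ring
    have l : 2 * c * T * Real.log 2 ≤ 2 * c * T := by
      have : 0 ≤ 2 * c * T := by positivity
      exact mul_le_of_le_one_right this hlog2
    have l' : 0 ≤ 2 * c * T * Real.log 2 := by positivity
    have g1 := neg_abs_le (G T)
    have g2 := le_abs_self (G T)
    rw [e]
    rw [abs_le] at hh
    rw [abs_le]
    constructor <;> linarith [hh.1, hh.2]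
  have hall : ∀ k : ℕ, ∀ T, T0 ≤ T → T ≤ 2 ^ (k+1) * T0 → |G T| ≤ Q * T := by
    intro k
    induction k with
    | zero =>
      intro T ha hb'
      have := hinit T ha (by simpa using hb')
      nlinarith
    | succ k ih =>
      intro T ha hb'
      by_cases h : T ≤ 2 * T0
      · have := hinit T ha h
        nlinarith
      · push Not at h
        have h3 := ih (T/2) (by linarith) (by rw [pow_succ] at hb'; linarith)
        have h4 := hstep (T/2) (by linarith)
        have e : 2 * (T / 2) = T := by ring
        rw [e] at h4
        have : (K + 2 * c) * (T/2) ≤ Q * (T/2) := by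
          apply mul_le_mul_of_nonneg_right _ (by linarith)
          linarith
        linarith
  refine IsBigO.of_bound Q ?_
  filter_upwards [eventually_ge_atTop T0] with T hT
  obtain ⟨k, hk⟩ := pow_unbounded_of_one_lt T (by norm_num : (1:ℝ) < 2)
  have hTle : T ≤ 2 ^ (k+1) * T0 := by
    have : (0:ℝ) < 2 ^ k := by positivity
    rw [pow_succ]; nlinarith
  have := hall k T hT hTle
  rw [Real.norm_eq_abs, Real.norm_eq_abs, abs_of_nonneg (by linarith : 0 ≤ T)]
  exact this

/-- Mean square of ζ₂ in t₂ for σ₁ = 1, s₁ ≠ 1, σ₂ = 1/2 (from Theorem 1.2). -/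
theorem stmt18 (Z : ℂ → ℂ → ℂ)
    (hZa : AnalyticOnNhd ℂ (fun p : ℂ × ℂ => Z p.1 p.2) {p | ¬ zeta2Sing p})
    (hZs : ∀ s₁ s₂ : ℂ, 1 < s₂.re → 2 < s₁.re + s₂.re →
      Z s₁ s₂ = ∑' m : ℕ, ((m : ℂ) + 1) ^ (-s₁)
        * ∑' n : ℕ, (((m : ℂ) + 1) + ((n : ℂ) + 1)) ^ (-s₂))
    (s₁ : ℂ) (h1 : s₁.re = 1) (h2 : s₁ ≠ 1)
    (hsing : ∀ t₂ : ℝ, 2 ≤ t₂ → ¬ zeta2Sing (s₁, ((1/2 : ℂ) + t₂ * Complex.I))) :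
    (fun T : ℝ =>
        (∫ t in (2:ℝ)..T, ‖Z s₁ ((1/2 : ℂ) + t * Complex.I)‖ ^ 2)
          - ((‖s₁ - 1‖ ^ 2)⁻¹ + ‖riemannZeta s₁‖ ^ 2) * T * Real.log T)
      =O[atTop] (fun T : ℝ => T) := by
  exact final Z hZa hZs s₁ h1 h2 hsing
end

section
/- Let σ₁ > 1 and σ₂ = 1/2, and set s₁ = σ₁ + it, s₂ = 1/2 + it. Then ∫₂^T |ζ₂(s₁, s₂)|² dt ≍ T log T as T → ∞. -/
open Complex Filter Asymptotics Real

noncomputable def MSK (T l : ℝ) : ℝ := ∫ t in (0:ℝ)..T, (1 - t/T) * Real.cos (l*t)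

lemma MSK_eq {T l : ℝ} (hT : 0 < T) (hl : l ≠ 0) :
    MSK T l = (1 - Real.cos (l * T)) / (T * l^2) := by
  unfold MSK
  have hd : ∀ t ∈ Set.uIcc (0:ℝ) T, HasDerivAt
      (fun t => (1 - t/T) * (Real.sin (l*t) / l) - Real.cos (l*t) / (T*l^2))
      ((1 - t/T) * Real.cos (l*t)) t := by
    intro t _
    have h1 : HasDerivAt (fun t : ℝ => l * t) l t := by
      simpa using (hasDerivAt_id t).const_mul l
    have h2 : HasDerivAt (fun t : ℝ => 1 - t/T) (-(1/T)) t := by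
      simpa using ((hasDerivAt_id t).div_const T).const_sub 1
    have h3 := (h2.mul (h1.sin.div_const l)).sub (h1.cos.div_const (T*l^2))
    refine h3.congr_deriv ?_
    field_simp
    ring
  rw [intervalIntegral.integral_eq_sub_of_hasDerivAt hd]
  · field_simp
    simp
    ring
  · apply Continuous.intervalIntegrable
    fun_prop

lemma MSK_zero {T : ℝ} (hT : 0 < T) : MSK T 0 = T / 2 := by
  unfold MSK
  have hd : ∀ t ∈ Set.uIcc (0:ℝ) T, HasDerivAt
      (fun t => t - t^2/(2*T)) ((1 - t/T) * Real.cos (0*t)) t := by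
    intro t _
    have h3 := (hasDerivAt_id t).sub (((hasDerivAt_id t).pow 2).div_const (2*T))
    refine h3.congr_deriv ?_
    simp
    field_simp
  rw [intervalIntegral.integral_eq_sub_of_hasDerivAt hd]
  · field_simp
    ring
  · apply Continuous.intervalIntegrable
    fun_prop

lemma MSK_nonneg {T : ℝ} (hT : 0 < T) (l : ℝ) : 0 ≤ MSK T l := by
  by_cases hl : l = 0
  · subst hl; rw [MSK_zero hT]; positivity
  · rw [MSK_eq hT hl]
    have := Real.cos_le_one (l*T)
    apply div_nonneg (by linarith) (by positivity)

lemma MSK_le {T : ℝ} (hT : 0 < T) (l : ℝ) : MSK T l ≤ T / 2 := by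
  rw [← MSK_zero hT]
  unfold MSK
  apply intervalIntegral.integral_mono_on hT.le
  · apply Continuous.intervalIntegrable
    fun_prop
  · apply Continuous.intervalIntegrable
    fun_prop
  · intro t ht
    have h1 : 0 ≤ 1 - t / T := by
      rw [sub_nonneg, div_le_one hT]; exact ht.2
    simp only [zero_mul, Real.cos_zero]
    exact mul_le_mul_of_nonneg_left (Real.cos_le_one _) h1

lemma MSK_le' {T : ℝ} (hT : 0 < T) (l : ℝ) : MSK (2*T) l ≤ 2*T / (1 + T^2*l^2) := by
  by_cases h : T^2*l^2 ≤ 1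
  · refine (MSK_le (by positivity) l).trans ?_
    rw [le_div_iff₀ (by positivity)]
    nlinarith
  · push Not at h
    have hl : l ≠ 0 := by
      rintro rfl
      norm_num at h
    rw [MSK_eq (by positivity) hl]
    have h1 := Real.neg_one_le_cos (l*(2*T))
    have h2 : 0 < l^2 := by positivity
    rw [div_le_div_iff₀ (by positivity) (by positivity)]
    calc (1 - Real.cos (l*(2*T))) * (1 + T^2*l^2) ≤ 2 * (2 * (T^2*l^2)) := by
          apply mul_le_mul <;> nlinarith
      _ = _ := by ring

open MeasureTheory in
lemma MSK_double {X : Type*} [MeasurableSpace X] (μ : Measure X) [SFinite μ]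
    (G φ : X → ℝ) (hG : Integrable G μ) (hφ : Measurable φ) {T : ℝ} (hT : 0 < T) :
    ∫ t in (0:ℝ)..T, (1 - t/T) * ((∫ x, G x * Real.cos (t * φ x) ∂μ)^2
        + (∫ x, G x * Real.sin (t * φ x) ∂μ)^2)
      = ∫ z, G z.1 * G z.2 * MSK T (φ z.1 - φ z.2) ∂(μ.prod μ) := by
  have hGG : Integrable (fun z : X × X => G z.1 * G z.2) (μ.prod μ) := hG.mul_prod hG
  have hc : ∀ t : ℝ, Integrable (fun x => G x * Real.cos (t * φ x)) μ := fun t => by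
    refine hG.mul_bdd (c := 1) (by fun_prop) (ae_of_all _ fun x => ?_)
    simpa using Real.abs_cos_le_one _
  have hs : ∀ t : ℝ, Integrable (fun x => G x * Real.sin (t * φ x)) μ := fun t => by
    refine hG.mul_bdd (c := 1) (by fun_prop) (ae_of_all _ fun x => ?_)
    simpa using Real.abs_sin_le_one _
  have h1 : ∀ t : ℝ, (1 - t/T) * ((∫ x, G x * Real.cos (t * φ x) ∂μ)^2
        + (∫ x, G x * Real.sin (t * φ x) ∂μ)^2)
      = ∫ z, G z.1 * G z.2 * ((1 - t/T) * Real.cos ((φ z.1 - φ z.2) * t)) ∂(μ.prod μ) := by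
    intro t
    rw [sq, sq, ← integral_prod_mul, ← integral_prod_mul, ← integral_add ((hc t).mul_prod (hc t)) ((hs t).mul_prod (hs t)), ← integral_const_mul]
    congr 1
    ext z
    rw [show (φ z.1 - φ z.2) * t = t * φ z.1 - t * φ z.2 by ring, Real.cos_sub]
    ring
  simp_rw [h1]
  rw [intervalIntegral.integral_of_le hT.le, integral_integral_swap]
  · congr 1
    ext z
    rw [integral_const_mul, MSK, intervalIntegral.integral_of_le hT.le]
  · have h2 : Integrable (fun _ : ℝ => (1:ℝ)) (volume.restrict (Set.Ioc 0 T)) := by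
      simp
    have h3 := h2.mul_prod hGG
    have h4 : AEStronglyMeasurable (fun p : ℝ × (X × X) => (1 - p.1/T) * Real.cos ((φ p.2.1 - φ p.2.2) * p.1))
      ((volume.restrict (Set.Ioc 0 T)).prod (μ.prod μ)) := by
      apply Measurable.aestronglyMeasurable
      fun_prop
    have h5 : ∀ᵐ p : ℝ × (X × X) ∂((volume.restrict (Set.Ioc 0 T)).prod (μ.prod μ)),
        ‖(1 - p.1/T) * Real.cos ((φ p.2.1 - φ p.2.2) * p.1)‖ ≤ 1 := by
      have : ∀ᵐ t : ℝ ∂(volume.restrict (Set.Ioc 0 T)), |1 - t/T| ≤ 1 := by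
        filter_upwards [ae_restrict_mem measurableSet_Ioc] with t ht
        have a1 : t / T ≤ 1 := (div_le_one hT).2 ht.2
        have a2 : 0 ≤ t / T := div_nonneg ht.1.le hT.le
        rw [abs_le]; constructor <;> linarith
      have h6 := Measure.quasiMeasurePreserving_fst (μ := volume.restrict (Set.Ioc 0 T)) (ν := μ.prod μ) |>.ae this
      filter_upwards [h6] with p hp
      rw [norm_mul, Real.norm_eq_abs, Real.norm_eq_abs]
      exact mul_le_one₀ hp (abs_nonneg _) (Real.abs_cos_le_one _)
    have h7 := h3.mul_bdd (c := 1) h4 h5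
    simpa [Function.uncurry_def] using h7

open MeasureTheory in
lemma MS_cont {X : Type*} [MeasurableSpace X] (μ : Measure X)
    (G φ : X → ℝ) (hG : Integrable G μ) (hφ : Measurable φ) :
    Continuous (fun t : ℝ => (∫ x, G x * Real.cos (t * φ x) ∂μ)^2
        + (∫ x, G x * Real.sin (t * φ x) ∂μ)^2) := by
  have h1 : Continuous (fun t : ℝ => ∫ x, G x * Real.cos (t * φ x) ∂μ) := by
    refine continuous_of_dominated (bound := fun x => |G x|) (fun t => ?_) (fun t => ae_of_all _ fun x => ?_) hG.abs
      (ae_of_all _ fun x => by fun_prop)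
    · exact hG.aestronglyMeasurable.mul (by fun_prop)
    · rw [norm_mul, Real.norm_eq_abs, Real.norm_eq_abs]
      exact mul_le_of_le_one_right (abs_nonneg _) (Real.abs_cos_le_one _)
  have h2 : Continuous (fun t : ℝ => ∫ x, G x * Real.sin (t * φ x) ∂μ) := by
    refine continuous_of_dominated (bound := fun x => |G x|) (fun t => ?_) (fun t => ae_of_all _ fun x => ?_) hG.abs
      (ae_of_all _ fun x => by fun_prop)
    · exact hG.aestronglyMeasurable.mul (by fun_prop)
    · rw [norm_mul, Real.norm_eq_abs, Real.norm_eq_abs]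
      exact mul_le_of_le_one_right (abs_nonneg _) (Real.abs_sin_le_one _)
  fun_prop

open MeasureTheory in
lemma MS_upper {X : Type*} [MeasurableSpace X] (μ : Measure X) [SFinite μ]
    (G φ a b : X → ℝ) (hG : Integrable G μ) (hφ : Measurable φ)
    (ha : Integrable a μ) (ha0 : ∀ x, 0 ≤ a x) (hb : Measurable b) (hb0 : ∀ x, 0 ≤ b x)
    (hab : ∀ x y, G x * G y ≤ (a x * b y + a y * b x) / 2)
    {T C : ℝ} (hT : 0 < T) (hC0 : 0 ≤ C)
    (hC : ∀ᵐ x ∂μ, Integrable (fun y => b y * (2*T/(1+T^2*(φ x - φ y)^2))) μ ∧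
      ∫ y, b y * (2*T/(1+T^2*(φ x - φ y)^2)) ∂μ ≤ C) :
    ∫ t in (0:ℝ)..T, ((∫ x, G x * Real.cos (t * φ x) ∂μ)^2
        + (∫ x, G x * Real.sin (t * φ x) ∂μ)^2) ≤ 2 * (C * ∫ x, a x ∂μ) := by
  have hcont := MS_cont μ G φ hG hφ
  set F := (fun t : ℝ => (∫ x, G x * Real.cos (t * φ x) ∂μ)^2
        + (∫ x, G x * Real.sin (t * φ x) ∂μ)^2) with hF
  have hF0 : ∀ t, 0 ≤ F t := fun t => by simp only [hF]; positivity
  have hfm : AEStronglyMeasurable (fun z : X × X => a z.1 * (b z.2 * (2*T/(1+T^2*(φ z.1 - φ z.2)^2)))) (μ.prod μ) := by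
    apply AEStronglyMeasurable.mul
    · exact ha.aestronglyMeasurable.comp_fst
    · apply Measurable.aestronglyMeasurable
      fun_prop
  have hk0 : ∀ x y, 0 ≤ 2*T/(1+T^2*(φ x - φ y)^2) := fun x y => by positivity
  have hintg : Integrable (fun z : X × X => a z.1 * (b z.2 * (2*T/(1+T^2*(φ z.1 - φ z.2)^2)))) (μ.prod μ) := by
    rw [integrable_prod_iff hfm]
    refine ⟨hC.mono fun x hx => hx.1.const_mul (a x), ?_⟩
    refine Integrable.mono' (ha.mul_const C) ?_ (hC.mono fun x hx => ?_)
    · exact hfm.norm.integral_prod_right'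
    · rw [Real.norm_of_nonneg (integral_nonneg fun y => norm_nonneg _)]
      have : ∀ y, ‖a x * (b y * (2*T/(1+T^2*(φ x - φ y)^2)))‖ = a x * (b y * (2*T/(1+T^2*(φ x - φ y)^2))) :=
        fun y => Real.norm_of_nonneg (mul_nonneg (ha0 x) (mul_nonneg (hb0 y) (hk0 x y)))
      simp only [this]
      rw [integral_const_mul]
      exact mul_le_mul_of_nonneg_left hx.2 (ha0 x)
  have hintle : ∫ z, a z.1 * (b z.2 * (2*T/(1+T^2*(φ z.1 - φ z.2)^2))) ∂(μ.prod μ) ≤ C * ∫ x, a x ∂μ := by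
    rw [integral_prod _ hintg, mul_comm C, ← integral_mul_const]
    refine integral_mono_ae hintg.integral_prod_left (ha.mul_const C) (hC.mono fun x hx => ?_)
    dsimp only
    rw [integral_const_mul]
    exact mul_le_mul_of_nonneg_left hx.2 (ha0 x)
  have hsw : Integrable (fun z : X × X => a z.2 * (b z.1 * (2*T/(1+T^2*(φ z.2 - φ z.1)^2)))) (μ.prod μ) := hintg.swap
  have hswle : ∫ z, a z.2 * (b z.1 * (2*T/(1+T^2*(φ z.2 - φ z.1)^2))) ∂(μ.prod μ)
     = ∫ z, a z.1 * (b z.2 * (2*T/(1+T^2*(φ z.1 - φ z.2)^2))) ∂(μ.prod μ) :=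
    integral_prod_swap (fun z : X × X => a z.1 * (b z.2 * (2*T/(1+T^2*(φ z.1 - φ z.2)^2))))
  have h2T : 0 < 2 * T := by positivity
  have e1 : ∫ t in (0:ℝ)..T, F t ≤ ∫ t in (0:ℝ)..T, 2 * ((1 - t/(2*T)) * F t) := by
    apply intervalIntegral.integral_mono_on hT.le
    · exact hcont.intervalIntegrable _ _
    · apply Continuous.intervalIntegrable; fun_prop
    · intro t ht
      have : t / (2*T) ≤ 1/2 := by
        rw [div_le_iff₀ h2T]; linarith [ht.2]
      nlinarith [hF0 t]
  have e2 : ∫ t in (0:ℝ)..T, 2 * ((1 - t/(2*T)) * F t) ≤ ∫ t in (0:ℝ)..(2*T), 2 * ((1 - t/(2*T)) * F t) := by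
    rw [← intervalIntegral.integral_add_adjacent_intervals (a := 0) (b := T) (c := 2*T)]
    · rw [le_add_iff_nonneg_right]
      apply intervalIntegral.integral_nonneg (by linarith)
      intro t ht
      have : t / (2*T) ≤ 1 := by
        rw [div_le_one h2T]; exact ht.2
      have := hF0 t
      apply mul_nonneg two_pos.le (mul_nonneg (by linarith) this)
    · apply Continuous.intervalIntegrable; fun_prop
    · apply Continuous.intervalIntegrable; fun_prop
  refine e1.trans (e2.trans ?_)
  rw [intervalIntegral.integral_const_mul, MSK_double μ G φ hG hφ h2T]
  apply mul_le_mul_of_nonneg_left _ two_pos.le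
  by_cases hi : Integrable (fun z : X × X => G z.1 * G z.2 * MSK (2*T) (φ z.1 - φ z.2)) (μ.prod μ)
  · calc _ ≤ ∫ z : X × X, ((a z.1 * (b z.2 * (2*T/(1+T^2*(φ z.1 - φ z.2)^2)))) +
        (a z.2 * (b z.1 * (2*T/(1+T^2*(φ z.2 - φ z.1)^2)))))/2 ∂(μ.prod μ) := by
          refine integral_mono hi (Integrable.div_const (Integrable.add hintg hsw) 2) ?_
          intro z
          simp only
          have k1 := MSK_le' hT (φ z.1 - φ z.2)
          have k2 := MSK_nonneg h2T (φ z.1 - φ z.2)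
          have hs : (φ z.2 - φ z.1)^2 = (φ z.1 - φ z.2)^2 := by ring
          rw [hs]
          calc _ ≤ (a z.1 * b z.2 + a z.2 * b z.1) / 2 * MSK (2*T) (φ z.1 - φ z.2) :=
                mul_le_mul_of_nonneg_right (hab _ _) k2
            _ ≤ (a z.1 * b z.2 + a z.2 * b z.1) / 2 * (2*T/(1+T^2*(φ z.1 - φ z.2)^2)) := by
                apply mul_le_mul_of_nonneg_left k1
                have := mul_nonneg (ha0 z.1) (hb0 z.2)
                have := mul_nonneg (ha0 z.2) (hb0 z.1)
                linarith
            _ = _ := by ring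
    _ ≤ _ := by
          rw [integral_div, integral_add hintg hsw, hswle]
          linarith
  · rw [integral_undef hi]
    exact mul_nonneg hC0 (integral_nonneg ha0)

/-- continuous estimate -/
lemma MS_tail {M T : ℝ} (hM : 0 < M) (hT : 0 < T) :
    ∫ t in (0:ℝ)..T, ((∫ x in Set.Ioi M, (Int.fract x * |x|^(-(3/2):ℝ)) * Real.cos (t * Real.log x))^2
        + (∫ x in Set.Ioi M, (Int.fract x * |x|^(-(3/2):ℝ)) * Real.sin (t * Real.log x))^2)
      ≤ 2 * (2 * π * M⁻¹) := by
  have habs : ∀ r : ℝ, Set.EqOn (fun x : ℝ => x ^ r) (fun x : ℝ => |x| ^ r) (Set.Ioi M) := by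
    intro r x hx
    have : 0 < x := hM.trans hx
    simp [abs_of_pos this]
  have hintg : ∀ r : ℝ, r < -1 → MeasureTheory.IntegrableOn (fun x : ℝ => |x| ^ r) (Set.Ioi M) := by
    intro r hr
    exact (integrableOn_Ioi_rpow_of_lt hr hM).congr_fun (habs r) measurableSet_Ioi
  have hval : ∫ x in Set.Ioi M, |x| ^ (-2:ℝ) = M⁻¹ := by
    rw [← MeasureTheory.setIntegral_congr_fun measurableSet_Ioi (habs _), integral_Ioi_rpow_of_lt (by norm_num) hM]
    norm_num
    exact Real.rpow_neg_one M
  have := MS_upper (μ := MeasureTheory.volume.restrict (Set.Ioi M)) (fun x => Int.fract x * |x|^(-(3/2):ℝ)) Real.log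
    (fun x => |x|^(-2:ℝ)) (fun x => |x|^(-1:ℝ)) (T := T) (C := 2*π) ?_ Real.measurable_log
    (hintg _ (by norm_num)) (fun x => by positivity) (by fun_prop) (fun x => by positivity) ?_ hT (by positivity) ?_
  · rw [hval] at this
    exact this
  · refine (hintg (-(3/2)) (by norm_num)).mono' ?_ (MeasureTheory.ae_of_all _ fun x => ?_)
    · apply Measurable.aestronglyMeasurable
      exact measurable_fract.mul (by fun_prop)
    · rw [norm_mul, Real.norm_of_nonneg (Int.fract_nonneg x), Real.norm_of_nonneg (by positivity)]
      exact mul_le_of_le_one_left (by positivity) (Int.fract_lt_one x).le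
  · intro x y
    by_cases hx : x = 0
    · subst hx
      norm_num
    by_cases hy : y = 0
    · subst hy
      norm_num
    have hx' : 0 < |x| := abs_pos.2 hx
    have hy' : 0 < |y| := abs_pos.2 hy
    have key : ∀ u : ℝ, 0 < u → u^(-(3/2):ℝ) = u^(-1:ℝ) * u^(-(1/2):ℝ) ∧ u^(-2:ℝ) = u^(-1:ℝ) * (u^(-(1/2):ℝ))^2 := by
      intro u hu
      constructor
      · rw [← Real.rpow_add hu]; norm_num
      · rw [← Real.rpow_natCast, ← Real.rpow_mul hu.le, ← Real.rpow_add hu]; norm_num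
    have h1 : Int.fract x * |x|^(-(3/2):ℝ) ≤ |x|^(-(3/2):ℝ) := mul_le_of_le_one_left (by positivity) (Int.fract_lt_one x).le
    have h2 : Int.fract y * |y|^(-(3/2):ℝ) ≤ |y|^(-(3/2):ℝ) := mul_le_of_le_one_left (by positivity) (Int.fract_lt_one y).le
    refine (mul_le_mul h1 h2 (mul_nonneg (Int.fract_nonneg y) (by positivity)) (by positivity)).trans ?_
    rw [(key _ hx').1, (key _ hx').2, (key _ hy').1, (key _ hy').2]
    have h3 : 0 ≤ |x|^(-1:ℝ) * |y|^(-1:ℝ) := by positivity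
    nlinarith [mul_nonneg h3 (sq_nonneg (|x|^(-(1/2):ℝ) - |y|^(-(1/2):ℝ)))]
  · refine MeasureTheory.ae_of_all _ fun x => ?_
    have hd : ∀ y ∈ Set.Ici M, HasDerivAt (fun y => 2 * Real.arctan (T * (Real.log y - Real.log x)))
        (|y|^(-1:ℝ) * (2*T/(1+T^2*(Real.log x - Real.log y)^2))) y := by
      intro y hy
      have hy' : 0 < y := lt_of_lt_of_le hM hy
      have h1 := ((((Real.hasDerivAt_log hy'.ne').sub_const (Real.log x)).const_mul T).arctan).const_mul 2
      refine h1.congr_deriv ?_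
      rw [abs_of_pos hy', Real.rpow_neg_one]
      field_simp
      ring
    have hlim : Tendsto (fun y => 2 * Real.arctan (T * (Real.log y - Real.log x))) atTop (nhds (2 * (π/2))) := by
      apply Tendsto.const_mul
      have h1 : Tendsto (fun y => T * (Real.log y - Real.log x)) atTop atTop := by
        apply Tendsto.const_mul_atTop hT
        exact tendsto_atTop_add_const_right _ _ Real.tendsto_log_atTop
      exact (tendsto_nhds_of_tendsto_nhdsWithin Real.tendsto_arctan_atTop).comp h1
    have hnn : ∀ y ∈ Set.Ioi M, 0 ≤ |y|^(-1:ℝ) * (2*T/(1+T^2*(Real.log x - Real.log y)^2)) := by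
      intro y _; positivity
    refine ⟨MeasureTheory.integrableOn_Ioi_deriv_of_nonneg' hd hnn hlim, ?_⟩
    rw [MeasureTheory.integral_Ioi_of_hasDerivAt_of_nonneg' hd hnn hlim]
    have := Real.neg_pi_div_two_lt_arctan (T * (Real.log M - Real.log x))
    linarith

lemma MS_summ : Summable (fun j : ℤ => 1 / (1 + (j:ℝ)^2/4)) := by
  have h1 : Summable (fun j : ℤ => 4 * (1 / (j:ℝ)^2)) := (Real.summable_one_div_int_pow.2 (by norm_num)).mul_left 4
  refine Summable.of_norm_bounded_eventually h1 ?_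
  have : ∀ᶠ j : ℤ in cofinite, j ≠ 0 := (Set.finite_singleton (0:ℤ)).subset (by intro x; simp)
  filter_upwards [this] with j hj
  have hj' : (0:ℝ) < (j:ℝ)^2 := by positivity
  rw [Real.norm_of_nonneg (by positivity), mul_one_div, div_le_div_iff₀ (by positivity) hj']
  nlinarith

noncomputable def MSC : ℝ := 2 * ∑' j : ℤ, 1 / (1 + (j:ℝ)^2/4)

lemma MSC_nonneg : 0 ≤ MSC := by
  unfold MSC
  have : 0 ≤ ∑' j : ℤ, 1 / (1 + (j:ℝ)^2/4) := tsum_nonneg fun j => by positivity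
  linarith

lemma log_diff {n k N : ℕ} (hn : 1 ≤ n) (hk : 1 ≤ k) (hnN : n ≤ N) (hkN : k ≤ N) :
    ((n:ℝ) - k)^2 / (N:ℝ)^2 ≤ (Real.log n - Real.log k)^2 := by
  wlog h : k ≤ n generalizing n k
  · have := this hk hn hkN hnN (by omega)
    calc _ = ((k:ℝ) - n)^2 / (N:ℝ)^2 := by ring
      _ ≤ _ := this
      _ = _ := by ring
  have hn0 : (0:ℝ) < n := by exact_mod_cast hn
  have hk0 : (0:ℝ) < k := by exact_mod_cast hk
  have hN0 : (0:ℝ) < N := by exact_mod_cast (hn.trans hnN)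
  have hN : (n:ℝ) ≤ N := by exact_mod_cast hnN
  have hkn : (k:ℝ) ≤ n := by exact_mod_cast h
  rw [← div_pow]
  apply pow_le_pow_left₀ (by apply div_nonneg <;> linarith)
  have h1 := Real.one_sub_inv_le_log_of_pos (x := (n:ℝ)/k) (by positivity)
  rw [Real.log_div hn0.ne' hk0.ne'] at h1
  refine le_trans ?_ h1
  rw [inv_div]
  calc ((n:ℝ) - k)/N ≤ ((n:ℝ) - k)/n := by
        apply div_le_div_of_nonneg_left (by linarith) hn0 hN
    _ = _ := by field_simp

open MeasureTheory in
lemma MS_disc_upper {m N : ℕ} {T : ℝ} (hT : 0 < T) (hN : (N:ℝ) ≤ 2 * T) :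
    ∫ t in (0:ℝ)..T, ((∑ n ∈ Finset.Ioc m N, (n:ℝ)^(-(1/2):ℝ) * Real.cos (t * Real.log n))^2
        + (∑ n ∈ Finset.Ioc m N, (n:ℝ)^(-(1/2):ℝ) * Real.sin (t * Real.log n))^2)
      ≤ 2 * (MSC * T * ∑ n ∈ Finset.Ioc m N, (n:ℝ)⁻¹) := by
  set μ : Measure ℕ := Measure.count.restrict (Finset.Ioc m N : Set ℕ) with hμ
  have hi : ∀ f : ℕ → ℝ, Integrable f μ := fun f => by
    change IntegrableOn f _ _
    rw [← (Finset.Ioc m N : Set ℕ).biUnion_of_singleton]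
    have : ∀ i ∈ Finset.Ioc m N, IntegrableOn f {i} Measure.count := fun i _ => by
      simp
    exact integrableOn_finset_iUnion.2 this
  have hs : ∀ f : ℕ → ℝ, ∫ x, f x ∂μ = ∑ n ∈ Finset.Ioc m N, f n := by
    intro f
    rw [hμ, setIntegral_finset _ (hi f)]
    simp [Measure.real]
  have := MS_upper μ (fun n : ℕ => (n:ℝ)^(-(1/2):ℝ)) (fun n : ℕ => Real.log n) (fun n => (n:ℝ)⁻¹) (fun n => 1)
    (C := MSC * T) (hi _) (measurable_of_countable _) (hi _) (fun x => by positivity) (by fun_prop) (fun x => by norm_num)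
    ?_ hT (mul_nonneg MSC_nonneg hT.le) ?_
  · simpa only [hs] using this
  · have h2 : ∀ n : ℕ, (n:ℝ)⁻¹ = ((n:ℝ)^(-(1/2):ℝ))^2 ∨ n = 0 := by
      intro n
      by_cases h : n = 0
      · exact Or.inr h
      · left
        rw [← Real.rpow_natCast, ← Real.rpow_mul (by positivity), ← Real.rpow_neg_one]; norm_num
    intro x y
    rcases h2 x with hx | hx
    · rcases h2 y with hy | hy
      · rw [hx, hy]
        nlinarith [sq_nonneg ((x:ℝ)^(-(1/2):ℝ) - (y:ℝ)^(-(1/2):ℝ))]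
      · subst hy; norm_num; positivity
    · subst hx; norm_num; positivity
  · rw [hμ]
    filter_upwards [ae_restrict_mem (Finset.measurableSet _)] with n hn
    refine ⟨hi _, ?_⟩
    rw [← hμ, hs]
    simp only [Finset.coe_Ioc, Set.mem_Ioc] at hn
    have hN0 : (0:ℝ) < N := by
      have : 0 < N := by omega
      exact_mod_cast this
    have h1 : ∀ k ∈ Finset.Ioc m N, 1 * (2*T/(1+T^2*(Real.log n - Real.log k)^2))
        ≤ 2 * T * (1 / (1 + ((((n:ℤ) - (k:ℤ)) : ℤ) : ℝ)^2/4)) := by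
      intro k hk
      rw [Finset.mem_Ioc] at hk
      have h3 := log_diff (n := n) (k := k) (N := N) (by omega) (by omega) hn.2 hk.2
      rw [one_mul, mul_one_div]
      apply div_le_div_of_nonneg_left (by positivity) (by positivity)
      push_cast
      have h4 : ((n:ℝ) - k)^2/(4*T^2) ≤ ((n:ℝ) - k)^2 / (N:ℝ)^2 := by
        apply div_le_div_of_nonneg_left (by positivity) (by positivity)
        nlinarith
      have h5 := mul_le_mul_of_nonneg_left (h4.trans h3) (sq_nonneg T)
      have h6 : T^2 * (((n:ℝ) - k)^2/(4*T^2)) = ((n:ℝ) - k)^2/4 := by field_simp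
      linarith
    refine (Finset.sum_le_sum h1).trans ?_
    rw [← Finset.mul_sum]
    have h7 : ∑ k ∈ Finset.Ioc m N, (1 / (1 + ((((n:ℤ) - (k:ℤ)) : ℤ) : ℝ)^2/4)) ≤ ∑' j : ℤ, 1 / (1 + (j:ℝ)^2/4) := by
      have inj : Set.InjOn (fun k : ℕ => (n:ℤ) - (k:ℤ)) (Finset.Ioc m N) := by
        intro a _ b _ hab
        simp only at hab
        omega
      rw [← Finset.sum_image (f := fun j : ℤ => 1 / (1 + (j:ℝ)^2/4)) inj]
      exact MS_summ.sum_le_tsum _ (fun j _ => by positivity)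
    unfold MSC
    nlinarith

open MeasureTheory in
lemma MS_disc_lower {N : ℕ} {T : ℝ} (hT : 0 < T) :
    T / 2 * ∑ n ∈ Finset.Ioc 0 N, (n:ℝ)⁻¹ ≤ 
    ∫ t in (0:ℝ)..T, ((∑ n ∈ Finset.Ioc 0 N, (n:ℝ)^(-(1/2):ℝ) * Real.cos (t * Real.log n))^2
        + (∑ n ∈ Finset.Ioc 0 N, (n:ℝ)^(-(1/2):ℝ) * Real.sin (t * Real.log n))^2) := by
  set F := fun t : ℝ => ((∑ n ∈ Finset.Ioc 0 N, (n:ℝ)^(-(1/2):ℝ) * Real.cos (t * Real.log n))^2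
        + (∑ n ∈ Finset.Ioc 0 N, (n:ℝ)^(-(1/2):ℝ) * Real.sin (t * Real.log n))^2) with hF
  have hc : Continuous F := by fun_prop
  have e1 : ∫ t in (0:ℝ)..T, (1 - t/T) * F t ≤ ∫ t in (0:ℝ)..T, F t := by
    apply intervalIntegral.integral_mono_on hT.le
    · apply Continuous.intervalIntegrable; fun_prop
    · exact hc.intervalIntegrable _ _
    · intro t ht
      have : 0 ≤ t / T := div_nonneg ht.1 hT.le
      have h0 : 0 ≤ F t := by simp only [hF]; positivity
      nlinarith
  refine le_trans ?_ e1
  have h1 : ∀ t : ℝ, (1 - t/T) * F t = ∑ n ∈ Finset.Ioc 0 N, ∑ k ∈ Finset.Ioc 0 N,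
      ((n:ℝ)^(-(1/2):ℝ) * (k:ℝ)^(-(1/2):ℝ)) * ((1 - t/T) * Real.cos ((Real.log n - Real.log k) * t)) := by
    intro t
    simp only [hF]
    rw [sq, sq, Finset.sum_mul_sum, Finset.sum_mul_sum, ← Finset.sum_add_distrib, Finset.mul_sum]
    refine Finset.sum_congr rfl fun n _ => ?_
    rw [← Finset.sum_add_distrib, Finset.mul_sum]
    refine Finset.sum_congr rfl fun k _ => ?_
    rw [show (Real.log n - Real.log k) * t = t * Real.log n - t * Real.log k by ring, Real.cos_sub]
    ring
  simp_rw [h1]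
  rw [intervalIntegral.integral_finsetSum (fun n _ => by apply Continuous.intervalIntegrable; fun_prop), Finset.mul_sum]
  refine Finset.sum_le_sum fun n hn => ?_
  rw [intervalIntegral.integral_finsetSum (fun n _ => by apply Continuous.intervalIntegrable; fun_prop)]
  have h2 : ∀ k ∈ Finset.Ioc 0 N, 0 ≤ ∫ t in (0:ℝ)..T, ((n:ℝ)^(-(1/2):ℝ) * (k:ℝ)^(-(1/2):ℝ)) * ((1 - t/T) * Real.cos ((Real.log n - Real.log k) * t)) := by
    intro k _
    rw [intervalIntegral.integral_const_mul]
    exact mul_nonneg (by positivity) (MSK_nonneg hT _)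
  refine le_trans (le_of_eq ?_) (Finset.single_le_sum h2 hn)
  rw [intervalIntegral.integral_const_mul, sub_self]
  have := MSK_zero hT
  unfold MSK at this
  rw [this, mul_comm]
  congr 1
  rw [Finset.mem_Ioc] at hn
  have hn0 : (0:ℝ) < n := by exact_mod_cast hn.1
  rw [← Real.rpow_add hn0, ← Real.rpow_neg_one]; norm_num

noncomputable def Rz (N : ℕ) (s : ℂ) : ℂ :=
  riemannZeta s - ∑ n ∈ Finset.Ioc 0 N, (n:ℂ)^(-s) - (N:ℂ)^(1-s)/(s-1)

noncomputable def Jz (N : ℕ) (s : ℂ) : ℂ :=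
  ∫ x in Set.Ioi (N:ℝ), ((Int.fract x : ℝ) : ℂ) * (x:ℂ)^(-(s+1))

lemma sum_Ioc_range (N : ℕ) (f : ℕ → ℂ) :
    ∑ n ∈ Finset.Ioc 0 N, f n = ∑ n ∈ Finset.range N, f (n+1) := by
  rw [Finset.range_eq_Ico, Finset.sum_Ico_add' f 0 N 1]
  apply Finset.sum_congr _ (fun _ _ => rfl)
  ext; simp; omega

lemma zeta_tail_s19 {s : ℂ} (hs : 1 < s.re) (N : ℕ) :
    ∑' n : ℕ, (((N:ℂ)) + ((n:ℂ) + 1))^(-s) = riemannZeta s - ∑ n ∈ Finset.Ioc 0 N, (n:ℂ)^(-s) := by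
  have hsum : Summable (fun n : ℕ => ((n:ℂ)+1)^(-s)) := by
    have := (summable_nat_add_iff 1).2 (Complex.summable_one_div_nat_cpow.2 hs)
    refine this.congr fun n => ?_
    rw [Complex.cpow_neg]; simp
  have h1 := hsum.sum_add_tsum_nat_add N
  rw [zeta_eq_tsum_one_div_nat_add_one_cpow hs, sum_Ioc_range]
  have h2 : ∑' n : ℕ, 1 / ((n:ℂ)+1)^s = ∑' n : ℕ, ((n:ℂ)+1)^(-s) := by
    refine tsum_congr fun n => ?_
    rw [Complex.cpow_neg]; simp
  rw [h2, ← h1]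
  push_cast
  rw [add_sub_cancel_left]
  refine tsum_congr fun n => ?_
  congr 1; ring

lemma fract_cpow_int {N : ℕ} (hN : 1 ≤ N) {s : ℂ} (hs : 0 < s.re) :
    MeasureTheory.IntegrableOn (fun x : ℝ => ((Int.fract x : ℝ) : ℂ) * (x:ℂ)^(-(s+1))) (Set.Ioi (N:ℝ)) := by
  have hN0 : (0:ℝ) < N := by exact_mod_cast hN
  have h1 : MeasureTheory.IntegrableOn (fun x : ℝ => (x:ℂ)^(-(s+1))) (Set.Ioi (N:ℝ)) :=
    integrableOn_Ioi_cpow_of_lt (by simp; linarith) hN0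
  refine h1.bdd_mul (c := 1) ?_ (MeasureTheory.ae_of_all _ fun x => ?_)
  · apply Measurable.aestronglyMeasurable
    exact Complex.measurable_ofReal.comp measurable_fract
  · rw [Complex.norm_real, Real.norm_of_nonneg (Int.fract_nonneg x)]
    exact (Int.fract_lt_one x).le

lemma Rz_eq_aux {N : ℕ} (hN : 1 ≤ N) {s : ℂ} (hs : 1 < s.re) : Rz N s = - s * Jz N s := by
  have hN0 : (0:ℝ) < N := by exact_mod_cast hN
  have hs0 : s ≠ 0 := by rintro rfl; norm_num at hs
  have hs1 : s - 1 ≠ 0 := by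
    intro h
    have : s = 1 := by linear_combination h
    subst this; norm_num at hs
  set f : ℕ → ℂ := fun n => if N < n then 1 else 0 with hf
  have hcard : ∀ n : ℕ, ∑ k ∈ Finset.Icc 1 n, f k = ((n - N : ℕ) : ℂ) := by
    intro n
    simp only [hf]
    rw [Finset.sum_ite, Finset.sum_const_zero, add_zero, Finset.sum_const, nsmul_one]
    congr 1
    rw [show (Finset.Icc 1 n).filter (fun x => N < x) = Finset.Ioc N n by
      ext; simp; omega]
    simp
  have hnf : ∀ k, ‖f k‖ = f k := by
    intro k; simp only [hf]; split_ifs <;> simp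
  have h1 := LSeries_eq_mul_integral' f (r := 1) zero_le_one hs (by
    apply IsBigO.of_bound 1
    refine Eventually.of_forall fun n => ?_
    have : ∑ k ∈ Finset.Icc 1 n, ‖f k‖ = ((n - N : ℕ) : ℝ) := by
      have := hcard n
      have h2 : ((∑ k ∈ Finset.Icc 1 n, ‖f k‖ : ℝ) : ℂ) = (((n - N : ℕ) : ℝ) : ℂ) := by
        push_cast
        simp only [hnf]; exact this
      exact_mod_cast h2
    rw [this]
    simp only [Real.rpow_one, one_mul, Real.norm_natCast]
    exact_mod_cast Nat.sub_le _ _)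
  have h2 : LSeries f s = riemannZeta s - ∑ n ∈ Finset.Ioc 0 N, (n:ℂ)^(-s) := by
    rw [← zeta_tail_s19 hs, LSeries]
    have hsum : Summable (LSeries.term f s) := by
      refine LSeriesSummable_of_bounded_of_one_lt_re (m := 1) (fun n _ => ?_) hs
      simp only [hf]; split_ifs <;> simp
    rw [← hsum.sum_add_tsum_nat_add (N+1), Finset.sum_eq_zero, zero_add]
    · refine tsum_congr fun n => ?_
      rw [LSeries.term_of_ne_zero (by omega)]
      simp only [hf]
      rw [if_pos (by omega), Complex.cpow_neg, one_div]
      congr 2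
      push_cast; ring
    · intro n hn
      rw [Finset.mem_range] at hn
      by_cases h : n = 0
      · subst h; simp
      · rw [LSeries.term_of_ne_zero h]
        simp only [hf]
        rw [if_neg (by omega)]; simp
  have h3 : ∫ t in Set.Ioi (1 : ℝ), (∑ k ∈ Finset.Icc 1 ⌊t⌋₊, f k) * (t:ℂ) ^ (-(s + 1))
      = ∫ t in Set.Ioi (N : ℝ), ((t:ℂ)^(-s) - N * (t:ℂ)^(-(s+1)) - ((Int.fract t : ℝ) : ℂ) * (t:ℂ)^(-(s+1))) := by
    have hsub : Set.Ioi (N:ℝ) ⊆ Set.Ioi (1:ℝ) := by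
      apply Set.Ioi_subset_Ioi
      exact_mod_cast hN
    rw [MeasureTheory.setIntegral_eq_of_subset_of_forall_sdiff_eq_zero (s := Set.Ioi (N:ℝ)) measurableSet_Ioi hsub (f := fun t : ℝ => (∑ k ∈ Finset.Icc 1 ⌊t⌋₊, f k) * (t:ℂ) ^ (-(s + 1)))]
    · apply MeasureTheory.setIntegral_congr_fun measurableSet_Ioi
      intro t ht
      have ht0 : 0 < t := hN0.trans ht
      have htc : (t:ℂ) ≠ 0 := by exact_mod_cast ht0.ne'
      have hfl : N ≤ ⌊t⌋₊ := Nat.le_floor (le_of_lt ht)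
      dsimp only
      rw [hcard, Nat.cast_sub hfl]
      have e1 : (t:ℂ)^(-s) = (t:ℂ) * (t:ℂ)^(-(s+1)) := by
        rw [show -s = 1 + (-(s+1)) by ring, Complex.cpow_add _ _ htc, Complex.cpow_one]
      have e2 : ((⌊t⌋₊ : ℕ) : ℂ) = (t:ℂ) - ((Int.fract t : ℝ) : ℂ) := by
        have : ((⌊t⌋₊ : ℕ) : ℝ) = t - Int.fract t := by
          rw [Int.self_sub_fract, natCast_floor_eq_intCast_floor ht0.le]
        rw [← Complex.ofReal_sub, ← this]
        simp
      rw [e1, e2]; ring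
    · intro t ht
      have : ¬ (N:ℝ) < t := ht.2
      have h4 : ⌊t⌋₊ ≤ N := Nat.floor_le_of_le (not_lt.1 this)
      rw [hcard, Nat.sub_eq_zero_of_le h4]; simp
  have i1 : MeasureTheory.IntegrableOn (fun x : ℝ => (x:ℂ)^(-s)) (Set.Ioi (N:ℝ)) :=
    integrableOn_Ioi_cpow_of_lt (by simp; linarith) hN0
  have i2 : MeasureTheory.IntegrableOn (fun x : ℝ => (x:ℂ)^(-(s+1))) (Set.Ioi (N:ℝ)) :=
    integrableOn_Ioi_cpow_of_lt (by simp; linarith) hN0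
  have i3 := fract_cpow_int hN (s := s) (by linarith)
  rw [h3, MeasureTheory.integral_sub (f := fun t : ℝ => (t:ℂ)^(-s) - N * (t:ℂ)^(-(s+1))) (i1.sub (i2.const_mul _)) i3, MeasureTheory.integral_sub i1 (i2.const_mul _),
    MeasureTheory.integral_const_mul, integral_Ioi_cpow_of_lt (by simp; linarith) hN0,
    integral_Ioi_cpow_of_lt (by simp; linarith) hN0, h2] at h1
  unfold Rz Jz
  rw [h1]
  have hNc : (N:ℂ) ≠ 0 := by exact_mod_cast hN0.ne'
  have e3 : (N:ℂ)^(1-s) = N * (N:ℂ)^(-s) := by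
    rw [show 1 - s = 1 + (-s) by ring, Complex.cpow_add _ _ hNc, Complex.cpow_one]
  have e4 : -s + 1 ≠ 0 := by
    intro h; apply hs1; linear_combination -h
  rw [show -s + 1 = 1 - s by ring, show -(s+1)+1 = -s by ring, e3] 
  push_cast
  rw [e3]
  have e5 : 1 - s = -(s-1) := by ring
  rw [e5]
  field_simp
  ring

lemma Jz_diff {N : ℕ} (hN : 1 ≤ N) {s : ℂ} (hs : 0 < s.re) : DifferentiableAt ℂ (Jz N) s := by
  have hN0 : (0:ℝ) < N := by exact_mod_cast hN
  set f : ℝ → ℂ := (Set.Ioi (N:ℝ)).indicator (fun x => ((Int.fract x : ℝ) : ℂ)) with hf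
  have hm : Measurable f := (Complex.measurable_ofReal.comp measurable_fract).indicator measurableSet_Ioi
  have hb : ∀ x, ‖f x‖ ≤ 1 := by
    intro x
    simp only [hf]
    refine (norm_indicator_le_norm_self _ _).trans ?_
    rw [Complex.norm_real, Real.norm_of_nonneg (Int.fract_nonneg x)]
    exact (Int.fract_lt_one x).le
  have hJ : Jz N = fun s => mellin f (-s) := by
    ext s
    unfold Jz mellin
    have hsub : Set.Ioi (N:ℝ) ⊆ Set.Ioi (0:ℝ) := Set.Ioi_subset_Ioi hN0.le
    rw [MeasureTheory.setIntegral_eq_of_subset_of_forall_sdiff_eq_zero measurableSet_Ioi hsub (f := fun t : ℝ => (t:ℂ) ^ (-s - 1) • f t)]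
    · apply MeasureTheory.setIntegral_congr_fun measurableSet_Ioi
      intro t ht
      simp only [hf, Set.indicator_of_mem ht, smul_eq_mul]
      rw [mul_comm]; congr 2; ring
    · intro t ht
      simp only [hf, Set.indicator_of_notMem ht.2, smul_zero]
  rw [hJ]
  have key : DifferentiableAt ℂ (mellin f) (-s) := by
    apply mellin_differentiableAt_of_isBigO_rpow (a := 0) (b := (-s).re - 1)
    · have : MeasureTheory.LocallyIntegrable f := by
        refine (MeasureTheory.locallyIntegrable_const (1:ℝ)).mono hm.aestronglyMeasurable (MeasureTheory.ae_of_all _ fun x => ?_)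
        simpa using hb x
      exact this.locallyIntegrableOn _
    · apply IsBigO.of_bound 1
      refine Eventually.of_forall fun x => ?_
      simpa using hb x
    · simpa using hs
    · have : f =ᶠ[nhdsWithin 0 (Set.Ioi 0)] fun _ => 0 := by
        have : Set.Iio (N:ℝ) ∈ nhdsWithin (0:ℝ) (Set.Ioi 0) := mem_nhdsWithin_of_mem_nhds (Iio_mem_nhds hN0)
        filter_upwards [this] with x hx
        simp only [hf]
        rw [Set.indicator_of_notMem]
        exact not_lt.2 (le_of_lt (Set.mem_Iio.1 hx))
      exact this.trans_isBigO (isBigO_zero _ _)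
    · linarith
  exact key.comp s (differentiableAt_id.neg)

lemma Rz_diff {N : ℕ} (hN : 1 ≤ N) {s : ℂ} (hs : s ≠ 1) : DifferentiableAt ℂ (Rz N) s := by
  have hNc : (N:ℂ) ≠ 0 := by
    have : N ≠ 0 := by omega
    exact_mod_cast this
  unfold Rz
  apply DifferentiableAt.sub
  · apply DifferentiableAt.sub (differentiableAt_riemannZeta hs)
    apply DifferentiableAt.fun_sum
    intro n hn
    rw [Finset.mem_Ioc] at hn
    have : (n:ℂ) ≠ 0 := by
      have : n ≠ 0 := by omega
      exact_mod_cast this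
    exact DifferentiableAt.const_cpow (by fun_prop) (Or.inl this)
  · apply DifferentiableAt.div
    · exact DifferentiableAt.const_cpow (by fun_prop) (Or.inl hNc)
    · fun_prop
    · exact sub_ne_zero.2 hs

lemma Rz_eq {N : ℕ} (hN : 1 ≤ N) {s : ℂ} (hs : 0 < s.re) (hi : 0 < s.im) : Rz N s = - s * Jz N s := by
  set U : Set ℂ := {s | 0 < s.re} ∩ {s | 0 < s.im} with hU
  have hUo : IsOpen U := (isOpen_lt continuous_const Complex.continuous_re).inter (isOpen_lt continuous_const Complex.continuous_im)
  have hUc : IsPreconnected U := ((convex_halfSpace_re_gt 0).inter (convex_halfSpace_im_gt 0)).isPreconnected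
  have hf : AnalyticOnNhd ℂ (Rz N) U := by
    apply DifferentiableOn.analyticOnNhd _ hUo
    intro z hz
    refine (Rz_diff hN ?_).differentiableWithinAt
    rintro rfl
    simpa using hz.2
  have hg : AnalyticOnNhd ℂ (fun s => - s * Jz N s) U := by
    apply DifferentiableOn.analyticOnNhd _ hUo
    intro z hz
    exact (differentiableAt_id.neg.mul (Jz_diff hN hz.1)).differentiableWithinAt
  have h0 : (2 + Complex.I) ∈ U := by constructor <;> simp
  refine hf.eqOn_of_preconnected_of_eventuallyEq hg hUc h0 ?_ ⟨hs, hi⟩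
  have : {s : ℂ | 1 < s.re} ∈ nhds (2 + Complex.I) :=
    (isOpen_lt continuous_const Complex.continuous_re).mem_nhds (by simp)
  filter_upwards [this] with z hz
  exact Rz_eq_aux hN hz

lemma Rz_bound {N : ℕ} (hN : 1 ≤ N) {s : ℂ} (hs : 0 < s.re) (hi : 0 < s.im) :
    ‖Rz N s‖ ≤ ‖s‖ / s.re := by
  have hN0 : (0:ℝ) < N := by exact_mod_cast hN
  rw [Rz_eq hN hs hi, norm_mul, norm_neg, div_eq_mul_inv]
  apply mul_le_mul_of_nonneg_left _ (norm_nonneg _)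
  unfold Jz
  calc _ ≤ ∫ x in Set.Ioi (N:ℝ), x^(-(s.re+1)) := by
        apply MeasureTheory.norm_integral_le_of_norm_le
        · exact integrableOn_Ioi_rpow_of_lt (by linarith) hN0
        · filter_upwards [MeasureTheory.ae_restrict_mem measurableSet_Ioi] with x hx
          have hx0 : 0 < x := hN0.trans hx
          rw [norm_mul, Complex.norm_real, Real.norm_of_nonneg (Int.fract_nonneg x), Complex.norm_cpow_eq_rpow_re_of_pos hx0]
          simp only [neg_re, add_re, one_re]
          exact mul_le_of_le_one_left (by positivity) (Int.fract_lt_one x).le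
    _ = (N:ℝ)^(-s.re) / s.re := by
        rw [integral_Ioi_rpow_of_lt (by linarith) hN0]
        rw [show -(s.re+1)+1 = -s.re by ring, neg_div_neg_eq]
    _ ≤ s.re⁻¹ := by
        rw [div_eq_mul_inv]
        apply mul_le_of_le_one_left (by positivity)
        apply Real.rpow_le_one_of_one_le_of_nonpos (by exact_mod_cast hN) (by linarith)

/-- the point on the critical line -/
noncomputable def cl (t : ℝ) : ℂ := (1/2 : ℂ) + t * Complex.I

noncomputable def Dz (m N : ℕ) (s : ℂ) : ℂ := ∑ n ∈ Finset.Ioc m N, (n:ℂ)^(-s)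
noncomputable def Bz (N : ℕ) (s : ℂ) : ℂ := (N:ℂ)^(1-s)/(s-1)

lemma cl_re (t : ℝ) : (cl t).re = 1/2 := by simp [cl]
lemma cl_im (t : ℝ) : (cl t).im = t := by simp [cl]
lemma cl_ne (t : ℝ) : cl t ≠ 1 := by
  intro h
  have := congrArg Complex.re h
  rw [cl_re] at this
  norm_num at this
lemma cl_cont : Continuous cl := by unfold cl; fun_prop

lemma cpow_split {x : ℝ} (hx : 0 < x) (a t : ℝ) :
    (x:ℂ)^(-((a:ℂ) + t * Complex.I)) = ((x^(-a) * Real.cos (t * Real.log x) : ℝ) : ℂ)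
      - ((x^(-a) * Real.sin (t * Real.log x) : ℝ) : ℂ) * Complex.I := by
  have hxc : (x:ℂ) ≠ 0 := by exact_mod_cast hx.ne'
  rw [show -((a:ℂ) + t * Complex.I) = ((-a : ℝ):ℂ) + (-t * Complex.I) by push_cast; ring, Complex.cpow_add _ _ hxc,
    ← Complex.ofReal_cpow hx.le, Complex.cpow_def_of_ne_zero hxc, ← Complex.ofReal_log hx.le]
  rw [show (Real.log x : ℂ) * (-t * Complex.I) = ((-(t * Real.log x) : ℝ) : ℂ) * Complex.I by push_cast; ring,
    Complex.exp_mul_I, ← Complex.ofReal_cos, ← Complex.ofReal_sin, Real.cos_neg, Real.sin_neg]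
  push_cast
  ring

lemma normsq_split (a b : ℝ) : ‖(a:ℂ) - (b:ℂ) * Complex.I‖^2 = a^2 + b^2 := by
  rw [← Complex.normSq_eq_norm_sq, Complex.normSq_apply]
  simp; ring

lemma Dz_norm (m N : ℕ) (t : ℝ) : ‖Dz m N (cl t)‖^2 =
    (∑ n ∈ Finset.Ioc m N, (n:ℝ)^(-(1/2):ℝ) * Real.cos (t * Real.log n))^2
        + (∑ n ∈ Finset.Ioc m N, (n:ℝ)^(-(1/2):ℝ) * Real.sin (t * Real.log n))^2 := by
  rw [← normsq_split]
  congr 2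
  unfold Dz cl
  rw [Complex.ofReal_sum, Complex.ofReal_sum, Finset.sum_mul, ← Finset.sum_sub_distrib]
  refine Finset.sum_congr rfl fun n hn => ?_
  rw [Finset.mem_Ioc] at hn
  have hn0 : (0:ℝ) < n := by
    have : 0 < n := by omega
    exact_mod_cast this
  have := cpow_split hn0 (1/2) t
  rw [← this]
  push_cast; rfl

lemma Jz_norm {N : ℕ} (hN : 1 ≤ N) (t : ℝ) : ‖Jz N (cl t)‖^2 =
    (∫ x in Set.Ioi (N:ℝ), (Int.fract x * |x|^(-(3/2):ℝ)) * Real.cos (t * Real.log x))^2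
        + (∫ x in Set.Ioi (N:ℝ), (Int.fract x * |x|^(-(3/2):ℝ)) * Real.sin (t * Real.log x))^2 := by
  have hN0 : (0:ℝ) < N := by exact_mod_cast hN
  rw [← normsq_split]
  congr 2
  unfold Jz
  have hi : ∀ g : ℝ → ℝ, Measurable g → (∀ x, |g x| ≤ 1) →
      MeasureTheory.IntegrableOn (fun x => (Int.fract x * |x|^(-(3/2):ℝ)) * g x) (Set.Ioi (N:ℝ)) := by
    intro g hg hg1
    have h1 : MeasureTheory.IntegrableOn (fun x : ℝ => x^(-(3/2):ℝ)) (Set.Ioi (N:ℝ)) :=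
      integrableOn_Ioi_rpow_of_lt (by norm_num) hN0
    refine h1.mono' ?_ ?_
    · apply Measurable.aestronglyMeasurable
      exact (measurable_fract.mul (by fun_prop)).mul hg
    · filter_upwards [MeasureTheory.ae_restrict_mem measurableSet_Ioi] with x hx
      have hx0 : 0 < x := hN0.trans hx
      rw [abs_of_pos hx0, norm_mul, norm_mul, Real.norm_of_nonneg (Int.fract_nonneg x), Real.norm_of_nonneg (by positivity : (0:ℝ) ≤ x^(-(3/2):ℝ))]
      have h2 : Int.fract x * x^(-(3/2):ℝ) ≤ x^(-(3/2):ℝ) := mul_le_of_le_one_left (by positivity) (Int.fract_lt_one x).le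
      exact (mul_le_of_le_one_right (mul_nonneg (Int.fract_nonneg x) (by positivity)) (hg1 x)).trans h2
  have hc := hi (fun x => Real.cos (t * Real.log x)) (by fun_prop) (fun x => Real.abs_cos_le_one _)
  have hs := hi (fun x => Real.sin (t * Real.log x)) (by fun_prop) (fun x => Real.abs_sin_le_one _)
  rw [← integral_complex_ofReal, ← integral_complex_ofReal, ← MeasureTheory.integral_mul_const, ← MeasureTheory.integral_sub hc.ofReal (hs.ofReal.mul_const _)]
  apply MeasureTheory.setIntegral_congr_fun measurableSet_Ioi
  intro x hx
  have hx0 : 0 < x := hN0.trans hx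
  have := cpow_split hx0 (3/2) t
  dsimp only
  rw [show -(cl t + 1) = -(((3/2:ℝ):ℂ) + t * Complex.I) by unfold cl; push_cast; ring, this, abs_of_pos hx0]
  push_cast
  ring

lemma Rz_cont {N : ℕ} (hN : 1 ≤ N) : Continuous (fun t => Rz N (cl t)) := by
  rw [continuous_iff_continuousAt]
  intro t
  exact (Rz_diff hN (cl_ne t)).continuousAt.comp cl_cont.continuousAt

lemma zeta_cont : Continuous (fun t => riemannZeta (cl t)) := by
  rw [continuous_iff_continuousAt]
  intro t
  exact (differentiableAt_riemannZeta (cl_ne t)).continuousAt.comp cl_cont.continuousAt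

lemma Dz_cont (m N : ℕ) : Continuous (fun t => Dz m N (cl t)) := by
  unfold Dz
  refine continuous_finsetSum _ fun n hn => ?_
  rw [Finset.mem_Ioc] at hn
  have hn0 : (n:ℂ) ≠ 0 := by
    have : n ≠ 0 := by omega
    exact_mod_cast this
  exact Continuous.const_cpow cl_cont.neg (Or.inl hn0)

lemma Bz_cont {N : ℕ} (hN : 1 ≤ N) : Continuous (fun t => Bz N (cl t)) := by
  unfold Bz
  have hn0 : (N:ℂ) ≠ 0 := by
    have : N ≠ 0 := by omega
    exact_mod_cast this
  exact (Continuous.const_cpow (continuous_const.sub cl_cont) (Or.inl hn0)).div (cl_cont.sub continuous_const)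
    (fun t => sub_ne_zero.2 (cl_ne t))

lemma ms_add {f g : ℝ → ℂ} (hf : Continuous f) (hg : Continuous g) {T : ℝ} (hT : 2 ≤ T) :
    ∫ t in (2:ℝ)..T, ‖f t + g t‖^2 ≤ 2 * (∫ t in (2:ℝ)..T, ‖f t‖^2) + 2 * (∫ t in (2:ℝ)..T, ‖g t‖^2) := by
  rw [← intervalIntegral.integral_const_mul, ← intervalIntegral.integral_const_mul, ← intervalIntegral.integral_add]
  · apply intervalIntegral.integral_mono_on hT
    · apply Continuous.intervalIntegrable; fun_prop
    · apply Continuous.intervalIntegrable; fun_prop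
    · intro t _
      have := norm_add_le (f t) (g t)
      nlinarith [norm_nonneg (f t + g t), sq_nonneg (‖f t‖ - ‖g t‖), norm_nonneg (f t), norm_nonneg (g t)]
  · apply Continuous.intervalIntegrable; fun_prop
  · apply Continuous.intervalIntegrable; fun_prop

lemma cl_normsq (t : ℝ) : ‖cl t‖^2 = 1/4 + t^2 := by
  rw [← Complex.normSq_eq_norm_sq, Complex.normSq_apply, cl_re, cl_im]; ring

lemma int_le_of_zero {f : ℝ → ℝ} (hf : Continuous f) (h0 : ∀ t, 0 ≤ f t) {T : ℝ} (hT : 2 ≤ T) :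
    ∫ t in (2:ℝ)..T, f t ≤ ∫ t in (0:ℝ)..T, f t := by
  rw [← intervalIntegral.integral_add_adjacent_intervals (hf.intervalIntegrable 0 2) (hf.intervalIntegrable 2 T)]
  have : 0 ≤ ∫ t in (0:ℝ)..2, f t := intervalIntegral.integral_nonneg (by norm_num) fun t _ => h0 t
  linarith

lemma Jz_cont {N : ℕ} (hN : 1 ≤ N) : Continuous (fun t => Jz N (cl t)) := by
  rw [continuous_iff_continuousAt]
  intro t
  exact (Jz_diff hN (by rw [cl_re]; norm_num)).continuousAt.comp cl_cont.continuousAt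

lemma ms_R_large {N : ℕ} {T : ℝ} (hT : 2 ≤ T) (hN : T ≤ N) :
    ∫ t in (2:ℝ)..T, ‖Rz N (cl t)‖^2 ≤ 8 * π * T := by
  have hN1 : 1 ≤ N := by
    have : (1:ℝ) ≤ N := by linarith
    exact_mod_cast this
  have hN0 : (0:ℝ) < N := by linarith
  have hJ := Jz_cont hN1
  calc ∫ t in (2:ℝ)..T, ‖Rz N (cl t)‖^2 ≤ ∫ t in (2:ℝ)..T, 2*T^2 * ‖Jz N (cl t)‖^2 := by
        apply intervalIntegral.integral_mono_on hT
        · have := Rz_cont hN1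
          apply Continuous.intervalIntegrable; fun_prop
        · apply Continuous.intervalIntegrable; fun_prop
        · intro t ht
          rw [Rz_eq hN1 (by rw [cl_re]; norm_num) (by rw [cl_im]; linarith [ht.1]), norm_mul, norm_neg, mul_pow, cl_normsq]
          apply mul_le_mul_of_nonneg_right _ (by positivity)
          nlinarith [ht.1, ht.2]
    _ = 2*T^2 * ∫ t in (2:ℝ)..T, ‖Jz N (cl t)‖^2 := by rw [intervalIntegral.integral_const_mul]
    _ ≤ 2*T^2 * ∫ t in (0:ℝ)..T, ‖Jz N (cl t)‖^2 := by
        apply mul_le_mul_of_nonneg_left _ (by positivity)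
        exact int_le_of_zero (by fun_prop) (fun t => by positivity) hT
    _ ≤ 2*T^2 * (2 * (2 * π * (N:ℝ)⁻¹)) := by
        apply mul_le_mul_of_nonneg_left _ (by positivity)
        simp only [Jz_norm hN1]
        exact MS_tail hN0 (by linarith)
    _ ≤ _ := by
        have : T * (N:ℝ)⁻¹ ≤ 1 := by rw [← div_eq_mul_inv]; exact (div_le_one hN0).2 hN
        nlinarith [mul_le_mul_of_nonneg_left this (by positivity : 0 ≤ 8 * π * T)]

lemma ms_B {N : ℕ} (hN : 1 ≤ N) {T : ℝ} (hT : 2 ≤ T) :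
    ∫ t in (2:ℝ)..T, ‖Bz N (cl t)‖^2 ≤ 4 * π * N := by
  have hN0 : (0:ℝ) < N := by exact_mod_cast hN
  have hB := Bz_cont hN
  calc _ ≤ ∫ t in (2:ℝ)..T, 4 * (N:ℝ) * (1+t^2)⁻¹ := by
        apply intervalIntegral.integral_mono_on hT
        · apply Continuous.intervalIntegrable; fun_prop
        · apply Continuous.intervalIntegrable
          have : Continuous fun t : ℝ => (1+t^2)⁻¹ := by
            apply Continuous.inv₀ (by fun_prop) (fun t => by positivity)
          fun_prop
        · intro t ht
          unfold Bz
          have h1 : ‖(N:ℂ)^(1 - cl t)‖^2 = N := by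
            have := Complex.norm_cpow_eq_rpow_re_of_pos hN0 (1 - cl t)
            rw [Complex.ofReal_natCast] at this
            rw [this, sub_re, cl_re, one_re, ← Real.rpow_natCast, ← Real.rpow_mul hN0.le]
            norm_num
          have h2 : ‖cl t - 1‖^2 = 1/4 + t^2 := by
            rw [← Complex.normSq_eq_norm_sq, Complex.normSq_apply, sub_re, sub_im, cl_re, cl_im, one_re, one_im]; ring
          rw [norm_div, div_pow, h1, h2, ← div_eq_mul_inv, div_le_div_iff₀ (by positivity) (by positivity)]
          nlinarith
    _ = 4 * (N:ℝ) * (Real.arctan T - Real.arctan 2) := by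
        rw [intervalIntegral.integral_const_mul, integral_inv_one_add_sq]
    _ ≤ _ := by
        have h1 := Real.arctan_lt_pi_div_two T
        have h2 := Real.neg_pi_div_two_lt_arctan 2
        nlinarith

lemma Rz_split {m N : ℕ} (h : m ≤ N) (s : ℂ) : Rz m s = (Rz N s + Dz m N s) + (Bz N s + - Bz m s) := by
  unfold Rz Dz Bz
  have := Finset.sum_Ioc_consecutive (fun n : ℕ => (n:ℂ)^(-s)) (Nat.zero_le m) h
  rw [← this]; ring

lemma harm_eq (N : ℕ) : ∑ n ∈ Finset.Ioc 0 N, (n:ℝ)⁻¹ = (harmonic N : ℝ) := by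
  unfold harmonic
  push_cast
  have h1 : ∀ n ∈ Finset.range N, ((n:ℝ)+1)⁻¹ = (((n+1:ℕ):ℝ))⁻¹ := fun n _ => by push_cast; rfl
  rw [Finset.sum_congr rfl h1, Finset.range_eq_Ico, Finset.sum_Ico_add' (fun n : ℕ => (n:ℝ)⁻¹) 0 N 1]
  apply Finset.sum_congr _ (fun _ _ => rfl)
  ext; simp; omega

lemma ms_R : ∃ C : ℝ, 0 < C ∧ ∀ T : ℝ, 2 ≤ T → ∀ m : ℕ, 1 ≤ m →
    ∫ t in (2:ℝ)..T, ‖Rz m (cl t)‖^2 ≤ C * (T * Real.log T) := by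
  refine ⟨4 * (16*π) + 32 * MSC + 4 * (48*π), by have := MSC_nonneg; positivity, ?_⟩
  intro T hT m hm
  have hlog2 : (1/2:ℝ) ≤ Real.log 2 := by linarith [Real.log_two_gt_d9]
  have hlog : (1/2:ℝ) ≤ Real.log T := hlog2.trans (Real.log_le_log (by norm_num) hT)
  have hTl : T ≤ 2 * (T * Real.log T) := by nlinarith
  have hMSC := MSC_nonneg
  have hpi := Real.pi_pos
  have hTl0 : 0 ≤ T * Real.log T := by linarith
  by_cases hmT : T ≤ m
  · refine (ms_R_large hT hmT).trans ?_
    have : 8 * π * T ≤ 8 * π * (2 * (T * Real.log T)) := mul_le_mul_of_nonneg_left hTl (by positivity)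
    nlinarith [mul_nonneg hpi.le hTl0, mul_nonneg hMSC hTl0]
  · push Not at hmT
    set N := ⌈T⌉₊ with hNdef
    have hN1 : T ≤ N := Nat.le_ceil T
    have hN2 : (N:ℝ) ≤ 2 * T := by
      have := Nat.ceil_lt_add_one (show 0 ≤ T by linarith)
      linarith
    have hmN : m ≤ N := by
      have : (m:ℝ) ≤ N := by linarith
      exact_mod_cast this
    have hN : 1 ≤ N := hm.trans hmN
    simp only [Rz_split hmN]
    have c1 := Rz_cont hN
    have c2 := Dz_cont m N
    have c3 := Bz_cont hN
    have c4 := Bz_cont hm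
    refine (ms_add (f := fun t => Rz N (cl t) + Dz m N (cl t)) (g := fun t => Bz N (cl t) + - Bz m (cl t)) (by fun_prop) (by fun_prop) hT).trans ?_
    have a1 := ms_add c1 c2 hT
    have a2 := ms_add (f := fun t => Bz N (cl t)) (g := fun t => - Bz m (cl t)) c3 c4.neg hT
    simp only [norm_neg] at a2
    have b1 := ms_R_large hT hN1
    have b2 := ms_B hN hT
    have b3 := ms_B hm hT
    have b4 : ∫ t in (2:ℝ)..T, ‖Dz m N (cl t)‖^2 ≤ 2 * (MSC * T * ∑ n ∈ Finset.Ioc m N, (n:ℝ)⁻¹) := by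
      refine (int_le_of_zero (by fun_prop) (fun t => by positivity) hT).trans ?_
      simp only [Dz_norm]
      exact MS_disc_upper (by linarith) hN2
    have b5 : ∑ n ∈ Finset.Ioc m N, (n:ℝ)⁻¹ ≤ 4 * Real.log T := by
      calc _ ≤ ∑ n ∈ Finset.Ioc 0 N, (n:ℝ)⁻¹ := by
            apply Finset.sum_le_sum_of_subset_of_nonneg
            · apply Finset.Ioc_subset_Ioc_left (Nat.zero_le _)
            · intros; positivity
        _ = (harmonic N : ℝ) := harm_eq N
        _ ≤ 1 + Real.log N := harmonic_le_one_add_log N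
        _ ≤ 1 + Real.log (2*T) := by
            have := Real.log_le_log (by linarith : (0:ℝ) < N) hN2
            linarith
        _ ≤ _ := by
            rw [Real.log_mul (by norm_num) (by linarith)]
            have := Real.log_le_log (by norm_num) hT
            linarith
    have b6 : 2 * (MSC * T * ∑ n ∈ Finset.Ioc m N, (n:ℝ)⁻¹) ≤ 2 * (MSC * T * (4 * Real.log T)) := by
      apply mul_le_mul_of_nonneg_left _ (by norm_num)
      apply mul_le_mul_of_nonneg_left b5
      apply mul_nonneg hMSC (by linarith)
    have p1 : π * T ≤ π * (2 * (T * Real.log T)) := mul_le_mul_of_nonneg_left hTl hpi.le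
    have p2 : π * N ≤ π * (2 * T) := mul_le_mul_of_nonneg_left hN2 hpi.le
    have p3 : π * m ≤ π * T := mul_le_mul_of_nonneg_left hmT.le hpi.le
    have p4 : 0 ≤ π * (T * Real.log T) := by positivity
    nlinarith

lemma sum_sqrt (N : ℕ) : ∑ n ∈ Finset.Ioc 0 N, (n:ℝ)^(-(1/2):ℝ) ≤ 2 * Real.sqrt N := by
  induction N with
  | zero => simp
  | succ k ih =>
    rw [← Finset.insert_Ioc_right_eq_Ioc_add_one (Nat.zero_le k), Finset.sum_insert (by simp)]
    have h1 : ((k+1:ℕ):ℝ)^(-(1/2):ℝ) = (Real.sqrt (k+1:ℕ))⁻¹ := by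
      rw [Real.sqrt_eq_rpow, ← Real.rpow_neg (by positivity)]
    rw [h1]
    have hk : (0:ℝ) ≤ k := Nat.cast_nonneg k
    set a := Real.sqrt (k:ℝ) with ha
    set b := Real.sqrt ((k+1:ℕ):ℝ) with hb
    have ha2 : a^2 = k := Real.sq_sqrt hk
    have hb2 : b^2 = k+1 := by rw [hb, Real.sq_sqrt (by positivity)]; push_cast; ring
    have hb0 : 0 < b := by rw [hb]; apply Real.sqrt_pos.2; positivity
    have ha0 : 0 ≤ a := Real.sqrt_nonneg _
    have : b⁻¹ ≤ 2 * b - 2 * a := by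
      rw [inv_le_iff_one_le_mul₀ hb0]
      nlinarith [sq_nonneg (a-b)]
    linarith

lemma ms_zeta_lower : ∃ C : ℝ, ∀ T : ℝ, 2 ≤ T →
    T * Real.log T / 8 - C * T ≤ ∫ t in (2:ℝ)..T, ‖riemannZeta (cl t)‖^2 := by
  refine ⟨200 + 200 * π, fun T hT => ?_⟩
  set N := ⌈T⌉₊ with hNdef
  have hN1 : T ≤ N := Nat.le_ceil T
  have hN2 : (N:ℝ) ≤ 2 * T := by
    have := Nat.ceil_lt_add_one (show 0 ≤ T by linarith)
    linarith
  have hN : 1 ≤ N := by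
    have : (1:ℝ) ≤ N := by linarith
    exact_mod_cast this
  have c1 := Rz_cont hN
  have c2 := Dz_cont 0 N
  have c3 := Bz_cont hN
  have c0 := zeta_cont
  have hsp : ∀ t, Dz 0 N (cl t) = riemannZeta (cl t) + -(Rz N (cl t) + Bz N (cl t)) := by
    intro t
    unfold Rz Dz Bz; ring
  have a1 := ms_add (f := fun t => riemannZeta (cl t)) (g := fun t => -(Rz N (cl t) + Bz N (cl t))) c0 (c1.add c3).neg hT
  simp only [← hsp, norm_neg] at a1
  have a2 := ms_add c1 c3 hT
  have b1 := ms_R_large hT hN1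
  have b2 := ms_B hN hT
  have l1 : T/2 * Real.log T ≤ ∫ t in (0:ℝ)..T, ‖Dz 0 N (cl t)‖^2 := by
    simp only [Dz_norm]
    refine le_trans ?_ (MS_disc_lower (by linarith))
    apply mul_le_mul_of_nonneg_left _ (by linarith)
    rw [harm_eq]
    refine le_trans ?_ (log_add_one_le_harmonic N)
    apply Real.log_le_log (by linarith)
    push_cast; linarith
  have l2 : ∫ t in (0:ℝ)..2, ‖Dz 0 N (cl t)‖^2 ≤ ∫ t in (0:ℝ)..2, 4 * (N:ℝ) := by
    apply intervalIntegral.integral_mono_on (by norm_num)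
    · apply Continuous.intervalIntegrable; fun_prop
    · simp
    · intro t _
      have h1 : ‖Dz 0 N (cl t)‖ ≤ 2 * Real.sqrt N := by
        refine le_trans ?_ (sum_sqrt N)
        unfold Dz
        refine (norm_sum_le _ _).trans (Finset.sum_le_sum fun n hn => ?_)
        rw [Finset.mem_Ioc] at hn
        have hn0 : (0:ℝ) < n := by exact_mod_cast hn.1
        have := Complex.norm_cpow_eq_rpow_re_of_pos hn0 (-(cl t))
        rw [Complex.ofReal_natCast] at this
        rw [this, neg_re, cl_re]
      calc _ ≤ (2 * Real.sqrt N)^2 := pow_le_pow_left₀ (norm_nonneg _) h1 2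
        _ = _ := by rw [mul_pow, Real.sq_sqrt (by positivity)]; norm_num
  simp only [intervalIntegral.integral_const, smul_eq_mul, sub_zero] at l2
  have hcc : Continuous fun t => ‖Dz 0 N (cl t)‖^2 := by fun_prop
  rw [← intervalIntegral.integral_add_adjacent_intervals (hcc.intervalIntegrable 0 2) (hcc.intervalIntegrable 2 T)] at l1
  have hpi := Real.pi_pos
  have p2 : π * N ≤ π * (2 * T) := mul_le_mul_of_nonneg_left hN2 hpi.le
  have p3 : 0 ≤ ∫ t in (2:ℝ)..T, ‖riemannZeta (cl t)‖^2 := intervalIntegral.integral_nonneg hT fun t _ => by positivity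
  have p4 : 0 ≤ π * T := by nlinarith
  nlinarith

lemma not_sing {s₁ s₂ : ℂ} (h1 : 0 < s₁.im) (h2 : 0 < s₂.im) : ¬ zeta2Sing (s₁, s₂) := by
  unfold zeta2Sing
  rintro (h | h | h | ⟨k, h⟩)
  · have := congrArg Complex.im h
    simp at this; linarith
  · have := congrArg Complex.im h
    simp at this; linarith
  · have := congrArg Complex.im h
    simp at this; linarith
  · have := congrArg Complex.im h
    simp at this; linarith

lemma succ_norm (m : ℕ) (s : ℂ) : ‖((m:ℂ)+1)^(-s)‖ = ((m:ℝ)+1)^(-s.re) := by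
  have := Complex.norm_cpow_eq_rpow_re_of_pos (show (0:ℝ) < (m:ℝ)+1 by positivity) (-s)
  push_cast at this
  rw [this, neg_re]

lemma summ_succ {σ : ℝ} (h : 1 < σ) : Summable (fun m : ℕ => ((m:ℝ)+1)^(-σ)) := by
  have := (summable_nat_add_iff 1).2 (Real.summable_nat_rpow.2 (show -σ < -1 by linarith))
  exact this.congr fun n => by push_cast; rfl

lemma summ_succ_c {s : ℂ} (h : 1 < s.re) : Summable (fun m : ℕ => ((m:ℂ)+1)^(-s)) := by
  apply Summable.of_norm
  simp only [succ_norm]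
  exact summ_succ h

lemma zeta_succ {s : ℂ} (h : 1 < s.re) : riemannZeta s = ∑' m : ℕ, ((m:ℂ)+1)^(-s) := by
  rw [zeta_eq_tsum_one_div_nat_add_one_cpow h]
  refine tsum_congr fun n => ?_
  rw [Complex.cpow_neg]; simp

lemma Rz_bound_U {m : ℕ} (hm : 1 ≤ m) {s : ℂ} {B : ℝ} (h1 : 1/4 < s.re) (h2 : 0 < s.im) (h3 : s.im < B) :
    ‖Rz m s‖ ≤ 1 + 4 * B := by
  have h0 : 0 < s.re := by linarith
  refine (Rz_bound hm h0 h2).trans ?_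
  rw [div_le_iff₀ h0]
  have := Complex.norm_le_abs_re_add_abs_im s
  rw [abs_of_pos h0, abs_of_pos h2] at this
  nlinarith

lemma Z_repr {Z : ℂ → ℂ → ℂ}
    (hZa : AnalyticOnNhd ℂ (fun p : ℂ × ℂ => Z p.1 p.2) {p | ¬ zeta2Sing p})
    (hZs : ∀ s₁ s₂ : ℂ, 1 < s₂.re → 2 < s₁.re + s₂.re →
      Z s₁ s₂ = ∑' m : ℕ, ((m : ℂ) + 1) ^ (-s₁)
        * ∑' n : ℕ, (((m : ℂ) + 1) + ((n : ℂ) + 1)) ^ (-s₂))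
    {s₁ s₂ : ℂ} (h1 : 1 < s₁.re) (hi : 0 < s₁.im) (h2 : 1/4 < s₂.re) (h2i : 0 < s₂.im) :
    Z s₁ s₂ = riemannZeta (s₁ + s₂ - 1) / (s₂ - 1)
      + ∑' m : ℕ, ((m:ℂ)+1)^(-s₁) * Rz (m+1) s₂ := by
  set B := s₂.im + 1 with hB
  set U : Set ℂ := {s | 1/4 < s.re} ∩ ({s | 0 < s.im} ∩ {s | s.im < B}) with hU
  have hUo : IsOpen U := (isOpen_lt continuous_const Complex.continuous_re).inter
    ((isOpen_lt continuous_const Complex.continuous_im).inter (isOpen_lt Complex.continuous_im continuous_const))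
  have hUc : Convex ℝ U := (convex_halfSpace_re_gt _).inter
    ((convex_halfSpace_im_gt _).inter (convex_halfSpace_im_lt _))
  set f : ℂ → ℂ := fun s => Z s₁ s with hf
  set g : ℂ → ℂ := fun s => riemannZeta (s₁ + s - 1) / (s - 1)
      + ∑' m : ℕ, ((m:ℂ)+1)^(-s₁) * Rz (m+1) s with hg
  have hne : ∀ s ∈ U, s ≠ 1 := by
    rintro s ⟨_, h, _⟩ rfl
    simp at h
  have hfa : AnalyticOnNhd ℂ f U := by
    have : AnalyticOnNhd ℂ (fun s : ℂ => (s₁, s)) U := fun s _ => analyticAt_const.prod analyticAt_id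
    exact hZa.comp this (fun s hs => not_sing hi hs.2.1)
  have hgd : DifferentiableOn ℂ g U := by
    apply DifferentiableOn.add
    · intro s hs
      apply DifferentiableAt.differentiableWithinAt
      apply DifferentiableAt.div
      · apply DifferentiableAt.comp (g := riemannZeta) (f := fun s => s₁ + s - 1)
        · apply differentiableAt_riemannZeta
          intro h
          have := congrArg Complex.im h
          have h3 : 0 < s.im := hs.2.1
          simp at this
          linarith
        · fun_prop
      · fun_prop
      · exact sub_ne_zero.2 (hne s hs)
    · apply differentiableOn_tsum_of_summable_norm (u := fun m : ℕ => ((m:ℝ)+1)^(-s₁.re) * (1 + 4 * B))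
      · exact (summ_succ h1).mul_right _
      · intro m s hs
        exact ((Rz_diff (by omega) (hne s hs)).const_mul _).differentiableWithinAt
      · exact hUo
      · intro m s hs
        rw [norm_mul, succ_norm]
        exact mul_le_mul_of_nonneg_left (Rz_bound_U (by omega) hs.1 hs.2.1 hs.2.2) (by positivity)
  have hga : AnalyticOnNhd ℂ g U := hgd.analyticOnNhd hUo
  set z₀ : ℂ := ⟨2, s₂.im⟩ with hz
  have hz0 : z₀ ∈ U := ⟨by simp [hz]; norm_num, by simpa [hz] using h2i, by simp [hz, hB]⟩
  have hev : f =ᶠ[nhds z₀] g := by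
    have hV : {s : ℂ | 1 < s.re} ∩ U ∈ nhds z₀ := by
      apply IsOpen.mem_nhds ((isOpen_lt continuous_const Complex.continuous_re).inter hUo)
      exact ⟨by simp [hz], hz0⟩
    filter_upwards [hV] with s hs
    have hs1 : 1 < s.re := hs.1
    have hsne := sub_ne_zero.2 (hne s hs.2)
    simp only [hf, hg]
    rw [hZs s₁ s hs1 (by linarith), zeta_succ (s := s₁ + s - 1) (by simp; linarith), ← tsum_div_const,
      ← Summable.tsum_add]
    · refine tsum_congr fun m => ?_
      have h3 := zeta_tail_s19 hs1 (m+1)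
      push_cast at h3
      have hm0 : ((m:ℂ)+1) ≠ 0 := by exact_mod_cast Nat.succ_ne_zero m
      rw [h3]
      have h4 : ((m:ℂ)+1)^(-(s₁+s-1)) = ((m:ℂ)+1)^(-s₁) * ((m:ℂ)+1)^(1-s) := by
        rw [← Complex.cpow_add _ _ hm0]; congr 1; ring
      rw [h4]
      unfold Rz
      push_cast
      ring
    · exact (summ_succ_c (by simp; linarith)).div_const _
    · apply Summable.of_norm_bounded ((summ_succ h1).mul_right (1 + 4 * B))
      intro m
      rw [norm_mul, succ_norm]
      exact mul_le_mul_of_nonneg_left (Rz_bound_U (by omega) hs.2.1 hs.2.2.1 hs.2.2.2) (by positivity)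
  exact hfa.eqOn_of_preconnected_of_eventuallyEq hga hUc.isPreconnected hz0 hev ⟨h2, h2i, by simp [hB]⟩

noncomputable def Az (σ t : ℝ) : ℂ :=
  riemannZeta (((σ - 1/2 : ℝ):ℂ) + (2*t:ℝ) * Complex.I) / (cl t - 1)

noncomputable def Pz (m : ℕ) (s : ℂ) : ℂ := Dz 0 m s + Bz m s

lemma Rz_Pz (m : ℕ) (s : ℂ) : Rz m s = riemannZeta s - Pz m s := by
  unfold Rz Pz Dz Bz; ring

lemma Pz_cont {m : ℕ} (hm : 1 ≤ m) : Continuous (fun t => Pz m (cl t)) :=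
  (Dz_cont 0 m).add (Bz_cont hm)

lemma cl_sub_norm {t : ℝ} (ht : 0 ≤ t) : t ≤ ‖cl t - 1‖ := by
  have := Complex.abs_im_le_norm (cl t - 1)
  rw [sub_im, cl_im, one_im, sub_zero, abs_of_nonneg ht] at this
  exact this

lemma Az_bound {σ : ℝ} (h : 1 < σ) {t : ℝ} (ht : 2 ≤ t) : ‖Az σ t‖ ≤ 20 := by
  unfold Az
  set s : ℂ := ((σ - 1/2 : ℝ):ℂ) + (2*t:ℝ) * Complex.I with hs
  have hre : s.re = σ - 1/2 := by simp [hs]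
  have him : s.im = 2 * t := by simp [hs]
  have h1 : riemannZeta s = 1 + 1/(s-1) + Rz 1 s := by
    unfold Rz; simp
  have h2 : ‖Rz 1 s‖ ≤ 1 + 4 * t := by
    have h0 : 0 < s.re := by linarith
    refine (Rz_bound le_rfl h0 (by linarith)).trans ?_
    rw [div_le_iff₀ h0]
    have := Complex.norm_le_abs_re_add_abs_im s
    rw [abs_of_pos h0, abs_of_pos (by linarith : 0 < s.im)] at this
    nlinarith
  have h3 : ‖1/(s-1)‖ ≤ 1 := by
    rw [norm_div, norm_one]
    have := Complex.abs_im_le_norm (s - 1)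
    rw [sub_im, one_im, sub_zero, abs_of_nonneg (by linarith)] at this
    rw [div_le_one (by linarith)]; linarith
  have h4 : ‖riemannZeta s‖ ≤ 3 + 4 * t := by
    rw [h1]
    have a := norm_add_le (1 + 1/(s-1)) (Rz 1 s)
    have b := norm_add_le 1 (1/(s-1))
    rw [norm_one] at b
    linarith
  have h5 := cl_sub_norm (show 0 ≤ t by linarith)
  rw [norm_div, div_le_iff₀ (by linarith)]
  linarith

/-- line for the first variable -/
noncomputable def sl (σ t : ℝ) : ℂ := (σ:ℂ) + t * Complex.I
lemma sl_re (σ t : ℝ) : (sl σ t).re = σ := by simp [sl]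
lemma sl_im (σ t : ℝ) : (sl σ t).im = t := by simp [sl]
lemma sl_cont (σ : ℝ) : Continuous (sl σ) := by unfold sl; fun_prop

lemma zeta_lower {σ : ℝ} (h : 1 < σ) : ∃ c : ℝ, 0 < c ∧ ∀ t : ℝ, c ≤ ‖riemannZeta (sl σ t)‖ := by
  set S := ∑' m : ℕ, ((m:ℝ)+1)^(-σ) with hS
  have hS0 : 0 < S := (summ_succ h).tsum_pos (fun m => by positivity) 0 (by positivity)
  refine ⟨S⁻¹, by positivity, fun t => ?_⟩
  have hre : 1 < (sl σ t).re := by rw [sl_re]; exact h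
  have h1 := ArithmeticFunction.LSeries_zeta_mul_Lseries_moebius hre
  rw [ArithmeticFunction.LSeries_zeta_eq_riemannZeta hre] at h1
  have h2 : ‖LSeries (fun n => (ArithmeticFunction.moebius n : ℂ)) (sl σ t)‖ ≤ S := by
    unfold LSeries
    have hsm : Summable (fun n : ℕ => (n:ℝ)^(-σ)) := Real.summable_nat_rpow.2 (by linarith)
    have : S = ∑' n : ℕ, (n:ℝ)^(-σ) := by
      rw [hsm.tsum_eq_zero_add, hS]
      rw [Nat.cast_zero, Real.zero_rpow (by linarith), zero_add]
      push_cast; rfl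
    rw [this]
    apply tsum_of_norm_bounded hsm.hasSum
    intro n
    rw [LSeries.norm_term_eq]
    split_ifs with hn
    · positivity
    · rw [sl_re, Real.rpow_neg (by positivity), div_eq_mul_inv]
      apply mul_le_of_le_one_left (by positivity)
      rw [Complex.norm_intCast]
      exact_mod_cast ArithmeticFunction.abs_moebius_le_one
  have h3 : ‖riemannZeta (sl σ t)‖ * ‖LSeries (fun n => (ArithmeticFunction.moebius n : ℂ)) (sl σ t)‖ = 1 := by
    rw [← norm_mul, h1, norm_one]
  rw [inv_le_iff_one_le_mul₀ hS0, ← h3]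
  exact mul_le_mul_of_nonneg_left h2 (norm_nonneg _)

lemma cs_tsum {w x : ℕ → ℝ} {K : ℝ} (hw : ∀ m, 0 ≤ w m) (hs : Summable w) (hx : ∀ m, 0 ≤ x m) (hK : ∀ m, x m ≤ K) :
    (∑' m, w m * x m)^2 ≤ (∑' m, w m) * ∑' m, w m * x m ^2 := by
  have s1 : Summable fun m => w m * x m :=
    Summable.of_nonneg_of_le (fun m => mul_nonneg (hw m) (hx m)) (fun m => mul_le_mul_of_nonneg_left (hK m) (hw m)) (hs.mul_right K)
  have s2 : Summable fun m => w m * x m ^ 2 :=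
    Summable.of_nonneg_of_le (fun m => mul_nonneg (hw m) (by positivity))
      (fun m => mul_le_mul_of_nonneg_left (pow_le_pow_left₀ (hx m) (hK m) 2) (hw m)) (hs.mul_right (K^2))
  set S := ∑' m, w m with hS
  set X := ∑' m, w m * x m with hX
  have hS0 : 0 ≤ S := tsum_nonneg hw
  have key : ∀ l : ℝ, 2 * l * X ≤ l^2 * S + ∑' m, w m * x m ^2 := by
    intro l
    rw [hX, hS, ← tsum_mul_left, ← tsum_mul_left, ← (hs.mul_left (l^2)).tsum_add s2]
    refine Summable.tsum_le_tsum (fun m => ?_) (s1.mul_left _) ((hs.mul_left (l^2)).add s2)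
    nlinarith [mul_nonneg (hw m) (sq_nonneg (l - x m))]
  rcases hS0.eq_or_lt with h0 | h0
  · have hw0 : ∀ m, w m = 0 := by
      intro m
      have := hs.le_tsum m (fun j _ => hw j)
      linarith [hw m]
    have : X = 0 := by rw [hX]; simp [hw0]
    rw [this, ← h0]; simp
  · have := key (X / S)
    have e : 2 * (X/S) * X - (X/S)^2 * S = X^2 / S := by field_simp; ring
    have : X^2 / S ≤ ∑' m, w m * x m ^2 := by linarith
    rwa [div_le_iff₀' h0] at this

open MeasureTheory in
lemma cs_int {w : ℕ → ℝ} {a f : ℕ → ℝ → ℂ} {T K : ℝ} (hT : 2 ≤ T) (hw : ∀ m, 0 ≤ w m) (hs : Summable w)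
    (ha : ∀ m, Continuous (a m)) (haw : ∀ m t, ‖a m t‖ = w m) (hf : ∀ m, Continuous (f m))
    (hK : ∀ m, ∀ t ∈ Set.Icc 2 T, ‖f m t‖ ≤ K) :
    ContinuousOn (fun t => ∑' m, a m t * f m t) (Set.Icc 2 T) ∧
    ∫ t in (2:ℝ)..T, ‖∑' m, a m t * f m t‖^2 ≤ (∑' m, w m) * ∑' m, w m * ∫ t in (2:ℝ)..T, ‖f m t‖^2 := by
  have hcont : ContinuousOn (fun t => ∑' m, a m t * f m t) (Set.Icc 2 T) := by
    apply continuousOn_tsum (u := fun m => w m * K)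
    · intro m; exact ((ha m).mul (hf m)).continuousOn
    · exact hs.mul_right K
    · intro m t ht
      rw [norm_mul, haw]
      exact mul_le_mul_of_nonneg_left (hK m t ht) (hw m)
  refine ⟨hcont, ?_⟩
  have hc2 : ContinuousOn (fun t => ∑' m, w m * ‖f m t‖^2) (Set.Icc 2 T) := by
    apply continuousOn_tsum (u := fun m => w m * K^2)
    · intro m
      have := hf m
      apply Continuous.continuousOn; fun_prop
    · exact hs.mul_right _
    · intro m t ht
      rw [norm_mul, Real.norm_of_nonneg (hw m), norm_pow, norm_norm]
      exact mul_le_mul_of_nonneg_left (pow_le_pow_left₀ (norm_nonneg _) (hK m t ht) 2) (hw m)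
  have hpt : ∀ t ∈ Set.Icc 2 T, ‖∑' m, a m t * f m t‖^2 ≤ (∑' m, w m) * ∑' m, w m * ‖f m t‖^2 := by
    intro t ht
    refine le_trans ?_ (cs_tsum hw hs (fun m => norm_nonneg (f m t)) (fun m => hK m t ht))
    apply pow_le_pow_left₀ (norm_nonneg _)
    have s1 : Summable fun m => w m * ‖f m t‖ :=
      Summable.of_nonneg_of_le (fun m => mul_nonneg (hw m) (norm_nonneg _)) (fun m => mul_le_mul_of_nonneg_left (hK m t ht) (hw m)) (hs.mul_right K)
    apply tsum_of_norm_bounded s1.hasSum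
    intro m
    rw [norm_mul, haw]
  calc ∫ t in (2:ℝ)..T, ‖∑' m, a m t * f m t‖^2
      ≤ ∫ t in (2:ℝ)..T, (∑' m, w m) * ∑' m, w m * ‖f m t‖^2 := by
        apply intervalIntegral.integral_mono_on hT
        · apply ContinuousOn.intervalIntegrable
          rw [Set.uIcc_of_le hT]
          exact hcont.norm.pow 2
        · apply ContinuousOn.intervalIntegrable
          rw [Set.uIcc_of_le hT]
          exact hc2.const_smul (∑' m, w m)
        · exact hpt
    _ = (∑' m, w m) * ∫ t in (2:ℝ)..T, ∑' m, w m * ‖f m t‖^2 := by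
        rw [intervalIntegral.integral_const_mul]
    _ = _ := by
        congr 1
        have := intervalIntegral.hasSum_integral_of_dominated_convergence (μ := volume) (a := 2) (b := T)
          (F := fun m t => w m * ‖f m t‖^2) (f := fun t => ∑' m, w m * ‖f m t‖^2)
          (fun m _ => w m * K^2) (fun m => by
            have := hf m
            apply Continuous.aestronglyMeasurable; fun_prop)
          (fun m => by
            refine ae_of_all _ fun t ht => ?_
            rw [Set.uIoc_of_le hT] at ht
            rw [norm_mul, Real.norm_of_nonneg (hw m), norm_pow, norm_norm]
            exact mul_le_mul_of_nonneg_left (pow_le_pow_left₀ (norm_nonneg _) (hK m t ⟨ht.1.le, ht.2⟩) 2) (hw m))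
          (ae_of_all _ fun t _ => hs.mul_right _)
          (by simp)
          (by
            refine ae_of_all _ fun t ht => ?_
            rw [Set.uIoc_of_le hT] at ht
            apply Summable.hasSum
            exact Summable.of_nonneg_of_le (fun m => mul_nonneg (hw m) (by positivity))
              (fun m => mul_le_mul_of_nonneg_left (pow_le_pow_left₀ (norm_nonneg _) (hK m t ⟨ht.1.le, ht.2⟩) 2) (hw m)) (hs.mul_right (K^2)))
        rw [← this.tsum_eq]
        refine tsum_congr fun m => ?_
        rw [intervalIntegral.integral_const_mul]

lemma Pz_bound {m : ℕ} (hm : 1 ≤ m) {t : ℝ} (ht : 2 ≤ t) : ‖Pz m (cl t)‖ ≤ 2 * m := by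
  have hm1 : (1:ℝ) ≤ m := by exact_mod_cast hm
  unfold Pz
  have h1 : ‖Dz 0 m (cl t)‖ ≤ m := by
    unfold Dz
    refine (norm_sum_le _ _).trans ?_
    calc _ ≤ ∑ n ∈ Finset.Ioc 0 m, (1:ℝ) := by
          refine Finset.sum_le_sum fun n hn => ?_
          rw [Finset.mem_Ioc] at hn
          have hn1 : (1:ℝ) ≤ n := by exact_mod_cast hn.1
          have := Complex.norm_cpow_eq_rpow_re_of_pos (show (0:ℝ) < n by linarith) (-(cl t))
          rw [Complex.ofReal_natCast] at this
          rw [this, neg_re, cl_re]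
          exact Real.rpow_le_one_of_one_le_of_nonpos hn1 (by norm_num)
      _ = m := by simp
  have h2 : ‖Bz m (cl t)‖ ≤ m := by
    unfold Bz
    have h5 := cl_sub_norm (show 0 ≤ t by linarith)
    rw [norm_div, div_le_iff₀ (by linarith)]
    have := Complex.norm_cpow_eq_rpow_re_of_pos (show (0:ℝ) < m by linarith) (1-(cl t))
    rw [Complex.ofReal_natCast] at this
    rw [this, sub_re, cl_re, one_re]
    have h3 : (m:ℝ)^(1 - 1/2:ℝ) ≤ (m:ℝ)^(1:ℝ) := Real.rpow_le_rpow_of_exponent_le hm1 (by norm_num)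
    rw [Real.rpow_one] at h3
    nlinarith
  have := norm_add_le (Dz 0 m (cl t)) (Bz m (cl t))
  linarith

lemma Rz_bound_cl {m : ℕ} (hm : 1 ≤ m) {t T : ℝ} (ht : t ∈ Set.Icc 2 T) : ‖Rz m (cl t)‖ ≤ 1 + 4 * (T+1) :=
  Rz_bound_U hm (by rw [cl_re]; norm_num) (by rw [cl_im]; linarith [ht.1]) (by rw [cl_im]; linarith [ht.2])

lemma zeta_bound_cl {t T : ℝ} (ht : t ∈ Set.Icc 2 T) : ‖riemannZeta (cl t)‖ ≤ 3 + 4 * (T+1) := by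
  have h1 := Rz_bound_cl (m := 1) le_rfl ht
  have h2 := Pz_bound (m := 1) le_rfl ht.1
  have h3 : riemannZeta (cl t) = Rz 1 (cl t) + Pz 1 (cl t) := by rw [Rz_Pz]; ring
  rw [h3]
  have := norm_add_le (Rz 1 (cl t)) (Pz 1 (cl t))
  push_cast at h2
  linarith

lemma Pz_bound_cl {m : ℕ} (hm : 1 ≤ m) {t T : ℝ} (ht : t ∈ Set.Icc 2 T) : ‖Pz m (cl t)‖ ≤ 4 + 8 * (T+1) := by
  have h1 := Rz_bound_cl hm ht
  have h2 := zeta_bound_cl ht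
  have h3 : Pz m (cl t) = riemannZeta (cl t) - Rz m (cl t) := by rw [Rz_Pz]; ring
  rw [h3]
  have := norm_sub_le (riemannZeta (cl t)) (Rz m (cl t))
  linarith

lemma ms_P_fixed {m : ℕ} (hm : 1 ≤ m) {T : ℝ} (hT : 2 ≤ T) :
    ∫ t in (2:ℝ)..T, ‖Pz m (cl t)‖^2 ≤ (2*m)^2 * T := by
  have hc := Pz_cont hm
  calc _ ≤ ∫ t in (2:ℝ)..T, (2*(m:ℝ))^2 := by
        apply intervalIntegral.integral_mono_on hT
        · apply Continuous.intervalIntegrable; fun_prop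
        · simp
        · intro t ht
          exact pow_le_pow_left₀ (norm_nonneg _) (Pz_bound hm ht.1) 2
    _ = (T - 2) * (2*(m:ℝ))^2 := by simp
    _ ≤ _ := by nlinarith [sq_nonneg (2*(m:ℝ))]

lemma T_le {T : ℝ} (hT : 2 ≤ T) : T ≤ 2 * (T * Real.log T) := by
  have hlog2 : (1/2:ℝ) ≤ Real.log 2 := by linarith [Real.log_two_gt_d9]
  have hlog : (1/2:ℝ) ≤ Real.log T := hlog2.trans (Real.log_le_log (by norm_num) hT)
  nlinarith

lemma ms_P : ∃ C : ℝ, 0 < C ∧ ∀ T : ℝ, 2 ≤ T → ∀ m : ℕ, 1 ≤ m →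
    ∫ t in (2:ℝ)..T, ‖Pz m (cl t)‖^2 ≤ C * (T * Real.log T) := by
  obtain ⟨C, hC, hR⟩ := ms_R
  refine ⟨6 * C + 32, by positivity, fun T hT m hm => ?_⟩
  have c0 := zeta_cont
  have c1 := Rz_cont hm
  have c2 := Rz_cont (le_refl 1)
  have c3 := Pz_cont (le_refl 1)
  have a1 := ms_add (f := fun t => Rz 1 (cl t)) (g := fun t => Pz 1 (cl t)) c2 c3 hT
  have a2 := ms_add (f := fun t => riemannZeta (cl t)) (g := fun t => -Rz m (cl t)) c0 c1.neg hT
  have e1 : ∀ t, Rz 1 (cl t) + Pz 1 (cl t) = riemannZeta (cl t) := fun t => by rw [Rz_Pz]; ring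
  have e2 : ∀ t, riemannZeta (cl t) + -Rz m (cl t) = Pz m (cl t) := fun t => by rw [Rz_Pz]; ring
  simp only [e1] at a1
  simp only [e2, norm_neg] at a2
  have b1 := hR T hT 1 le_rfl
  have b2 := hR T hT m hm
  have b3 := ms_P_fixed (m := 1) le_rfl hT
  have := T_le hT
  push_cast at b3
  linarith

open Topology in
lemma ms_H {σ : ℝ} (h : 1 < σ) : Tendsto (fun T : ℝ => ∑' m : ℕ, ((m:ℝ)+1)^(-σ) *
    ((∫ t in (2:ℝ)..T, ‖Pz (m+1) (cl t)‖^2) / (T * Real.log T))) atTop (𝓝 0) := by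
  obtain ⟨C, hC, hP⟩ := ms_P
  have h0 : (∑' m : ℕ, (0:ℝ)) = 0 := tsum_zero
  rw [← h0]
  have hev : ∀ᶠ T : ℝ in atTop, 2 ≤ T := eventually_ge_atTop 2
  have hnn : ∀ (m : ℕ) (T : ℝ), 2 ≤ T → 0 ≤ ∫ t in (2:ℝ)..T, ‖Pz (m+1) (cl t)‖^2 := fun m T hT =>
    intervalIntegral.integral_nonneg hT fun t _ => by positivity
  apply tendsto_tsum_of_dominated_convergence (bound := fun m : ℕ => ((m:ℝ)+1)^(-σ) * C)
  · exact (summ_succ h).mul_right _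
  · intro m
    have hl : Tendsto (fun T : ℝ => ((m:ℝ)+1)^(-σ) * ((2*((m+1:ℕ):ℝ))^2 / Real.log T)) atTop (𝓝 0) := by
      rw [← mul_zero (((m:ℝ)+1)^(-σ))]
      exact (Tendsto.const_div_atTop Real.tendsto_log_atTop _).const_mul _
    refine tendsto_of_tendsto_of_tendsto_of_le_of_le' tendsto_const_nhds hl ?_ ?_
    · filter_upwards [hev] with T hT
      have := T_le hT
      have := hnn m T hT
      have : 0 ≤ T * Real.log T := by linarith
      positivity
    · filter_upwards [hev] with T hT
      have := T_le hT
      have hlog : 0 < Real.log T := Real.log_pos (by linarith)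
      apply mul_le_mul_of_nonneg_left _ (by positivity)
      rw [div_le_div_iff₀ (by linarith) hlog]
      have := ms_P_fixed (m := m+1) (by omega) hT
      nlinarith
  · filter_upwards [hev] with T hT m
    have hT1 := T_le hT
    have hTl : 0 < T * Real.log T := by linarith
    have h1 := hnn m T hT
    rw [Real.norm_of_nonneg (by positivity)]
    apply mul_le_mul_of_nonneg_left _ (by positivity)
    rw [div_le_iff₀ hTl]
    exact hP T hT (m+1) (by omega)

/-- Diagonal mean square of ζ₂ for σ₁ > 1, σ₂ = 1/2 (from Theorem 1.3). -/
theorem stmt19 (Z : ℂ → ℂ → ℂ)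
    (hZa : AnalyticOnNhd ℂ (fun p : ℂ × ℂ => Z p.1 p.2) {p | ¬ zeta2Sing p})
    (hZs : ∀ s₁ s₂ : ℂ, 1 < s₂.re → 2 < s₁.re + s₂.re →
      Z s₁ s₂ = ∑' m : ℕ, ((m : ℂ) + 1) ^ (-s₁)
        * ∑' n : ℕ, (((m : ℂ) + 1) + ((n : ℂ) + 1)) ^ (-s₂))
    (σ₁ : ℝ) (h : 1 < σ₁) :
    (fun T : ℝ =>
        ∫ t in (2:ℝ)..T, ‖Z ((σ₁ : ℂ) + t * Complex.I) ((1/2 : ℂ) + t * Complex.I)‖ ^ 2)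
      =Θ[atTop] (fun T : ℝ => T * Real.log T) := by
  change (fun T : ℝ => ∫ t in (2:ℝ)..T, ‖Z (sl σ₁ t) (cl t)‖ ^ 2) =Θ[atTop] _
  set w : ℕ → ℝ := fun m => ((m:ℝ)+1)^(-σ₁) with hwdef
  have hw : ∀ m, 0 ≤ w m := fun m => by simp only [hwdef]; positivity
  have hs : Summable w := summ_succ h
  set S := ∑' m, w m with hS
  have hS0 : 0 ≤ S := tsum_nonneg hw
  set a : ℕ → ℝ → ℂ := fun m t => ((m:ℂ)+1)^(-sl σ₁ t) with hadef
  have ha : ∀ m, Continuous (a m) := fun m =>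
    Continuous.const_cpow (sl_cont σ₁).neg (Or.inl (by exact_mod_cast Nat.succ_ne_zero m))
  have haw : ∀ m t, ‖a m t‖ = w m := fun m t => by
    simp only [hadef, hwdef]; rw [succ_norm, sl_re]
  -- pointwise identities
  have hrep : ∀ t : ℝ, 2 ≤ t → Z (sl σ₁ t) (cl t) = Az σ₁ t + ∑' m, a m t * Rz (m+1) (cl t) := by
    intro t ht
    rw [Z_repr hZa hZs (by rw [sl_re]; exact h) (by rw [sl_im]; linarith) (by rw [cl_re]; norm_num)
      (by rw [cl_im]; linarith)]
    unfold Az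
    congr 3
    unfold sl cl; push_cast; ring
  have hdec : ∀ t : ℝ, 2 ≤ t → ∑' m, a m t * Rz (m+1) (cl t)
      = riemannZeta (sl σ₁ t) * riemannZeta (cl t) - ∑' m, a m t * Pz (m+1) (cl t) := by
    intro t ht
    rw [zeta_succ (s := sl σ₁ t) (by rw [sl_re]; exact h), ← tsum_mul_right, ← Summable.tsum_sub]
    · refine tsum_congr fun m => ?_
      rw [Rz_Pz]; ring
    · exact (summ_succ_c (by rw [sl_re]; exact h)).mul_right _
    · apply Summable.of_norm_bounded (hs.mul_right (4 + 8 * (t+1)))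
      intro m
      rw [norm_mul, haw]
      exact mul_le_mul_of_nonneg_left (Pz_bound_cl (by omega) ⟨ht, le_rfl⟩) (hw m)
  have hZc : ∀ T : ℝ, ContinuousOn (fun t => Z (sl σ₁ t) (cl t)) (Set.Icc 2 T) := by
    intro T t ht
    apply ContinuousAt.continuousWithinAt
    have h1 : ContinuousAt (fun p : ℂ × ℂ => Z p.1 p.2) (sl σ₁ t, cl t) :=
      (hZa (sl σ₁ t, cl t) (not_sing (by rw [sl_im]; linarith [ht.1]) (by rw [cl_im]; linarith [ht.1]))).continuousAt
    exact ContinuousAt.comp (f := fun t => (sl σ₁ t, cl t)) h1 ((sl_cont σ₁).prodMk cl_cont).continuousAt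
  have hZi : ∀ T : ℝ, 2 ≤ T → IntervalIntegrable (fun t => ‖Z (sl σ₁ t) (cl t)‖^2) MeasureTheory.volume 2 T := by
    intro T hT
    apply ContinuousOn.intervalIntegrable
    rw [Set.uIcc_of_le hT]
    exact (hZc T).norm.pow 2
  have hIn : ∀ T : ℝ, 2 ≤ T → 0 ≤ ∫ t in (2:ℝ)..T, ‖Z (sl σ₁ t) (cl t)‖^2 := fun T hT =>
    intervalIntegral.integral_nonneg hT fun t _ => by positivity
  constructor
  · obtain ⟨C, hC, hR⟩ := ms_R
    apply IsBigO.of_bound (1600 + 2 * (S * (S * C)))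
    filter_upwards [eventually_ge_atTop 2] with T hT
    have hTl := T_le hT
    have hTl0 : 0 ≤ T * Real.log T := by linarith
    rw [Real.norm_of_nonneg (hIn T hT), Real.norm_of_nonneg hTl0]
    obtain ⟨fc, fi⟩ := cs_int (f := fun m t => Rz (m+1) (cl t)) hT hw hs ha haw (fun m => Rz_cont (by omega))
      (fun m t ht => Rz_bound_cl (by omega) ht)
    have f2 : ∑' m, w m * ∫ t in (2:ℝ)..T, ‖Rz (m+1) (cl t)‖^2 ≤ S * (C * (T * Real.log T)) := by
      rw [hS, ← tsum_mul_right]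
      have hle : ∀ m, w m * ∫ t in (2:ℝ)..T, ‖Rz (m+1) (cl t)‖^2 ≤ w m * (C * (T * Real.log T)) := fun m =>
        mul_le_mul_of_nonneg_left (hR T hT (m+1) (by omega)) (hw m)
      refine Summable.tsum_le_tsum hle ?_ (hs.mul_right _)
      refine Summable.of_nonneg_of_le (fun m => mul_nonneg (hw m) ?_) hle (hs.mul_right _)
      exact intervalIntegral.integral_nonneg hT fun t _ => by positivity
    have f3 := mul_le_mul_of_nonneg_left f2 hS0
    have f4 : ∫ t in (2:ℝ)..T, ‖Z (sl σ₁ t) (cl t)‖^2 ≤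
        ∫ t in (2:ℝ)..T, (800 + 2 * ‖∑' m, a m t * Rz (m+1) (cl t)‖^2) := by
      apply intervalIntegral.integral_mono_on hT (hZi T hT)
      · apply ContinuousOn.intervalIntegrable
        rw [Set.uIcc_of_le hT]
        exact continuousOn_const.add ((fc.norm.pow 2).const_smul (2:ℝ))
      · intro t ht
        rw [hrep t ht.1]
        have h1 := Az_bound h ht.1
        have h2 := norm_add_le (Az σ₁ t) (∑' m, a m t * Rz (m+1) (cl t))
        have h3 := norm_nonneg (Az σ₁ t)
        have h4 := norm_nonneg (∑' m, a m t * Rz (m+1) (cl t))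
        have h5 := norm_nonneg (Az σ₁ t + ∑' m, a m t * Rz (m+1) (cl t))
        nlinarith [sq_nonneg (‖Az σ₁ t‖ - ‖∑' m, a m t * Rz (m+1) (cl t)‖)]
    rw [intervalIntegral.integral_add (by simp) (by
        apply ContinuousOn.intervalIntegrable
        rw [Set.uIcc_of_le hT]
        exact ((fc.norm.pow 2).const_smul (2:ℝ))), intervalIntegral.integral_const_mul,
        intervalIntegral.integral_const, smul_eq_mul] at f4
    nlinarith
  · obtain ⟨c, hc, hcz⟩ := zeta_lower h
    obtain ⟨C, hC⟩ := ms_zeta_lower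
    -- c²(TlogT/8 - C T) ≤ 3 (I + 400 T + S * h(T) T log T)
    have hH := ms_H h
    set ε := c^2 / 100 / (S + 1) with hε
    have hε0 : 0 < ε := by positivity
    have e1 := hH.eventually (gt_mem_nhds hε0)
    have e2 := Real.tendsto_log_atTop.eventually_ge_atTop (100 * (|C| + 1200 / c^2))
    apply IsBigO.of_bound (60 / c^2)
    filter_upwards [eventually_ge_atTop 2, e1, e2] with T hT hT1 hT2
    have hTl := T_le hT
    have hTl0 : 0 < T * Real.log T := by linarith
    rw [Real.norm_of_nonneg (hIn T hT), Real.norm_of_nonneg hTl0.le]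
    obtain ⟨fc, fi⟩ := cs_int (f := fun m t => Pz (m+1) (cl t)) hT hw hs ha haw (fun m => Pz_cont (by omega))
      (fun m t ht => Pz_bound_cl (by omega) ht)
    have f2 : ∑' m, w m * ∫ t in (2:ℝ)..T, ‖Pz (m+1) (cl t)‖^2 ≤ ε * (T * Real.log T) := by
      have : ∑' m, w m * ∫ t in (2:ℝ)..T, ‖Pz (m+1) (cl t)‖^2 = (∑' m : ℕ, ((m:ℝ)+1)^(-σ₁) *
        ((∫ t in (2:ℝ)..T, ‖Pz (m+1) (cl t)‖^2) / (T * Real.log T))) * (T * Real.log T) := by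
        rw [← tsum_mul_right]
        refine tsum_congr fun m => ?_
        simp only [hwdef]
        rw [mul_assoc, div_mul_cancel₀ _ hTl0.ne']
      rw [this]
      exact mul_le_mul_of_nonneg_right hT1.le hTl0.le
    have f3 : ∫ t in (2:ℝ)..T, ‖∑' m, a m t * Pz (m+1) (cl t)‖^2 ≤ c^2/100 * (T * Real.log T) := by
      refine fi.trans ((mul_le_mul_of_nonneg_left f2 hS0).trans ?_)
      rw [← mul_assoc]
      apply mul_le_mul_of_nonneg_right _ hTl0.le
      rw [hε, mul_div_assoc', div_le_iff₀ (by linarith)]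
      nlinarith [sq_nonneg c]
    have i1 : IntervalIntegrable (fun t => ‖∑' m, a m t * Pz (m+1) (cl t)‖^2) MeasureTheory.volume 2 T := by
      apply ContinuousOn.intervalIntegrable
      rw [Set.uIcc_of_le hT]
      exact fc.norm.pow 2
    have f4 : ∫ t in (2:ℝ)..T, c^2 * ‖riemannZeta (cl t)‖^2 ≤
        ∫ t in (2:ℝ)..T, (1200 + (3 * ‖Z (sl σ₁ t) (cl t)‖^2 + 3 * ‖∑' m, a m t * Pz (m+1) (cl t)‖^2)) := by
      apply intervalIntegral.integral_mono_on hT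
      · have := zeta_cont
        apply Continuous.intervalIntegrable; fun_prop
      · exact (by simp : IntervalIntegrable (fun _ : ℝ => (1200:ℝ)) MeasureTheory.volume 2 T).add
          (((hZi T hT).const_mul 3).add (i1.const_mul 3))
      · intro t ht
        have h1 := Az_bound h ht.1
        have hz : riemannZeta (sl σ₁ t) * riemannZeta (cl t) =
            Z (sl σ₁ t) (cl t) - Az σ₁ t + ∑' m, a m t * Pz (m+1) (cl t) := by
          rw [hrep t ht.1, hdec t ht.1]; ring
        have h2 : c * ‖riemannZeta (cl t)‖ ≤ ‖Z (sl σ₁ t) (cl t)‖ + ‖Az σ₁ t‖ + ‖∑' m, a m t * Pz (m+1) (cl t)‖ := by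
          calc _ ≤ ‖riemannZeta (sl σ₁ t)‖ * ‖riemannZeta (cl t)‖ :=
                mul_le_mul_of_nonneg_right (hcz t) (norm_nonneg _)
            _ = ‖Z (sl σ₁ t) (cl t) - Az σ₁ t + ∑' m, a m t * Pz (m+1) (cl t)‖ := by rw [← norm_mul, hz]
            _ ≤ ‖Z (sl σ₁ t) (cl t) - Az σ₁ t‖ + ‖∑' m, a m t * Pz (m+1) (cl t)‖ := norm_add_le _ _
            _ ≤ _ := by
              have := norm_sub_le (Z (sl σ₁ t) (cl t)) (Az σ₁ t)
              linarith
        set x := ‖Z (sl σ₁ t) (cl t)‖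
        set y := ‖Az σ₁ t‖ with hy
        set z := ‖∑' m, a m t * Pz (m+1) (cl t)‖
        have hy0 : 0 ≤ y := norm_nonneg _
        have hz0 : 0 ≤ c * ‖riemannZeta (cl t)‖ := by positivity
        have h3 : (c * ‖riemannZeta (cl t)‖)^2 ≤ (x + y + z)^2 := pow_le_pow_left₀ hz0 h2 2
        rw [← mul_pow]
        nlinarith [sq_nonneg (x-y), sq_nonneg (y-z), sq_nonneg (x-z)]
    rw [intervalIntegral.integral_const_mul, intervalIntegral.integral_add (by simp) (((hZi T hT).const_mul 3).add (i1.const_mul 3)),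
      intervalIntegral.integral_add ((hZi T hT).const_mul 3) (i1.const_mul 3),
      intervalIntegral.integral_const_mul, intervalIntegral.integral_const_mul,
      intervalIntegral.integral_const, smul_eq_mul] at f4
    have f5 := mul_le_mul_of_nonneg_left (hC T hT) (sq_nonneg c)
    set I := ∫ t in (2:ℝ)..T, ‖Z (sl σ₁ t) (cl t)‖^2 with hI
    have hc2 : 0 < c^2 := by positivity
    have f6 : 100 * (c^2 * |C| + 1200) * T ≤ c^2 * (T * Real.log T) := by
      have := mul_le_mul_of_nonneg_left hT2 (show 0 ≤ c^2 * T by nlinarith)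
      have e : c^2 * T * (100 * (|C| + 1200 / c^2)) = 100 * (c^2 * |C| + 1200) * T := by
        field_simp
      rw [e] at this
      linarith
    have f7 : c^2 * (C * T) ≤ c^2 * |C| * T := by
      have := mul_le_mul_of_nonneg_left (mul_le_mul_of_nonneg_right (le_abs_self C) (show 0 ≤ T by linarith)) hc2.le
      linarith
    rw [div_mul_eq_mul_div, le_div_iff₀ hc2]
    linarith [hIn T hT]
end
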